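/- Suppose m,n > 5 and fix a swap sequence of length at most K transforming the initial placement of the constructed token swapping instance into its target placement in which no pair of tokens swaps with each other more than once. Then at every point in time during the sequence, every slot gadget contains at least one item token at distance at least k·(1 − 1/(4n)) from the root. -/

import Mathlib

namespace UnweightedTS

/-- Vertices of the constructed tree: the root, ordering-gadget vertices `ord d`
(distance `d+1` from the root), slot-gadget path vertices `slot i d` (distance `d+1`
from the root in slot gadget `i`), and nooks.  (Coordinates range over all of `ℕ`;
the graph below only has edges between the vertices of the construction, so the
remaining vertices are isolated and carry no tokens.) -/
inductive Vtx (m : ℕ) where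
  | root : Vtx m
  | ord : ℕ → Vtx m
  | slot : Fin m → ℕ → Vtx m
  | nook : Fin m → Vtx m
deriving DecidableEq

/-- Adjacency generator for the tree: `len i` = length of the path of slot gadget `i`,
`lenOrd` = length of the ordering path, `nd` = distance from the root of the path
vertex to which the nook of each slot gadget is attached. -/
def rel {m : ℕ} (len : Fin m → ℕ) (lenOrd nd : ℕ) : Vtx m → Vtx m → Prop
  | .root, .ord d => d = 0 ∧ 0 < lenOrd
  | .ord d, .ord d' => d' = d + 1 ∧ d' < lenOrd
  | .root, .slot i d => d = 0 ∧ 0 < len i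
  | .slot i d, .slot i' d' => i = i' ∧ d' = d + 1 ∧ d' < len i
  | .slot i d, .nook i' => i = i' ∧ d + 1 = nd ∧ d < len i
  | _, _ => False

/-- The constructed tree, as a simple graph. -/
def Tree {m : ℕ} (len : Fin m → ℕ) (lenOrd nd : ℕ) : SimpleGraph (Vtx m) :=
  SimpleGraph.fromRel (rel len lenOrd nd)

/-- Swap the two values `e.1`, `e.2`. -/
def swapV {V : Type*} [DecidableEq V] (e : V × V) (v : V) : V :=
  if v = e.1 then e.2 else if v = e.2 then e.1 else v

/-- Apply a sequence of swaps to a token placement (token ↦ vertex). -/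
def applySwaps {T V : Type*} [DecidableEq V] (σ : List (V × V)) (f : T → V) : T → V :=
  σ.foldl (fun g e => fun t => swapV e (g t)) f

/-- Apply a sequence of star swaps (each given by a leaf) to a placement on the star
with center `none` and leaves `some l`. -/
def starApply {L : Type*} [DecidableEq L] (σ : List L) (f : Option L → Option L) :
    Option L → Option L :=
  σ.foldl (fun g l => fun t => swapV ((none : Option L), some l) (g t)) f

/-- The Star STS instance is a YES instance. -/
def StarSTSYes {L : Type*} [DecidableEq L] (π : Equiv.Perm (Option L)) (σ : List L) : Prop :=
  ∃ σ' : List L, σ'.Sublist σ ∧ starApply σ' id = ⇑π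

/-- `k = (mn)^25`, the length of a big segment. -/
def kk (m n : ℕ) : ℕ := (m * n) ^ 25

/-- `k' = k / n^8`, the length of a padding segment. -/
def kk' (m n : ℕ) : ℕ := kk m n / n ^ 8

variable {m n : ℕ}

/-- `nᵢ`: the number of occurrences of slot `i` in the swap sequence. -/
def cnt (s : Fin n → Fin m) (i : Fin m) : ℕ :=
  (Finset.univ.filter fun j : Fin n => s j = i).card

/-- Length of the ordering path: `nk + nmk'`. -/
def lenOrd (m n : ℕ) : ℕ := n * kk m n + n * m * kk' m n

/-- Length of the path of slot gadget `i`: `nᵢ k + n k'`. -/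
def lenSlot (s : Fin n → Fin m) (i : Fin m) : ℕ := cnt s i * kk m n + n * kk' m n

/-- The non-item tokens: big segments `xⱼ`, `yⱼ` of `k` tokens each, and padding
segments `p_{i,j}`, `q_{i,j}` of `k'` tokens each (in this order of the sum). -/
abbrev NonItem (m n : ℕ) :=
  (Fin n × Fin (kk m n)) ⊕ (Fin n × Fin (kk m n)) ⊕
    (Fin m × Fin n × Fin (kk' m n)) ⊕ (Fin m × Fin n × Fin (kk' m n))

/-- All tokens: item tokens (`Option (Fin m)`, `none` = item 0) and the non-item
tokens. -/
abbrev Tok (m n : ℕ) := Option (Fin m) ⊕ NonItem m n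

/-- The constructed tree: ordering path of length `nk + nmk'`, slot path `i` of
length `nᵢk + nk'`, nooks attached at distance `k` from the root. -/
def TheGraph (s : Fin n → Fin m) : SimpleGraph (Vtx m) :=
  Tree (lenSlot s) (lenOrd m n) (kk m n)

/-- The distance from the root, in slot gadget `i`, at which the block of segment
`q_{i,j}` (preceded by `yⱼ` when `s j = i`) starts in the initial configuration. -/
def offQ (s : Fin n → Fin m) (i : Fin m) (j : Fin n) : ℕ :=
  ∑ j' ∈ Finset.univ.filter (fun j' : Fin n => j'.val < j.val),
    (kk' m n + if s j' = i then kk m n else 0)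

/-- The slot occurring next after position `j` in the swap sequence, if any. -/
def nxt (s : Fin n → Fin m) (j : Fin n) : Option (Fin m) :=
  if h : j.val + 1 < n then some (s ⟨j.val + 1, h⟩) else none

/-- The rank (`0`-based position) of the padding segment `q_{i,j}` among the `m`
padding segments following `yⱼ` in the target configuration of the ordering gadget:
`q_{s_{j+1},j}` first, `q_{s_j,j}` last, and the others in increasing order of `i`. -/
def rho (s : Fin n → Fin m) (i : Fin m) (j : Fin n) : ℕ :=
  if some i = nxt s j then 0
  else if i = s j then m - 1
  else (if (nxt s j).isSome then 1 else 0) +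
    (Finset.univ.filter fun i' : Fin m =>
      i'.val < i.val ∧ i' ≠ s j ∧ some i' ≠ nxt s j).card

/-- The distance from the root, in slot gadget `i`, at which the block of segment
`p_{i,j}` (followed by `xⱼ` when `s j = i`) starts in the target configuration. -/
def tOffP (s : Fin n → Fin m) (i : Fin m) (j : Fin n) : ℕ :=
  ∑ j' ∈ Finset.univ.filter (fun j' : Fin n => j.val < j'.val),
    (kk' m n + if s j' = i then kk m n else 0)

/-- The initial placement of the tokens.  Item `0` is at the root and item `i` at the
nook of slot gadget `i`.  The ordering gadget contains, from the root outward, the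
blocks `x₁, p_{·,1}, x₂, p_{·,2}, …, xₙ, p_{·,n}` (the `m` padding blocks after `xⱼ`
ordered by `rho`); slot gadget `i` contains, from the root outward, the blocks
`q_{i,1},…,q_{i,n}` with `yⱼ` inserted immediately on the root side of `q_{i,j}`
whenever `s j = i`.  Within a segment the coordinate `a` increases away from the root
in slot gadgets and away from the root in the ordering gadget. -/
def initTok (s : Fin n → Fin m) : Tok m n → Vtx m
  | Sum.inl none => .root
  | Sum.inl (some i) => .nook i
  | Sum.inr (Sum.inl (j, a)) => .ord (j.val * (kk m n + m * kk' m n) + a.val)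
  | Sum.inr (Sum.inr (Sum.inl (j, a))) => .slot (s j) (offQ s (s j) j + a.val)
  | Sum.inr (Sum.inr (Sum.inr (Sum.inl (i, j, a)))) =>
      .ord (j.val * (kk m n + m * kk' m n) + kk m n + rho s i j * kk' m n + a.val)
  | Sum.inr (Sum.inr (Sum.inr (Sum.inr (i, j, a)))) =>
      .slot i (offQ s i j + (if s j = i then kk m n else 0) + a.val)

/-- The target placement of the tokens.  Item `o` goes to the position of item `π o`;
the ordering gadget contains, from its far end toward the root, the blocks
`y₁, q_{·,1}, y₂, q_{·,2}, …, yₙ, q_{·,n}` (the `m` padding blocks after `yⱼ` ordered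
by `rho`); slot gadget `i` contains, from the root outward, the blocks
`p_{i,n},…,p_{i,1}` with `xⱼ` inserted immediately after (away from the root)
`p_{i,j}` whenever `s j = i`.  The left-to-right order of the tokens within each
segment is the same as in the initial configuration. -/
def tgtTok (s : Fin n → Fin m) (π : Equiv.Perm (Option (Fin m))) : Tok m n → Vtx m
  | Sum.inl o => (match π o with | none => .root | some i => .nook i)
  | Sum.inr (Sum.inl (j, a)) =>
      .slot (s j) (tOffP s (s j) j + kk' m n + (kk m n - 1 - a.val))
  | Sum.inr (Sum.inr (Sum.inl (j, a))) =>
      .ord (lenOrd m n - 1 - (j.val * (kk m n + m * kk' m n) + a.val))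
  | Sum.inr (Sum.inr (Sum.inr (Sum.inl (i, j, a)))) =>
      .slot i (tOffP s i j + (kk' m n - 1 - a.val))
  | Sum.inr (Sum.inr (Sum.inr (Sum.inr (i, j, a)))) =>
      .ord (lenOrd m n - 1 -
        (j.val * (kk m n + m * kk' m n) + kk m n + rho s i j * kk' m n + a.val))

/-- `d_t`: the tree distance between token `t`'s initial and target vertices. -/
noncomputable def dd (s : Fin n → Fin m) (π : Equiv.Perm (Option (Fin m)))
    (t : Tok m n) : ℕ :=
  (TheGraph s).dist (initTok s t) (tgtTok s π t)

end UnweightedTS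

namespace UnweightedTS

variable {m n : ℕ}

/-- The placement after the first `τ` swaps of `σ` (time `τ`). -/
def placeAt (σ : List (Vtx m × Vtx m)) (f : Tok m n → Vtx m) (τ : ℕ) : Tok m n → Vtx m :=
  applySwaps (σ.take τ) f

/-- `isLeftMove u v` holds when a token moving across an edge from `u` to `v` makes a
*left* move: towards the root within a slot gadget (including out of a nook), or away
from the root within the ordering gadget. -/
def isLeftMove : Vtx m → Vtx m → Bool
  | .root, .ord _ => true
  | .ord _, .root => false
  | .ord d, .ord d' => decide (d < d')
  | .root, .slot _ _ => false
  | .slot _ _, .root => true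
  | .slot _ d, .slot _ d' => decide (d' < d)
  | .nook _, .slot _ _ => true
  | .slot _ _, .nook _ => false
  | _, _ => false

/-- A token of a `y` or `q` segment (initial vertex in a slot gadget). -/
def isSlotTok : Tok m n → Prop
  | Sum.inr (Sum.inr (Sum.inl _)) => True
  | Sum.inr (Sum.inr (Sum.inr (Sum.inr _))) => True
  | _ => False

/-- A token of an `x` or `p` segment (initial vertex in the ordering gadget). -/
def isNonSlotTok : Tok m n → Prop
  | Sum.inr (Sum.inl _) => True
  | Sum.inr (Sum.inr (Sum.inr (Sum.inl _))) => True
  | _ => False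

/-- `isContrary t u v` holds when a move of token `t` from `u` to `v` is a *contrary*
move: a right move of a slot token, a right move of an item token, or a left move of a
non-slot token. -/
def isContrary (t : Tok m n) (u v : Vtx m) : Bool :=
  match t with
  | Sum.inr (Sum.inl _) => isLeftMove u v
  | Sum.inr (Sum.inr (Sum.inr (Sum.inl _))) => isLeftMove u v
  | _ => !isLeftMove u v

/-- `c_t`: the number of contrary moves made by token `t` during the swap sequence
(starting from the placement `f`). -/
def cCount (t : Tok m n) : List (Vtx m × Vtx m) → (Tok m n → Vtx m) → ℕ
  | [], _ => 0
  | e :: rest, f =>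
      ((if f t = e.1 ∧ isContrary t e.1 e.2 = true then 1 else 0) +
        (if f t = e.2 ∧ isContrary t e.2 e.1 = true then 1 else 0)) +
        cCount t rest (fun t' => swapV e (f t'))

/-- Membership of a vertex in a gadget (`none` = the ordering gadget, `some i` = slot
gadget `i`, which includes its nook).  The root belongs to no gadget. -/
def memGadget : Vtx m → Option (Fin m) → Prop
  | .ord _, none => True
  | .slot i _, some i' => i = i'
  | .nook i, some i' => i = i'
  | _, _ => False

/-- The pair of tokens `t₁`, `t₂` is exchanged by the swap at step `idx` of `σ`. -/
def swapsPairAt (σ : List (Vtx m × Vtx m)) (f : Tok m n → Vtx m) (idx : ℕ)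
    (t₁ t₂ : Tok m n) : Prop :=
  ∃ h : idx < σ.length,
    (placeAt σ f idx t₁ = (σ.get ⟨idx, h⟩).1 ∧ placeAt σ f idx t₂ = (σ.get ⟨idx, h⟩).2) ∨
    (placeAt σ f idx t₁ = (σ.get ⟨idx, h⟩).2 ∧ placeAt σ f idx t₂ = (σ.get ⟨idx, h⟩).1)

/-- No pair of tokens swaps with each other more than once during `σ`. -/
def MinimalSeq (σ : List (Vtx m × Vtx m)) (f : Tok m n → Vtx m) : Prop :=
  ∀ (t₁ t₂ : Tok m n) (i₁ i₂ : ℕ), i₁ < i₂ →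
    swapsPairAt σ f i₁ t₁ t₂ → ¬ swapsPairAt σ f i₂ t₁ t₂

/-- The gadget containing a vertex, if any. -/
def gadgetOfV : Vtx m → Option (Fin m)
  | .slot i _ => some i
  | .nook i => some i
  | _ => none

/-- The free item token at time `τ`: the item token that was most recently at the
root (initially item `0`, i.e. `none`). -/
noncomputable def freeAt (σ : List (Vtx m × Vtx m)) (f : Tok m n → Vtx m) :
    ℕ → Option (Fin m)
  | 0 => none
  | τ + 1 =>
      if h : ∃ o : Option (Fin m), placeAt σ f (τ + 1) (Sum.inl o) = Vtx.root then
        h.choose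
      else freeAt σ f τ

/-- The exchange sequence `χ` built from the first `τ` steps: each time an item token
that was just in slot gadget `i` becomes the new free item token, `i` is appended. -/
noncomputable def chiList (σ : List (Vtx m × Vtx m)) (f : Tok m n → Vtx m) :
    ℕ → List (Fin m)
  | 0 => []
  | τ + 1 =>
      chiList σ f τ ++
        (if freeAt σ f (τ + 1) ≠ freeAt σ f τ then
          (match gadgetOfV (placeAt σ f τ (Sum.inl (freeAt σ f (τ + 1)))) with
            | some i => [i]
            | none => [])
        else [])

end UnweightedTS

namespace UnweightedTS
open Finset
open scoped Classical

/-- Abstract tokens: items, tokens `t c` (moving from slots to the ordering gadget) and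
tokens `u c` (moving from the ordering gadget to slots). -/
inductive Tk (m N : ℕ) where
  | it (o : Option (Fin m)) : Tk m N
  | t (c : Fin N) : Tk m N
  | u (c : Fin N) : Tk m N
deriving DecidableEq, Fintype

/-- Edges oriented from left to right. -/
inductive Edg {m : ℕ} (k : ℕ) : Vtx m → Vtx m → Prop where
  | o0 : Edg k (.ord 0) .root
  | o (d : ℕ) : Edg k (.ord (d + 1)) (.ord d)
  | s0 (i : Fin m) : Edg k .root (.slot i 0)
  | s (i : Fin m) (d : ℕ) : Edg k (.slot i d) (.slot i (d + 1))
  | n (i : Fin m) (d : ℕ) (h : d + 1 = k) : Edg k (.slot i d) (.nook i)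

/-- number of earlier indices with the same label -/
def rnk {m N : ℕ} (lab : Fin N → Fin m) (c : Fin N) : ℕ :=
  #{c' : Fin N | c' < c ∧ lab c' = lab c}

/-- number of indices with a given label -/
def lln {m N : ℕ} (lab : Fin N → Fin m) (i : Fin m) : ℕ := #{c : Fin N | lab c = i}

/-- valid vertices -/
def Vld {m N : ℕ} (lab : Fin N → Fin m) : Vtx m → Prop
  | .root => True
  | .ord d => d < N
  | .slot i d => d < lln lab i
  | .nook _ => True

/-- root or nook -/
def RN {m : ℕ} : Vtx m → Prop
  | .root => True
  | .ord _ => False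
  | .slot _ _ => False
  | .nook _ => True

/-- depth in the ordering gadget -/
def odv {m : ℕ} : Vtx m → ℕ
  | .ord d => d + 1
  | _ => 0

/-- depth in slot gadget `i` -/
def phv {m : ℕ} (k : ℕ) (i : Fin m) : Vtx m → ℕ
  | .slot i' d => if i' = i then d + 1 else 0
  | .nook i' => if i' = i then k + 1 else 0
  | _ => 0

/-- An abstract swap sequence. -/
structure Sys (m N k S : ℕ) (lab : Fin N → Fin m) where
  pos : ℕ → Tk m N → Vtx m
  lft : ℕ → Tk m N
  rgt : ℕ → Tk m N
  edge : ∀ s < S, Edg k (pos s (rgt s)) (pos s (lft s))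
  stepL : ∀ s < S, pos (s + 1) (lft s) = pos s (rgt s)
  stepR : ∀ s < S, pos (s + 1) (rgt s) = pos s (lft s)
  stepO : ∀ s < S, ∀ x, x ≠ lft s → x ≠ rgt s → pos (s + 1) x = pos s x
  inj : ∀ s ≤ S, Function.Injective (pos s)
  vld : ∀ s ≤ S, ∀ x, Vld lab (pos s x)
  srj : ∀ s ≤ S, ∀ v, Vld lab v → ∃ x, pos s x = v
  t0 : ∀ c, pos 0 (.t c) = .slot (lab c) (rnk lab c)
  tS : ∀ c, pos S (.t c) = .ord (N - 1 - c)
  u0 : ∀ c, pos 0 (.u c) = .ord c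
  uS : ∀ c, pos S (.u c) = .slot (lab c) (lln lab (lab c) - 1 - rnk lab c)
  i0 : ∀ o, RN (pos 0 (.it o))
  iS : ∀ o, RN (pos S (.it o))
  mini : ∀ s s', s < S → s' < S → s ≠ s' →
    ¬ ((lft s = lft s' ∧ rgt s = rgt s') ∨ (lft s = rgt s' ∧ rgt s = lft s'))

theorem rnk_lt {m N : ℕ} (lab : Fin N → Fin m) (c : Fin N) :
    rnk lab c < lln lab (lab c) := by
  apply Finset.card_lt_card
  constructor
  · intro x; simp
  · intro h
    have : c ∈ (Finset.univ.filter fun c' : Fin N => c' < c ∧ lab c' = lab c) := h (by simp)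
    simp at this

namespace Sys
variable {m N k S : ℕ} {lab : Fin N → Fin m} (Y : Sys m N k S lab)

/-- region of step `s` -/
def reg (s : ℕ) : Option (Fin m) := gadgetOfV (Y.pos s (Y.lft s))
/-- ordering depth -/
def od (s : ℕ) (x : Tk m N) : ℕ := odv (Y.pos s x)
/-- slot depth -/
def ph (i : Fin m) (s : ℕ) (x : Tk m N) : ℕ := phv k i (Y.pos s x)

theorem lft_ne_rgt {s : ℕ} (hs : s < S) : Y.lft s ≠ Y.rgt s := by
  intro h
  have := Y.edge s hs
  rw [h] at this
  generalize Y.pos s (Y.rgt s) = v at this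
  cases v with
  | root => cases this
  | ord d => 
    rcases h : d with _ | d
    · rw [h] at this; cases this
    · generalize hv : (Vtx.ord d : Vtx m) = v at this
      generalize hv' : (Vtx.ord d : Vtx m) = v' at this
      cases this <;> simp_all
  | slot i d => 
      generalize hv : (Vtx.slot i d : Vtx m) = v at this
      generalize hv' : (Vtx.slot i d : Vtx m) = v' at this
      cases this <;> simp_all
  | nook i => cases this

/-- change of `od` in a step -/
theorem od_step {s : ℕ} (hs : s < S) (x : Tk m N) :
    (Y.reg s = none ∧ Y.lft s = x ∧ Y.od (s+1) x = Y.od s x + 1) ∨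
    (Y.reg s = none ∧ Y.rgt s = x ∧ Y.od s x = Y.od (s+1) x + 1) ∨
    (Y.od (s+1) x = Y.od s x ∧ (Y.reg s = none → x ≠ Y.lft s ∧ x ≠ Y.rgt s)) := by
  have hE := Y.edge s hs
  by_cases h1 : x = Y.lft s
  · subst h1
    unfold od reg
    rw [Y.stepL s hs]
    generalize Y.pos s (Y.lft s) = v at *
    generalize Y.pos s (Y.rgt s) = w at *
    cases hE <;> simp [odv, gadgetOfV]
  by_cases h2 : x = Y.rgt s
  · subst h2
    unfold od reg
    rw [Y.stepR s hs]
    generalize Y.pos s (Y.lft s) = v at *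
    generalize Y.pos s (Y.rgt s) = w at *
    cases hE <;> simp [odv, gadgetOfV]
  · right; right
    unfold od
    rw [Y.stepO s hs x h1 h2]
    exact ⟨rfl, fun _ => ⟨h1, h2⟩⟩

/-- change of `ph i` in a step -/
theorem ph_step (i : Fin m) {s : ℕ} (hs : s < S) (x : Tk m N) :
    (Y.reg s = some i ∧ Y.rgt s = x ∧ Y.ph i (s+1) x = Y.ph i s x + 1) ∨
    (Y.reg s = some i ∧ Y.lft s = x ∧ Y.ph i s x = Y.ph i (s+1) x + 1) ∨
    (Y.ph i (s+1) x = Y.ph i s x ∧ (Y.reg s = some i → x ≠ Y.lft s ∧ x ≠ Y.rgt s)) := by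
  have hE := Y.edge s hs
  by_cases h1 : x = Y.lft s
  · subst h1
    unfold ph reg
    rw [Y.stepL s hs]
    generalize Y.pos s (Y.lft s) = v at *
    generalize Y.pos s (Y.rgt s) = w at *
    cases hE with
    | o0 => simp [phv, gadgetOfV]
    | o d => simp [phv, gadgetOfV]
    | s0 j => by_cases h : j = i <;> simp [phv, gadgetOfV, h]
    | s j d => by_cases h : j = i <;> simp [phv, gadgetOfV, h]
    | n j d hd => subst hd; by_cases h : j = i <;> simp [phv, gadgetOfV, h]
  by_cases h2 : x = Y.rgt s
  · subst h2
    unfold ph reg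
    rw [Y.stepR s hs]
    generalize Y.pos s (Y.lft s) = v at *
    generalize Y.pos s (Y.rgt s) = w at *
    cases hE with
    | o0 => simp [phv, gadgetOfV]
    | o d => simp [phv, gadgetOfV]
    | s0 j => by_cases h : j = i <;> simp [phv, gadgetOfV, h]
    | s j d => by_cases h : j = i <;> simp [phv, gadgetOfV, h]
    | n j d hd => subst hd; by_cases h : j = i <;> simp [phv, gadgetOfV, h]
  · right; right
    unfold ph
    rw [Y.stepO s hs x h1 h2]
    exact ⟨rfl, fun _ => ⟨h1, h2⟩⟩

/-- in an ordering step the two tokens are adjacent -/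
theorem od_edge {s : ℕ} (hs : s < S) (h : Y.reg s = none) :
    Y.od s (Y.rgt s) = Y.od s (Y.lft s) + 1 ∧ Y.od (s+1) (Y.lft s) = Y.od s (Y.rgt s) ∧
    Y.od (s+1) (Y.rgt s) = Y.od s (Y.lft s) := by
  have hE := Y.edge s hs
  unfold od reg at *
  rw [Y.stepL s hs, Y.stepR s hs]
  generalize Y.pos s (Y.lft s) = v at *
  generalize Y.pos s (Y.rgt s) = w at *
  cases hE <;> simp_all [odv, gadgetOfV]

theorem ph_edge (i : Fin m) {s : ℕ} (hs : s < S) (h : Y.reg s = some i) :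
    Y.ph i s (Y.lft s) = Y.ph i s (Y.rgt s) + 1 ∧ Y.ph i (s+1) (Y.lft s) = Y.ph i s (Y.rgt s) ∧
    Y.ph i (s+1) (Y.rgt s) = Y.ph i s (Y.lft s) ∧ 
    Y.od s (Y.lft s) = 0 ∧ Y.od s (Y.rgt s) = 0 ∧
    Y.od (s+1) (Y.lft s) = 0 ∧ Y.od (s+1) (Y.rgt s) = 0:= by
  have hE := Y.edge s hs
  unfold ph od reg at *
  rw [Y.stepL s hs, Y.stepR s hs]
  generalize Y.pos s (Y.lft s) = v at *
  generalize Y.pos s (Y.rgt s) = w at *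
  cases hE <;> simp_all [phv, gadgetOfV, odv]

/-- in an ordering step both tokens have `ph = 0` -/
theorem ph_zero_of_ord (i : Fin m) {s : ℕ} (hs : s < S) (h : Y.reg s ≠ some i) :
    Y.ph i s (Y.lft s) = 0 ∧ Y.ph i s (Y.rgt s) = 0 := by
  have hE := Y.edge s hs
  unfold ph reg at *
  generalize Y.pos s (Y.lft s) = v at *
  generalize Y.pos s (Y.rgt s) = w at *
  cases hE <;> simp_all [phv, gadgetOfV]

theorem od_inj {s : ℕ} (hs : s ≤ S) {x y : Tk m N} (h : Y.od s x = Y.od s y) (h0 : 0 < Y.od s x) :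
    x = y := by
  apply Y.inj s hs
  unfold od at *
  generalize Y.pos s x = v at *
  generalize Y.pos s y = w at *
  cases v <;> cases w <;> simp_all [odv]

theorem ph_inj (i : Fin m) {s : ℕ} (hs : s ≤ S) {x y : Tk m N} (h : Y.ph i s x = Y.ph i s y)
    (h0 : 0 < Y.ph i s x) (hx : Y.pos s x ≠ .nook i) (hy : Y.pos s y ≠ .nook i) :
    x = y := by
  apply Y.inj s hs
  unfold ph at *
  generalize Y.pos s x = v at *
  generalize Y.pos s y = w at *
  cases v <;> cases w <;> simp_all [phv] <;> grind

theorem ph_nook (i : Fin m) {s : ℕ} {x : Tk m N} (hx : Y.pos s x = .nook i) :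
    Y.ph i s x = k + 1 := by
  simp [ph, hx, phv]

theorem ph_disj {i j : Fin m} (hij : i ≠ j) {s : ℕ} {x : Tk m N} (h : 0 < Y.ph i s x) :
    Y.ph j s x = 0 := by
  unfold ph at *
  generalize Y.pos s x = v at *
  cases v <;> simp_all [phv] <;> grind

theorem od_ph {i : Fin m} {s : ℕ} {x : Tk m N} (h : 0 < Y.ph i s x) :
    Y.od s x = 0 := by
  unfold ph od at *
  generalize Y.pos s x = v at *
  cases v <;> simp_all [phv, odv]

/-- telescoping in the ordering gadget -/
theorem tele_od (x : Tk m N) {p q : ℕ} (hpq : p ≤ q) (hq : q ≤ S) :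
    Y.od q x + #{s ∈ Ico p q | Y.reg s = none ∧ Y.rgt s = x} =
    Y.od p x + #{s ∈ Ico p q | Y.reg s = none ∧ Y.lft s = x} := by
  induction q, hpq using Nat.le_induction with
  | base => simp
  | succ q hpq ih =>
    have ih := ih (by omega)
    have hne := Y.lft_ne_rgt (s := q) (by omega)
    rw [← Finset.insert_Ico_right_eq_Ico_add_one hpq, Finset.filter_insert, Finset.filter_insert]
    rcases Y.od_step (s := q) (by omega) x with ⟨h1, h2, h3⟩ | ⟨h1, h2, h3⟩ | ⟨h1, h2⟩
    · rw [if_neg (by grind), if_pos (by grind), Finset.card_insert_of_notMem (by simp)]; omega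
    · rw [if_pos (by grind), if_neg (by grind), Finset.card_insert_of_notMem (by simp)]; omega
    · rw [if_neg (by grind), if_neg (by grind)]; omega

theorem tele_ph (i : Fin m) (x : Tk m N) {p q : ℕ} (hpq : p ≤ q) (hq : q ≤ S) :
    Y.ph i q x + #{s ∈ Ico p q | Y.reg s = some i ∧ Y.lft s = x} =
    Y.ph i p x + #{s ∈ Ico p q | Y.reg s = some i ∧ Y.rgt s = x} := by
  induction q, hpq using Nat.le_induction with
  | base => simp
  | succ q hpq ih =>
    have ih := ih (by omega)
    have hne := Y.lft_ne_rgt (s := q) (by omega)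
    rw [← Finset.insert_Ico_right_eq_Ico_add_one hpq, Finset.filter_insert, Finset.filter_insert]
    rcases Y.ph_step i (s := q) (by omega) x with ⟨h1, h2, h3⟩ | ⟨h1, h2, h3⟩ | ⟨h1, h2⟩
    · rw [if_neg (by grind), if_pos (by grind), Finset.card_insert_of_notMem (by simp)]; omega
    · rw [if_pos (by grind), if_neg (by grind), Finset.card_insert_of_notMem (by simp)]; omega
    · rw [if_neg (by grind), if_neg (by grind)]; omega

end Sys
end UnweightedTS

namespace UnweightedTS
open Finset
open scoped Classical

/-- reversal of tokens -/
def rvT {m N : ℕ} : Tk m N → Tk m N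
  | .it o => .it o
  | .t c => .u c.rev
  | .u c => .t c.rev

@[simp] theorem rvT_t {m N : ℕ} (c : Fin N) : rvT (Tk.t c : Tk m N) = .u c.rev := rfl
@[simp] theorem rvT_u {m N : ℕ} (c : Fin N) : rvT (Tk.u c : Tk m N) = .t c.rev := rfl
@[simp] theorem rvT_it {m N : ℕ} (o) : rvT (Tk.it o : Tk m N) = .it o := rfl

@[simp] theorem rvT_rvT {m N : ℕ} (x : Tk m N) : rvT (rvT x) = x := by
  cases x <;> simp [rvT]

theorem rvT_inj {m N : ℕ} : Function.Injective (rvT : Tk m N → Tk m N) := fun x y h => by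
  rw [← rvT_rvT x, h, rvT_rvT]

theorem rvT_eq {m N : ℕ} {x y : Tk m N} : rvT x = y ↔ x = rvT y := by
  constructor <;> (rintro h; subst h; simp)

theorem lln_rev {m N : ℕ} (lab : Fin N → Fin m) (i : Fin m) :
    lln (fun c => lab c.rev) i = lln lab i := by
  unfold lln
  apply Finset.card_bij (fun c _ => Fin.rev c)
  · simp
  · simp
  · intro b hb; exact ⟨b.rev, by simpa using hb, by simp⟩

theorem rnk_rev {m N : ℕ} (lab : Fin N → Fin m) (c : Fin N) :
    rnk (fun c => lab c.rev) c = lln lab (lab c.rev) - 1 - rnk lab c.rev := by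
  have h1 : rnk (fun c => lab c.rev) c = #{c' : Fin N | c.rev < c' ∧ lab c' = lab c.rev} := by
    unfold rnk
    apply Finset.card_bij (fun c _ => Fin.rev c)
    · intro a ha; simp at ha ⊢; exact ha
    · simp
    · intro b hb; refine ⟨b.rev, ?_, by simp⟩; simp at hb ⊢
      constructor
      · rw [Fin.rev_lt_iff]; exact hb.1
      · exact hb.2
  have h2 : lln lab (lab c.rev) = #{c' : Fin N | c.rev < c' ∧ lab c' = lab c.rev} + 1 + rnk lab c.rev := by
    unfold lln rnk
    have : (univ.filter fun c' : Fin N => lab c' = lab c.rev) =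
      insert c.rev ((univ.filter fun c' : Fin N => c.rev < c' ∧ lab c' = lab c.rev) ∪
       (univ.filter fun c' : Fin N => c' < c.rev ∧ lab c' = lab c.rev)) := by
      ext x
      simp only [mem_filter, mem_univ, true_and, mem_insert, mem_union]
      rcases lt_trichotomy x c.rev with h | h | h
      · simp [h, h.ne, h.not_gt]
      · simp [h]
      · simp [h, h.ne', h.not_gt]
    rw [this, Finset.card_insert_of_notMem (by simp), Finset.card_union_of_disjoint]
    · omega
    · rw [Finset.disjoint_left]; intro x; simp only [mem_filter, mem_univ, true_and]
      rintro ⟨h, _⟩ ⟨h', _⟩; exact absurd h' h.not_gt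
  omega

namespace Sys
variable {m N k S : ℕ} {lab : Fin N → Fin m} (Y : Sys m N k S lab)

/-- the order of tokens in the ordering gadget changes only by an exchange -/
theorem od_pass {x y : Tk m N} {p q : ℕ} (hpq : p ≤ q) (hq : q ≤ S)
    (hx : ∀ s, p < s → s ≤ q → 0 < Y.od s x) (h : Y.od p x < Y.od p y)
    (hno : ∀ s, p ≤ s → s < q → Y.reg s = none → Y.lft s = x → Y.rgt s = y → False) :
    Y.od q x < Y.od q y := by
  induction q, hpq using Nat.le_induction with
  | base => exact h
  | succ q hpq ih =>
    have ih := ih (by omega) (fun s h1 h2 => hx s h1 (by omega)) (fun s h1 h2 => hno s h1 (by omega))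
    have hx' := hx (q+1) (by omega) le_rfl
    have hno' := hno q hpq (by omega)
    have hxy : x ≠ y := by rintro rfl; omega
    have hi : Y.od (q+1) x = Y.od (q+1) y → x = y := fun h => Y.od_inj hq h hx'
    have hs : q < S := by omega
    rcases Y.od_step hs x with ⟨h1, h2, h3⟩ | ⟨h1, h2, h3⟩ | ⟨h1, h2⟩ <;>
    rcases Y.od_step hs y with ⟨g1, g2, g3⟩ | ⟨g1, g2, g3⟩ | ⟨g1, g2⟩
    · exact absurd (h2.symm.trans g2) hxy
    · exact absurd g2 (fun h => hno' h1 h2 h)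
    · have : Y.od (q+1) x ≠ Y.od (q+1) y := fun h => hxy (hi h)
      omega
    · omega
    · exact absurd (h2.symm.trans g2) hxy
    · omega
    · omega
    · have : Y.od (q+1) x ≠ Y.od (q+1) y := fun h => hxy (hi h)
      omega
    · omega

/-- time reversal -/
def rev : Sys m N k S (fun c => lab c.rev) where
  pos s x := Y.pos (S - s) (rvT x)
  lft s := rvT (Y.rgt (S - 1 - s))
  rgt s := rvT (Y.lft (S - 1 - s))
  edge s hs := by
    have h := Y.edge (S - 1 - s) (by omega)
    have e : S - s = S - 1 - s + 1 := by omega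
    simp only [rvT_rvT]
    rw [e, Y.stepL _ (by omega), Y.stepR _ (by omega)]; exact h
  stepL s hs := by
    have e : S - s = S - 1 - s + 1 := by omega
    have e2 : S - (s + 1) = S - 1 - s := by omega
    simp only [rvT_rvT]
    rw [e, e2, Y.stepL _ (by omega)]
  stepR s hs := by
    have e : S - s = S - 1 - s + 1 := by omega
    have e2 : S - (s + 1) = S - 1 - s := by omega
    simp only [rvT_rvT]
    rw [e, e2, Y.stepR _ (by omega)]
  stepO s hs x h1 h2 := by
    have e : S - s = S - 1 - s + 1 := by omega
    have e2 : S - (s + 1) = S - 1 - s := by omega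
    rw [e, e2, Y.stepO _ (by omega)]
    · intro h; exact h2 (by rw [← h]; simp)
    · intro h; exact h1 (by rw [← h]; simp)
  inj s hs := (Y.inj _ (by omega)).comp rvT_inj
  vld s hs x := by
    have := Y.vld (S - s) (by omega) (rvT x)
    revert this
    cases Y.pos (S - s) (rvT x) <;> simp [Vld, lln_rev]
  srj s hs v hv := by
    obtain ⟨x, hx⟩ := Y.srj (S - s) (by omega) v (by revert hv; cases v <;> simp [Vld, lln_rev])
    exact ⟨rvT x, by simpa using hx⟩
  t0 c := by
    simp only [rvT, Nat.sub_zero]; rw [Y.uS, rnk_rev]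
  tS c := by
    simp only [rvT, Nat.sub_self]; rw [Y.u0]; congr 1; simp [Fin.rev]; omega
  u0 c := by
    simp only [rvT, Nat.sub_zero]; rw [Y.tS]; congr 1; simp [Fin.rev]; omega
  uS c := by
    simp only [rvT, Nat.sub_self]; rw [Y.t0, rnk_rev, lln_rev]; congr 1
    have := rnk_lt lab c.rev
    omega
  i0 o := by simpa [rvT] using Y.iS o
  iS o := by simpa [rvT] using Y.i0 o
  mini s s' hs hs' hne h := by
    apply Y.mini (S - 1 - s) (S - 1 - s') (by omega) (by omega) (by omega)
    simp only [rvT_inj.eq_iff] at h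
    tauto

@[simp] theorem rev_pos (s x) : Y.rev.pos s x = Y.pos (S - s) (rvT x) := rfl
@[simp] theorem rev_od (s x) : Y.rev.od s x = Y.od (S - s) (rvT x) := rfl
@[simp] theorem rev_ph (i s x) : Y.rev.ph i s x = Y.ph i (S - s) (rvT x) := rfl
@[simp] theorem rev_lft (s) : Y.rev.lft s = rvT (Y.rgt (S - 1 - s)) := rfl
@[simp] theorem rev_rgt (s) : Y.rev.rgt s = rvT (Y.lft (S - 1 - s)) := rfl
theorem rev_reg {s : ℕ} (hs : s < S) : Y.rev.reg s = Y.reg (S - 1 - s) := by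
  unfold reg
  have e : S - s = S - 1 - s + 1 := by omega
  simp only [rev_lft, rev_pos, rvT_rvT]
  rw [e, Y.stepR _ (by omega)]

/-- counting steps is invariant under reversal -/
theorem rev_count (P Q : ℕ → Prop) [DecidablePred P] [DecidablePred Q] (h : ∀ s < S, P s ↔ Q (S - 1 - s)) :
    #{s ∈ range S | P s} = #{s ∈ range S | Q s} := by
  apply Finset.card_bij (fun s _ => S - 1 - s)
  · intro s hs; simp at hs ⊢; exact ⟨by omega, (h s hs.1).1 hs.2⟩
  · intro a ha b hb; simp at ha hb ⊢; omega
  · intro b hb; simp at hb; refine ⟨S - 1 - b, ?_, by omega⟩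
    simp
    refine ⟨by omega, (h _ (by omega)).2 ?_⟩
    have : S - 1 - (S - 1 - b) = b := by omega
    rw [this]; exact hb.2

end Sys
end UnweightedTS

namespace UnweightedTS
open Finset
open scoped Classical

/-- combinatorial inequality -/
theorem inv_le_aux {N : ℕ} (f : Fin N → ℕ) :
    ∑ a, (#{b | f b < f a} - a.val) ≤ #{p : Fin N × Fin N | p.1 < p.2 ∧ f p.2 < f p.1} := by
  have h1 : #{p : Fin N × Fin N | p.1 < p.2 ∧ f p.2 < f p.1} = ∑ a, #{b | a < b ∧ f b < f a} := by
    simp only [Finset.card_filter, ← Finset.univ_product_univ, Finset.sum_product]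
  rw [h1]
  apply Finset.sum_le_sum
  intro a _
  have h2 : #{b | f b < f a} ≤ #(Finset.Iio a) + #{b | a < b ∧ f b < f a} := by
    rw [← Finset.card_union_of_disjoint]
    · apply Finset.card_le_card
      intro b hb
      simp at hb ⊢
      rcases lt_trichotomy a b with h | h | h
      · right; exact ⟨h, hb⟩
      · subst h; omega
      · left; exact h
    · rw [Finset.disjoint_left]; intro x; simp; intro h h'; exact absurd h' h.not_gt
  simp at h2
  omega

theorem inv_le_aux2 {N : ℕ} (f : Fin N → ℕ) (hf : Function.Injective f) :
    ∑ a, (a.val - #{b | f b < f a}) ≤ #{p : Fin N × Fin N | p.1 < p.2 ∧ f p.2 < f p.1} := by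
  have h1 : #{p : Fin N × Fin N | p.1 < p.2 ∧ f p.2 < f p.1} = ∑ a, #{b | b < a ∧ f a < f b} := by
    simp only [Finset.card_filter, ← Finset.univ_product_univ, Finset.sum_product]
    rw [Finset.sum_comm]
  rw [h1]
  apply Finset.sum_le_sum
  intro a _
  have h2 : #(Finset.Iio a) ≤ #{b | f b < f a} + #{b | b < a ∧ f a < f b} := by
    rw [← Finset.card_union_of_disjoint]
    · apply Finset.card_le_card
      intro b hb
      simp at hb ⊢
      rcases lt_trichotomy (f a) (f b) with h | h | h
      · right; exact ⟨hb, h⟩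
      · have := hf h; subst this; simp at hb
      · left; exact h
    · rw [Finset.disjoint_left]; intro x; simp; omega
  simp at h2
  omega

/-- ranks of an injective function are injective -/
theorem rankf_inj {N : ℕ} (f : Fin N → ℕ) (hf : Function.Injective f) :
    Function.Injective (fun a : Fin N => #{b | f b < f a}) := by
  have key : ∀ a b, f a < f b → #{x | f x < f a} < #{x | f x < f b} := by
    intro a b h
    apply Finset.card_lt_card
    constructor
    · intro x; simp; omega
    · intro h'
      have : a ∈ (univ.filter fun x => f x < f a) := h' (by simpa using h)
      simp at this
  intro a b h
  simp only at h
  rcases lt_trichotomy (f a) (f b) with h' | h' | h'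
  · have := key _ _ h'; omega
  · exact hf h'
  · have := key _ _ h'; omega

theorem rankf_lt {N : ℕ} (f : Fin N → ℕ) (a : Fin N) : #{b | f b < f a} < N := by
  have : #{b | f b < f a} < #(univ : Finset (Fin N)) := by
    apply Finset.card_lt_card
    constructor
    · simp
    · intro h'
      have : a ∈ (univ.filter fun x => f x < f a) := h' (by simp)
      simp at this
  simpa using this

theorem comb_main {m N : ℕ} (lab : Fin N → Fin m) (f g : Fin N → ℕ) (hf : Function.Injective f)
    (hg : Function.Injective g) :
    ∑ a, #{c | lab c = lab a ∧ #{c' | g c' < g c} < #{b | f b < f a}} +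
     ∑ a, #{c : Fin N | lab c = lab a ∧ #{b | f b < f a} ≤ c.val ∧ c < a} ≤
    ∑ a, rnk lab a + #{p : Fin N × Fin N | p.1 < p.2 ∧ f p.2 < f p.1} +
      #{p : Fin N × Fin N | p.1 < p.2 ∧ g p.2 < g p.1} := by
  have h1 := inv_le_aux f
  have h2 := inv_le_aux2 g hg
  have hr := rankf_inj f hf
  have hrl := rankf_lt f
  set r : Fin N → ℕ := fun a : Fin N => #{b | f b < f a} with hrdef
  set e : Fin N → ℕ := fun a : Fin N => #{b | g b < g a} with hedef
  have A : ∑ a, #{c | lab c = lab a ∧ e c < r a} ≤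
      ∑ a, #{c : Fin N | lab c = lab a ∧ c.val < r a} + ∑ a, #{c : Fin N | e c < r a ∧ r a ≤ c.val} := by
    rw [← Finset.sum_add_distrib]
    apply Finset.sum_le_sum
    intro a _
    rw [← Finset.card_union_of_disjoint]
    · apply Finset.card_le_card
      intro c; simp; intro h h'
      by_cases h3 : c.val < r a
      · left; exact ⟨h, h3⟩
      · right; exact ⟨h', by omega⟩
    · rw [Finset.disjoint_left]; intro x; simp; omega
  have B : ∑ a, #{c : Fin N | e c < r a ∧ r a ≤ c.val} ≤ ∑ c : Fin N, (c.val - e c) := by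
    simp only [Finset.card_filter]
    rw [Finset.sum_comm]
    apply Finset.sum_le_sum
    intro c _
    rw [← Finset.card_filter]
    calc #{a | e c < r a ∧ r a ≤ c.val} = #((univ.filter fun a => e c < r a ∧ r a ≤ c.val).image r) := by
          rw [Finset.card_image_of_injective _ hr]
      _ ≤ #(Finset.Ioc (e c) c.val) := by
          apply Finset.card_le_card
          intro p; simp; rintro x h1 h2 rfl; exact ⟨h1, h2⟩
      _ = _ := by simp
  have C : ∑ a, #{c : Fin N | lab c = lab a ∧ c.val < r a} + 
     ∑ a, #{c : Fin N | lab c = lab a ∧ r a ≤ c.val ∧ c < a} ≤ ∑ a, rnk lab a + ∑ a : Fin N, (r a - a.val) := by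
    rw [← Finset.sum_add_distrib, ← Finset.sum_add_distrib]
    apply Finset.sum_le_sum
    intro a _
    rcases le_or_gt (r a) a.val with h | h
    · rw [← Finset.card_union_of_disjoint]
      · apply le_trans _ (Nat.le_add_right _ _)
        apply Finset.card_le_card
        intro c; simp
        rintro (⟨h3, h4⟩ | ⟨h3, h4, h5⟩)
        · exact ⟨by rw [Fin.lt_def]; omega, h3⟩
        · exact ⟨h5, h3⟩
      · rw [Finset.disjoint_left]; intro x; simp; omega
    · have e0 : #{c : Fin N | lab c = lab a ∧ r a ≤ c.val ∧ c < a} = 0 := by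
        rw [Finset.card_eq_zero, Finset.filter_eq_empty_iff]
        rintro c _ ⟨_, h3, h4⟩
        rw [Fin.lt_def] at h4; omega
      rw [e0]
      have : #{c : Fin N | lab c = lab a ∧ c.val < r a} ≤ rnk lab a + #((univ.filter fun c : Fin N => a.val ≤ c.val ∧ c.val < r a).image Fin.val) := by
        rw [Finset.card_image_of_injective _ Fin.val_injective]
        unfold rnk
        refine le_trans (Finset.card_le_card ?_) (Finset.card_union_le _ _)
        intro c; simp; intro h3 h4
        by_cases h5 : c < a
        · left; exact ⟨h5, h3⟩
        · right; rw [Fin.lt_def] at h5; omega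
      refine le_trans this ?_
      have h6 : #((univ.filter fun c : Fin N => a.val ≤ c.val ∧ c.val < r a).image Fin.val) ≤ #(Finset.Ico a.val (r a)) := by
        apply Finset.card_le_card
        intro c; simp; rintro x h1 h2 rfl; exact ⟨h1, h2⟩
      rw [Nat.card_Ico] at h6
      omega
  have h1' : ∑ a : Fin N, (r a - a.val) ≤ _ := h1
  have h2' : ∑ a : Fin N, (a.val - e a) ≤ _ := h2
  change ∑ a, #{c | lab c = lab a ∧ e c < r a} + ∑ a, #{c : Fin N | lab c = lab a ∧ r a ≤ c.val ∧ c < a} ≤ _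
  omega

/-- fiberwise counting -/
theorem count_fiber {α β γ : Type*} [Fintype α] (R : Finset β) (P : α → β → Prop) (tok : β → γ) (g : α → γ)
    (hg : Function.Injective g) [DecidablePred fun s => ∃ c, P c s ∧ tok s = g c]
    [∀ c, DecidablePred fun s => P c s ∧ tok s = g c] :
    #{s ∈ R | ∃ c, P c s ∧ tok s = g c} = ∑ c, #{s ∈ R | P c s ∧ tok s = g c} := by
  rw [← Finset.card_biUnion]
  · congr 1; ext s; simp
  · intro a _ b _ hab
    rw [Function.onFun, Finset.disjoint_left]
    intro s; simp
    intro h1 h2 h3 h4 h5 h6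
    exact hab (hg (h3.symm.trans h6))

namespace Sys
variable {m N k S : ℕ} {lab : Fin N → Fin m} (Y : Sys m N k S lab)

theorem od_t0 (a : Fin N) : Y.od 0 (.t a) = 0 := by simp [od, Y.t0, odv]
theorem od_tS (a : Fin N) : Y.od S (.t a) = N - a := by simp [od, Y.tS, odv]; omega
theorem od_u0 (a : Fin N) : Y.od 0 (.u a) = a + 1 := by simp [od, Y.u0, odv]
theorem od_uS (a : Fin N) : Y.od S (.u a) = 0 := by simp [od, Y.uS, odv]
theorem od_i0 (o) : Y.od 0 (.it o) = 0 := by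
  have := Y.i0 o; unfold od; revert this; cases Y.pos 0 (.it o) <;> simp [odv, RN]
theorem od_iS (o) : Y.od S (.it o) = 0 := by
  have := Y.iS o; unfold od; revert this; cases Y.pos S (.it o) <;> simp [odv, RN]
theorem ph_t0 (i) (a : Fin N) : Y.ph i 0 (.t a) = if lab a = i then rnk lab a + 1 else 0 := by
  simp [ph, Y.t0, phv]
theorem ph_tS (i) (a : Fin N) : Y.ph i S (.t a) = 0 := by simp [ph, Y.tS, phv]
theorem ph_u0 (i) (a : Fin N) : Y.ph i 0 (.u a) = 0 := by simp [ph, Y.u0, phv]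
theorem ph_uS (i) (a : Fin N) : Y.ph i S (.u a) = if lab a = i then lln lab (lab a) - rnk lab a else 0 := by
  have := rnk_lt lab a
  simp [ph, Y.uS, phv]
  split_ifs <;> omega

/-- last time that `t a` is outside the ordering gadget -/
def lT (a : Fin N) : ℕ := Nat.findGreatest (fun s => Y.od s (.t a) = 0) S

theorem od_lT (a : Fin N) : Y.od (Y.lT a) (.t a) = 0 :=
  Nat.findGreatest_spec (P := fun s => Y.od s (.t a) = 0) (Nat.zero_le S) (Y.od_t0 a)
theorem lT_lt (a : Fin N) : Y.lT a < S := by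
  have h : Y.lT a ≤ S := Nat.findGreatest_le S
  rcases h.lt_or_eq with h | h
  · exact h
  · have := Y.od_lT a
    rw [h, od_tS] at this; omega
theorem od_pos_of_lT {a : Fin N} {s : ℕ} (h : Y.lT a < s) (hs : s ≤ S) : 0 < Y.od s (.t a) := by
  have := Nat.findGreatest_is_greatest (P := fun s => Y.od s (.t a) = 0) h hs
  omega

theorem lT_unique {a : Fin N} {s : ℕ} (hs : s ≤ S) (h : Y.od s (.t a) = 0)
    (h' : ∀ s', s < s' → s' ≤ S → 0 < Y.od s' (.t a)) : s = Y.lT a := by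
  have h1 : s ≤ Y.lT a := Nat.le_findGreatest hs h
  rcases h1.lt_or_eq with h1 | h1
  · have := h' _ h1 (Y.lT_lt a).le
    rw [od_lT] at this; omega
  · exact h1

theorem le_lT {a : Fin N} {s : ℕ} (hs : s ≤ S) (h : Y.od s (.t a) = 0) : s ≤ Y.lT a :=
  Nat.le_findGreatest hs h

/-- first time that `u c` is outside the ordering gadget -/
def eO (c : Fin N) : ℕ := S - Y.rev.lT c.rev

theorem od_eO (a : Fin N) : Y.od (Y.eO a) (.u a) = 0 := by
  have := Y.rev.od_lT a.rev
  simpa [rvT, eO] using this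
theorem eO_le (a : Fin N) : Y.eO a ≤ S := by unfold eO; omega
theorem eO_pos (a : Fin N) : 0 < Y.eO a := by
  have := Y.rev.lT_lt a.rev
  unfold eO; omega
theorem od_pos_of_eO {a : Fin N} {s : ℕ} (h : s < Y.eO a) : 0 < Y.od s (.u a) := by
  have h2 := Y.eO_le a
  have := Y.rev.od_pos_of_lT (a := a.rev) (s := S - s) (by unfold eO at h; omega) (by omega)
  simp [rvT] at this
  rwa [Nat.sub_sub_self (by omega)] at this
theorem eO_le_of {a : Fin N} {s : ℕ} (h : Y.od s (.u a) = 0) : Y.eO a ≤ s := by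
  by_contra h'
  have := Y.od_pos_of_eO (a := a) (s := s) (by omega)
  omega

theorem rev_lT (a : Fin N) : Y.rev.lT a = S - Y.eO a.rev := by
  have := Y.rev.lT_lt a
  unfold eO; rw [Fin.rev_rev]; omega
theorem rev_eO (a : Fin N) : Y.rev.eO a = S - Y.lT a.rev := by
  have h0 := Y.lT_lt a.rev
  apply le_antisymm
  · apply Y.rev.eO_le_of
    simp [rvT]
    rw [Nat.sub_sub_self (by omega)]
    exact Y.od_lT _
  · have h2 := Y.rev.od_eO a
    have h3 := Y.rev.eO_le a
    simp [rvT] at h2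
    have := Y.le_lT (by omega) h2
    omega

theorem lT_step (a : Fin N) : Y.reg (Y.lT a) = none ∧ Y.lft (Y.lT a) = .t a := by
  have h := Y.lT_lt a
  have h1 := Y.od_lT a
  have h2 := Y.od_pos_of_lT (a := a) (s := Y.lT a + 1) (by omega) (by omega)
  rcases Y.od_step h (.t a) with ⟨h3, h4, h5⟩ | ⟨h3, h4, h5⟩ | ⟨h3, h4⟩
  · exact ⟨h3, h4⟩
  · omega
  · omega

theorem eO_step (a : Fin N) : Y.reg (Y.eO a - 1) = none ∧ Y.rgt (Y.eO a - 1) = .u a := by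
  have h := Y.eO_pos a
  have h' := Y.eO_le a
  have h1 := Y.od_eO a
  have h2 := Y.od_pos_of_eO (a := a) (s := Y.eO a - 1) (by omega)
  have e : Y.eO a - 1 + 1 = Y.eO a := by omega
  rcases Y.od_step (s := Y.eO a - 1) (by omega) (.u a) with ⟨h3, h4, h5⟩ | ⟨h3, h4, h5⟩ | ⟨h3, h4⟩
  · rw [e] at h5; omega
  · exact ⟨h3, h4⟩
  · rw [e] at h3; omega

theorem lT_inj : Function.Injective Y.lT := by
  intro a b h
  have h1 := (Y.lT_step a).2
  have h2 := (Y.lT_step b).2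
  rw [h, h2] at h1
  simpa using h1.symm

theorem eO_inj : Function.Injective Y.eO := by
  intro a b h
  have h1 := (Y.eO_step a).2
  have h2 := (Y.eO_step b).2
  rw [h, h2] at h1
  simpa using h1.symm

/-- counting pairs by steps -/
theorem pairs_le {ι : Type*} (A : Finset ι) (f g : ι → Tk m N)
    (hfg : ∀ a ∈ A, ∀ b ∈ A, f a = f b → g a = g b → a = b) (P : ℕ → Prop) [DecidablePred P]
    (h : ∀ a ∈ A, ∃ s < S, P s ∧ Y.lft s = f a ∧ Y.rgt s = g a) :
    #A ≤ #{s ∈ range S | P s} := by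
  choose! F h1 h2 h3 h4 using h
  apply Finset.card_le_card_of_injOn F
  · intro a ha; simp; exact ⟨h1 a ha, h2 a ha⟩
  · intro a ha b hb hab
    apply hfg a ha b hb
    · rw [← h3 a ha, ← h3 b hb, hab]
    · rw [← h4 a ha, ← h4 b hb, hab]

theorem step_inj {s s' : ℕ} (hs : s < S) (hs' : s' < S) (h1 : Y.lft s = Y.lft s') (h2 : Y.rgt s = Y.rgt s') :
    s = s' := by
  by_contra h
  exact Y.mini s s' hs hs' h (Or.inl ⟨h1, h2⟩)

theorem inv_lT : #{p : Fin N × Fin N | p.1 < p.2 ∧ Y.lT p.2 < Y.lT p.1} ≤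
    #{s ∈ range S | Y.reg s = none ∧ ∃ b, Y.lT b < s ∧ Y.rgt s = .t b} := by
  apply Y.pairs_le _ (fun p => .t p.1) (fun p => .t p.2) ?_ _ ?_
  · rintro ⟨a, b⟩ _ ⟨a', b'⟩ _ h h'; simp_all
  · rintro ⟨a, b⟩ h
    simp at h
    by_contra hc
    push Not at hc
    have := Y.od_pass (x := .t a) (y := .t b) (Y.lT_lt a).le le_rfl (fun s h1 h2 => Y.od_pos_of_lT h1 h2)
      (by rw [od_lT]; exact Y.od_pos_of_lT h.2 (Y.lT_lt a).le)
      (fun s h1 h2 h3 h4 h5 => hc s h2 ⟨h3, b, by omega, h5⟩ h4 h5)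
    rw [od_tS, od_tS] at this
    have := h.1
    rw [Fin.lt_def] at this
    omega

theorem inv_eO : #{p : Fin N × Fin N | p.1 < p.2 ∧ Y.eO p.2 < Y.eO p.1} ≤
    #{s ∈ range S | Y.reg s = none ∧ ∃ b, s < Y.eO b ∧ Y.lft s = .u b} := by
  have h := Y.rev.inv_lT
  have h1 : #{p : Fin N × Fin N | p.1 < p.2 ∧ Y.eO p.2 < Y.eO p.1} =
    #{p : Fin N × Fin N | p.1 < p.2 ∧ Y.rev.lT p.2 < Y.rev.lT p.1} := by
    apply Finset.card_bij (fun p _ => (p.2.rev, p.1.rev))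
    · rintro ⟨a, b⟩ h; simp [rev_lT] at h ⊢; have := Y.eO_le a; exact ⟨h.1, by omega⟩
    · rintro ⟨a, b⟩ _ ⟨a', b'⟩ _; simp; tauto
    · rintro ⟨a, b⟩ h; refine ⟨(b.rev, a.rev), ?_, by simp⟩
      simp [rev_lT] at h ⊢; exact ⟨h.1, by omega⟩
  rw [h1]
  refine le_trans h ?_
  rw [rev_count (S := S) _ (fun s => Y.reg s = none ∧ ∃ b : Fin N, S - 1 - s > S - Y.eO b.rev ∧ Y.lft s = .u b.rev)]
  · apply Finset.card_le_card
    intro s; simp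
    intro h1 h2 b h3 h4
    exact ⟨h1, h2, b.rev, by omega, h4⟩
  · intro s hs
    rw [Y.rev_reg hs]
    simp only [rev_lT, rev_rgt, rvT_eq, rvT_t, gt_iff_lt]
    have : S - 1 - (S - 1 - s) = s := by omega
    rw [this]

end Sys
end UnweightedTS

namespace UnweightedTS
open Finset
open scoped Classical

theorem t_inj {m N : ℕ} : Function.Injective (Tk.t : Fin N → Tk m N) := fun a b h => by simpa using h
theorem u_inj {m N : ℕ} : Function.Injective (Tk.u : Fin N → Tk m N) := fun a b h => by simpa using h

/-- being a `u` token -/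
def IsU {m N : ℕ} (x : Tk m N) : Prop := ∃ c, x = .u c

namespace Sys
variable {m N k S : ℕ} {lab : Fin N → Fin m} (Y : Sys m N k S lab)

theorem ord_full {s : ℕ} (hs : s ≤ S) : #{y | 0 < Y.od s y} = N := by
  conv_rhs => rw [← Finset.card_range N]
  apply Finset.card_bij (fun y _ => Y.od s y - 1)
  · intro y hy; simp at hy ⊢
    have := Y.vld s hs y
    unfold od at *
    revert this hy
    cases Y.pos s y <;> simp [odv, Vld]
  · intro y hy z hz h; simp at hy hz
    exact Y.od_inj hs (by omega) hy
  · intro d hd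
    obtain ⟨x, hx⟩ := Y.srj s hs (.ord d) (by simpa [Vld] using hd)
    have e : Y.od s x = d + 1 := by simp [od, hx, odv]
    exact ⟨x, by simp [e], by simp [e]⟩

/-- unexpected tokens in the ordering gadget at time `lT a` -/
def Oth (a : Fin N) : Finset (Tk m N) := {y | 0 < Y.od (Y.lT a) y ∧ ((∃ o, y = .it o) ∨
  (∃ b, y = .t b ∧ Y.lT a < Y.lT b) ∨ ∃ c, y = .u c ∧ Y.eO c ≤ Y.lT a)}

theorem oth_card (a : Fin N) :
    #{c | Y.eO c ≤ Y.lT a} = #{b | Y.lT b < Y.lT a} + #(Y.Oth a) := by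
  have h1 := Y.ord_full (Y.lT_lt a).le
  have h2 : (univ.filter fun y => 0 < Y.od (Y.lT a) y) =
    (((univ.filter fun b => Y.lT b < Y.lT a).image Tk.t) ∪ ((univ.filter fun c => ¬ Y.eO c ≤ Y.lT a).image Tk.u)) ∪ Y.Oth a := by
    ext y
    simp only [mem_filter, mem_univ, true_and, mem_union, mem_image, Oth]
    constructor
    · intro h
      cases y with
      | it o => right; exact ⟨h, Or.inl ⟨o, rfl⟩⟩
      | t b =>
        rcases lt_trichotomy (Y.lT b) (Y.lT a) with h' | h' | h'
        · left; left; exact ⟨b, h', rfl⟩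
        · rw [Y.lT_inj h', Y.od_lT] at h; omega
        · right; exact ⟨h, Or.inr (Or.inl ⟨b, rfl, h'⟩)⟩
      | u c =>
        by_cases h' : Y.eO c ≤ Y.lT a
        · right; exact ⟨h, Or.inr (Or.inr ⟨c, rfl, h'⟩)⟩
        · left; right; exact ⟨c, h', rfl⟩
    · rintro ((⟨b, h, rfl⟩ | ⟨c, h, rfl⟩) | h)
      · exact Y.od_pos_of_lT h (Y.lT_lt a).le
      · exact Y.od_pos_of_eO (by omega)
      · exact h.1
  rw [h2, Finset.card_union_of_disjoint, Finset.card_union_of_disjoint, Finset.card_image_of_injective _ t_inj,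
    Finset.card_image_of_injective _ u_inj] at h1
  · have h3 := Finset.card_filter_add_card_filter_not (s := (univ : Finset (Fin N))) (fun c => Y.eO c ≤ Y.lT a)
    simp only [Finset.card_univ, Fintype.card_fin] at h3
    omega
  · rw [Finset.disjoint_left]; intro x; simp; rintro b _ rfl; simp
  · rw [Finset.disjoint_left]; intro x; simp [Oth]; rintro (⟨b, h, rfl⟩ | ⟨c, h, rfl⟩) h'
    · refine ⟨by simp, ?_, by simp⟩
      simp; omega
    · refine ⟨by simp, by simp, ?_⟩
      simp; omega

theorem sum_oth : ∑ a, #(Y.Oth a) ≤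
    #{s ∈ range S | Y.reg s = none ∧ ∃ o, Y.rgt s = .it o} +
    #{s ∈ range S | Y.reg s = none ∧ ∃ b, s < Y.lT b ∧ Y.rgt s = .t b} +
    #{s ∈ range S | Y.reg s = none ∧ ∃ c, Y.eO c ≤ s ∧ Y.rgt s = .u c} := by
  rw [← Finset.card_sigma]
  have : #((univ : Finset (Fin N)).sigma Y.Oth) ≤ #{s ∈ range S | Y.reg s = none ∧ ((∃ o, Y.rgt s = .it o) ∨
      (∃ b, s < Y.lT b ∧ Y.rgt s = .t b) ∨ (∃ c, Y.eO c ≤ s ∧ Y.rgt s = .u c))} := by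
    apply Y.pairs_le _ (fun p => .t p.1) (fun p => p.2) ?_ _ ?_
    · rintro ⟨a, b⟩ _ ⟨a', b'⟩ _ h h'; simp_all
    · rintro ⟨a, y⟩ h
      simp only [mem_sigma, mem_univ, true_and, Oth, mem_filter] at h
      by_contra hc
      push Not at hc
      have hlt := Y.lT_lt a
      have key : ∀ q, Y.lT a ≤ q → q ≤ S → Y.od q y = 0 → (∀ s, Y.lT a ≤ s → s < q → Y.rgt s = y →
        ((∃ o, Y.rgt s = .it o) ∨
      (∃ b, s < Y.lT b ∧ Y.rgt s = .t b) ∨ (∃ c, Y.eO c ≤ s ∧ Y.rgt s = .u c))) → False := by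
        intro q hq1 hq2 h0 hh
        have := Y.od_pass (x := .t a) (y := y) hq1 hq2 (fun s h1 h2 => Y.od_pos_of_lT h1 (by omega))
          (by rw [od_lT]; exact h.1)
          (fun s h1 h2 h3 h4 h5 => hc s (by omega) ⟨h3, hh s h1 h2 h5⟩ h4 h5)
        omega
      obtain ⟨h1, ⟨o, rfl⟩ | ⟨b, rfl, h2⟩ | ⟨c, rfl, h2⟩⟩ := h
      · exact key S hlt.le le_rfl (Y.od_iS o) (fun s _ _ h => Or.inl ⟨o, h⟩)
      · exact key (Y.lT b) h2.le (Y.lT_lt b).le (Y.od_lT b) (fun s _ h3 h => Or.inr (Or.inl ⟨b, h3, h⟩))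
      · exact key S hlt.le le_rfl (Y.od_uS c) (fun s h3 _ h => Or.inr (Or.inr ⟨c, by omega, h⟩))
  refine le_trans this ?_
  rw [show (range S).filter (fun s => Y.reg s = none ∧ ((∃ o, Y.rgt s = .it o) ∨
      (∃ b, s < Y.lT b ∧ Y.rgt s = .t b) ∨ (∃ c, Y.eO c ≤ s ∧ Y.rgt s = .u c))) = 
      ((range S).filter (fun s => Y.reg s = none ∧ ∃ o, Y.rgt s = .it o) ∪
       (range S).filter (fun s => Y.reg s = none ∧ ∃ b, s < Y.lT b ∧ Y.rgt s = .t b)) ∪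
       (range S).filter (fun s => Y.reg s = none ∧ ∃ c, Y.eO c ≤ s ∧ Y.rgt s = .u c) by
    ext s; simp only [mem_filter, mem_union]
    generalize (∃ o, Y.rgt s = .it o) = P
    generalize (∃ b, s < Y.lT b ∧ Y.rgt s = .t b) = Q
    generalize (∃ c, Y.eO c ≤ s ∧ Y.rgt s = .u c) = R
    tauto]
  refine le_trans (Finset.card_union_le _ _) ?_
  have := Finset.card_union_le ((range S).filter (fun s => Y.reg s = none ∧ ∃ o, Y.rgt s = .it o)) ((range S).filter (fun s => Y.reg s = none ∧ ∃ b, s < Y.lT b ∧ Y.rgt s = .t b))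
  omega

theorem u_back : #{s ∈ range S | Y.reg s = none ∧ ∃ c, Y.eO c ≤ s ∧ Y.rgt s = .u c} =
    #{s ∈ range S | Y.reg s = none ∧ ∃ c, Y.eO c ≤ s ∧ Y.lft s = .u c} := by
  have e1 : ∀ tok : ℕ → Tk m N, #{s ∈ range S | Y.reg s = none ∧ ∃ c, Y.eO c ≤ s ∧ tok s = .u c} =
    ∑ c, #{s ∈ range S | (Y.reg s = none ∧ Y.eO c ≤ s) ∧ tok s = .u c} := by
    intro tok
    rw [← count_fiber (range S) (fun c s => Y.reg s = none ∧ Y.eO c ≤ s) tok Tk.u u_inj]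
    congr 1; ext s; simp only [mem_filter]
    refine and_congr_right fun _ => ?_
    constructor
    · rintro ⟨h, c, h1, h2⟩; exact ⟨c, ⟨h, h1⟩, h2⟩
    · rintro ⟨c, ⟨h, h1⟩, h2⟩; exact ⟨h, c, h1, h2⟩
  rw [e1, e1]
  apply Finset.sum_congr rfl
  intro c _
  have h := Y.tele_od (.u c) (Y.eO_le c) le_rfl
  rw [Y.od_uS, Y.od_eO, zero_add, zero_add] at h
  have e2 : ∀ tok : ℕ → Tk m N, ((range S).filter fun s => (Y.reg s = none ∧ Y.eO c ≤ s) ∧ tok s = .u c) =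
    (Ico (Y.eO c) S).filter fun s => Y.reg s = none ∧ tok s = .u c := by
    intro tok; ext s; simp only [mem_filter, mem_range, mem_Ico]; tauto
  rw [e2, e2]
  exact h

theorem ord_cost : #{p : Fin N × Fin N | p.1 < p.2 ∧ Y.lT p.2 < Y.lT p.1} +
    #{p : Fin N × Fin N | p.1 < p.2 ∧ Y.eO p.2 < Y.eO p.1} + ∑ a, #(Y.Oth a) ≤
    #{s ∈ range S | Y.reg s = none ∧ IsU (Y.lft s)} + #{s ∈ range S | Y.reg s = none ∧ ¬ IsU (Y.rgt s)} := by
  have h1 := Y.inv_lT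
  have h2 := Y.inv_eO
  have h3 := Y.sum_oth
  have h4 := Y.u_back
  have h5 : #{s ∈ range S | Y.reg s = none ∧ ∃ c, Y.eO c ≤ s ∧ Y.lft s = .u c} +
     #{s ∈ range S | Y.reg s = none ∧ ∃ b, s < Y.eO b ∧ Y.lft s = .u b} ≤
     #{s ∈ range S | Y.reg s = none ∧ IsU (Y.lft s)} := by
    rw [← Finset.card_union_of_disjoint]
    · apply Finset.card_le_card
      intro s; simp only [mem_filter, mem_union]; simp only [IsU]
      rintro (⟨h, h', c, h3, h4⟩ | ⟨h, h', c, h3, h4⟩) <;> exact ⟨h, h', c, h4⟩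
    · rw [Finset.disjoint_left]; intro s; simp only [mem_filter]
      rintro ⟨_, _, c, h1, h2⟩ ⟨_, _, d, h3, h4⟩
      rw [h2] at h4; cases h4; omega
  have h6 : #{s ∈ range S | Y.reg s = none ∧ ∃ o, Y.rgt s = .it o} +
    (#{s ∈ range S | Y.reg s = none ∧ ∃ b, s < Y.lT b ∧ Y.rgt s = .t b} +
     #{s ∈ range S | Y.reg s = none ∧ ∃ b, Y.lT b < s ∧ Y.rgt s = .t b}) ≤ 
     #{s ∈ range S | Y.reg s = none ∧ ¬ IsU (Y.rgt s)} := by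
    rw [← Finset.card_union_of_disjoint, ← Finset.card_union_of_disjoint]
    · apply Finset.card_le_card
      intro s; simp only [mem_filter, mem_union]; simp only [IsU]
      rintro (⟨h, h', c, h3⟩ | ⟨h, h', c, h3, h4⟩ | ⟨h, h', c, h3, h4⟩)
      · exact ⟨h, h', by simp [h3]⟩
      · exact ⟨h, h', by simp [h4]⟩
      · exact ⟨h, h', by simp [h4]⟩
    · rw [Finset.disjoint_left]; intro s; simp only [mem_filter, mem_union]
      rintro ⟨_, _, c, h1⟩ (⟨_, _, d, h3, h4⟩ | ⟨_, _, d, h3, h4⟩)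
      · rw [h1] at h4; cases h4
      · rw [h1] at h4; cases h4
    · rw [Finset.disjoint_left]; intro s; simp only [mem_filter]
      rintro ⟨_, _, c, h1, h2⟩ ⟨_, _, d, h3, h4⟩
      rw [h2] at h4; cases h4; omega
  omega

/-- `x` is a `t` token of the region of step `s` -/
def OT (s : ℕ) (x : Tk m N) : Prop := ∃ a, Y.reg s = some (lab a) ∧ x = .t a
/-- `x` is a `u` token of the region of step `s` -/
def OU (s : ℕ) (x : Tk m N) : Prop := ∃ a, Y.reg s = some (lab a) ∧ x = .u a

theorem LT_eq : #{s ∈ range S | Y.OT s (Y.lft s)} = ∑ a, rnk lab a + N + #{s ∈ range S | Y.OT s (Y.rgt s)} := by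
  have e1 : ∀ tok : ℕ → Tk m N, #{s ∈ range S | Y.OT s (tok s)} =
    ∑ a, #{s ∈ range S | Y.reg s = some (lab a) ∧ tok s = .t a} := by
    intro tok
    rw [← count_fiber (range S) (fun a s => Y.reg s = some (lab a)) tok Tk.t t_inj]
    congr 1; ext s; simp only [mem_filter]; simp only [OT]
  rw [e1, e1]
  have : ∑ a, rnk lab a + N = ∑ a : Fin N, (rnk lab a + 1) := by
    simp [Finset.sum_add_distrib]
  rw [this, ← Finset.sum_add_distrib]
  apply Finset.sum_congr rfl
  intro a _
  have := Y.tele_ph (lab a) (.t a) (Nat.zero_le S) le_rfl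
  rw [Y.ph_t0, Y.ph_tS, if_pos rfl, zero_add] at this
  rw [Finset.range_eq_Ico]
  exact this

theorem foreign_u : #{s ∈ range S | Y.reg s ≠ none ∧ IsU (Y.lft s) ∧ ¬ Y.OU s (Y.lft s)} =
    #{s ∈ range S | Y.reg s ≠ none ∧ IsU (Y.rgt s) ∧ ¬ Y.OU s (Y.rgt s)} := by
  have e1 : ∀ tok : ℕ → Tk m N, #{s ∈ range S | Y.reg s ≠ none ∧ IsU (tok s) ∧ ¬ Y.OU s (tok s)} =
    ∑ p : Fin m × Fin N, if p.1 = lab p.2 then 0 else #{s ∈ range S | Y.reg s = some p.1 ∧ tok s = .u p.2} := by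
    intro tok
    have : ((range S).filter fun s => Y.reg s ≠ none ∧ IsU (tok s) ∧ ¬ Y.OU s (tok s)) = 
      (range S).filter fun s => ∃ p : Fin m × Fin N, (p.1 ≠ lab p.2) ∧ (Y.reg s, tok s) = (some p.1, Tk.u p.2) := by
      ext s; simp only [mem_filter]; simp only [IsU, OU]
      refine and_congr_right fun _ => ?_
      constructor
      · rintro ⟨h, ⟨c, hc⟩, h'⟩
        obtain ⟨i, hi⟩ := Option.ne_none_iff_exists'.1 h
        refine ⟨(i, c), ?_, by simp [hi, hc]⟩
        intro hh; exact h' ⟨c, by rw [hi, ← hh], hc⟩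
      · rintro ⟨⟨i, c⟩, h1, h2⟩
        simp at h1 h2
        refine ⟨by simp [h2.1], ⟨c, h2.2⟩, ?_⟩
        rintro ⟨a, h3, h4⟩
        rw [h2.2] at h4; cases h4
        rw [h2.1] at h3; simp at h3; exact h1 h3
    rw [this, count_fiber (range S) (fun (p : Fin m × Fin N) s => p.1 ≠ lab p.2) (fun s => (Y.reg s, tok s)) (fun p => (some p.1, Tk.u p.2))]
    · apply Finset.sum_congr rfl
      rintro ⟨i, c⟩ _
      simp only
      split_ifs with h
      · rw [Finset.card_eq_zero, Finset.filter_eq_empty_iff]; simp [h]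
      · congr 1; ext s; simp [h]
    · rintro ⟨i, c⟩ ⟨i', c'⟩ h; simpa using h
  rw [e1, e1]
  apply Finset.sum_congr rfl
  rintro ⟨i, c⟩ _
  simp only
  split_ifs with h
  · rfl
  · have := Y.tele_ph i (.u c) (Nat.zero_le S) le_rfl
    rw [Y.ph_u0, Y.ph_uS, if_neg (fun h' => h h'.symm), zero_add, zero_add] at this
    rw [Finset.range_eq_Ico]
    exact this

theorem slot_cost : #{s ∈ range S | Y.reg s ≠ none ∧ IsU (Y.lft s)} + #{s ∈ range S | Y.reg s ≠ none ∧ ¬ IsU (Y.rgt s)} +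
   #{s ∈ range S | Y.OT s (Y.lft s) ∧ Y.OU s (Y.rgt s)} = 
   #{s ∈ range S | Y.OU s (Y.lft s)} + 
   #{s ∈ range S | Y.reg s ≠ none ∧ ¬ Y.OT s (Y.lft s) ∧ ¬ Y.OU s (Y.rgt s)} + 
   #{s ∈ range S | Y.OT s (Y.lft s)} := by
  have hf := Y.foreign_u
  have hOU : ∀ s x, Y.OU s x → Y.reg s ≠ none ∧ IsU x := by
    rintro s x ⟨a, h, rfl⟩; exact ⟨by simp [h], a, rfl⟩
  have hOT : ∀ s x, Y.OT s x → Y.reg s ≠ none := by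
    rintro s x ⟨a, h, rfl⟩; simp [h]
  have split : ∀ (P Q : ℕ → Prop) [DecidablePred P] [DecidablePred Q], #{s ∈ range S | P s} = #{s ∈ range S | P s ∧ Q s} + #{s ∈ range S | P s ∧ ¬ Q s} := by
    intro P Q _ _
    rw [← Finset.card_filter_add_card_filter_not (s := (range S).filter P) Q, Finset.filter_filter, Finset.filter_filter]
  have cong : ∀ (P Q : ℕ → Prop) [DecidablePred P] [DecidablePred Q], (∀ s, P s ↔ Q s) → #{s ∈ range S | P s} = #{s ∈ range S | Q s} := by
    intro P Q _ _ h; congr 1; ext s; simp [h]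
  have a1 := split (fun s => Y.reg s ≠ none ∧ IsU (Y.lft s)) (fun s => Y.OU s (Y.lft s))
  have a1' := cong (fun s => (Y.reg s ≠ none ∧ IsU (Y.lft s)) ∧ Y.OU s (Y.lft s)) (fun s => Y.OU s (Y.lft s))
    (fun s => ⟨fun h => h.2, fun h => ⟨hOU _ _ h, h⟩⟩)
  have a1'' := cong (fun s => (Y.reg s ≠ none ∧ IsU (Y.lft s)) ∧ ¬ Y.OU s (Y.lft s)) 
    (fun s => Y.reg s ≠ none ∧ IsU (Y.lft s) ∧ ¬ Y.OU s (Y.lft s)) (fun s => by tauto)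
  -- steps without own u moving right
  have b1 := split (fun s => Y.reg s ≠ none ∧ ¬ Y.OU s (Y.rgt s)) (fun s => IsU (Y.rgt s))
  have b2 := cong (fun s => (Y.reg s ≠ none ∧ ¬ Y.OU s (Y.rgt s)) ∧ IsU (Y.rgt s)) 
    (fun s => Y.reg s ≠ none ∧ IsU (Y.rgt s) ∧ ¬ Y.OU s (Y.rgt s)) (fun s => by tauto)
  have b3 := cong (fun s => (Y.reg s ≠ none ∧ ¬ Y.OU s (Y.rgt s)) ∧ ¬ IsU (Y.rgt s)) 
    (fun s => Y.reg s ≠ none ∧ ¬ IsU (Y.rgt s)) (fun s => by have := hOU s (Y.rgt s); tauto)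
  have c1 := split (fun s => Y.reg s ≠ none ∧ ¬ Y.OU s (Y.rgt s)) (fun s => Y.OT s (Y.lft s))
  have c2 := cong (fun s => (Y.reg s ≠ none ∧ ¬ Y.OU s (Y.rgt s)) ∧ ¬ Y.OT s (Y.lft s)) 
    (fun s => Y.reg s ≠ none ∧ ¬ Y.OT s (Y.lft s) ∧ ¬ Y.OU s (Y.rgt s)) (fun s => by tauto)
  have c3 := cong (fun s => (Y.reg s ≠ none ∧ ¬ Y.OU s (Y.rgt s)) ∧ Y.OT s (Y.lft s)) 
    (fun s => Y.OT s (Y.lft s) ∧ ¬ Y.OU s (Y.rgt s)) (fun s => by have := hOT s (Y.lft s); tauto)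
  have d1 := split (fun s => Y.OT s (Y.lft s)) (fun s => Y.OU s (Y.rgt s))
  omega

/-- A pair that should be exchanged in its slot but is not. -/
def Mis (a c : Fin N) : Prop := lab c = lab a ∧ Y.eO c ≤ Y.lT a ∧
  ¬ ∃ s < S, Y.reg s = some (lab a) ∧ Y.lft s = .t a ∧ Y.rgt s = .u c

/-- total defect -/
noncomputable def defect : ℕ := #{s ∈ range S | Y.reg s ≠ none ∧ ¬ Y.OT s (Y.lft s) ∧ ¬ Y.OU s (Y.rgt s)} + 
  #{s ∈ range S | Y.OT s (Y.rgt s)} + #{s ∈ range S | Y.OU s (Y.lft s)} +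
  #{p : Fin N × Fin N | Y.Mis p.1 p.2}

theorem TU_le : #{s ∈ range S | Y.OT s (Y.lft s) ∧ Y.OU s (Y.rgt s)} + #{p : Fin N × Fin N | Y.Mis p.1 p.2} ≤
    #{p : Fin N × Fin N | lab p.2 = lab p.1 ∧ Y.eO p.2 ≤ Y.lT p.1} := by
  have h1 : #{s ∈ range S | Y.OT s (Y.lft s) ∧ Y.OU s (Y.rgt s)} ≤ 
     #{p : Fin N × Fin N | (lab p.2 = lab p.1 ∧ Y.eO p.2 ≤ Y.lT p.1) ∧ 
       ∃ s < S, Y.reg s = some (lab p.1) ∧ Y.lft s = .t p.1 ∧ Y.rgt s = .u p.2} := by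
    rw [← Finset.card_image_of_injective (univ.filter fun p : Fin N × Fin N => (lab p.2 = lab p.1 ∧ Y.eO p.2 ≤ Y.lT p.1) ∧ 
       ∃ s < S, Y.reg s = some (lab p.1) ∧ Y.lft s = .t p.1 ∧ Y.rgt s = .u p.2) (f := fun p => ((Tk.t p.1 : Tk m N), (Tk.u p.2 : Tk m N)))
       (by rintro ⟨a, b⟩ ⟨c, d⟩ h; simpa using h)]
    apply Finset.card_le_card_of_injOn (fun s => (Y.lft s, Y.rgt s))
    · intro s hs
      simp only [coe_filter, mem_range, Set.mem_ofPred_eq] at hs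
      obtain ⟨hs, ⟨a, h1, h2⟩, ⟨c, h3, h4⟩⟩ := hs
      have hl : lab c = lab a := by rw [h1] at h3; simpa using h3.symm
      simp only [coe_image, Set.mem_image, coe_filter, mem_univ, true_and, Set.mem_ofPred_eq]
      refine ⟨(a, c), ⟨⟨hl, ?_⟩, s, hs, h1, h2, h4⟩, by simp [h2, h4]⟩
      have := Y.ph_edge _ hs h1
      have h5 := Y.le_lT (a := a) hs.le (by rw [← h2]; exact this.2.2.2.1)
      have h6 := Y.eO_le_of (a := c) (s := s) (by rw [← h4]; exact this.2.2.2.2.1)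
      simp only; omega
    · intro s hs s' hs' h
      simp only [coe_filter, mem_range, Set.mem_ofPred_eq] at hs hs'
      simp only [Prod.mk.injEq] at h
      exact Y.step_inj hs.1 hs'.1 h.1 h.2
  have h2 := Finset.card_filter_add_card_filter_not (s := univ.filter fun p : Fin N × Fin N => lab p.2 = lab p.1 ∧ Y.eO p.2 ≤ Y.lT p.1)
    (fun p => ∃ s < S, Y.reg s = some (lab p.1) ∧ Y.lft s = .t p.1 ∧ Y.rgt s = .u p.2)
  rw [Finset.filter_filter, Finset.filter_filter] at h2
  have h3 : #{p : Fin N × Fin N | Y.Mis p.1 p.2} = #{p : Fin N × Fin N | (lab p.2 = lab p.1 ∧ Y.eO p.2 ≤ Y.lT p.1) ∧ 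
       ¬ ∃ s < S, Y.reg s = some (lab p.1) ∧ Y.lft s = .t p.1 ∧ Y.rgt s = .u p.2} := by
    congr 1; ext p; simp only [mem_filter]; simp only [Mis]; tauto
  omega

theorem own_le (a : Fin N) : #{c | lab c = lab a ∧ Y.eO c ≤ Y.lT a} ≤ 
    #{c | lab c = lab a ∧ #{c' | Y.eO c' < Y.eO c} < #{b | Y.lT b < Y.lT a}} + #(Y.Oth a) := by
  have h0 := Y.oth_card a
  have hi := rankf_inj Y.eO Y.eO_inj
  set r := #{b | Y.lT b < Y.lT a}
  have : #{c | lab c = lab a ∧ Y.eO c ≤ Y.lT a} ≤ #{c | lab c = lab a ∧ #{c' | Y.eO c' < Y.eO c} < r} + 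
     #{c | r ≤ #{c' | Y.eO c' < Y.eO c} ∧ #{c' | Y.eO c' < Y.eO c} < r + #(Y.Oth a)} := by
    refine le_trans (Finset.card_le_card ?_) (Finset.card_union_le _ _)
    intro c; simp only [mem_filter, mem_univ, true_and, mem_union]
    rintro ⟨h1, h2⟩
    by_cases h3 : #{c' | Y.eO c' < Y.eO c} < r
    · left; exact ⟨h1, h3⟩
    · right
      refine ⟨by omega, ?_⟩
      rw [← h0]
      apply Finset.card_lt_card
      constructor
      · intro x; simp; omega
      · intro h'
        have : c ∈ (univ.filter fun x => Y.eO x < Y.eO c) := h' (by simpa using h2)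
        simp at this
  refine le_trans this ?_
  have h5 : #{c | r ≤ #{c' | Y.eO c' < Y.eO c} ∧ #{c' | Y.eO c' < Y.eO c} < r + #(Y.Oth a)} ≤ #(Ico r (r + #(Y.Oth a))) := by
    apply Finset.card_le_card_of_injOn (fun c => #{c' | Y.eO c' < Y.eO c})
    · intro c hc; simpa using hc
    · exact hi.injOn
  rw [Nat.card_Ico] at h5
  omega

/-- the main accounting inequality -/
theorem accounting {n : ℕ} (hC : #{s ∈ range S | IsU (Y.lft s)} + #{s ∈ range S | ¬ IsU (Y.rgt s)} ≤ N + n) :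
    Y.defect + ∑ a, #{c : Fin N | lab c = lab a ∧ #{b | Y.lT b < Y.lT a} ≤ c.val ∧ c < a} ≤ n := by
  have h1 := Y.ord_cost
  have h2 := Y.slot_cost
  have h3 := Y.LT_eq
  have h4 := Y.TU_le
  have h5 : #{p : Fin N × Fin N | lab p.2 = lab p.1 ∧ Y.eO p.2 ≤ Y.lT p.1} ≤ 
     ∑ a, #{c | lab c = lab a ∧ #{c' | Y.eO c' < Y.eO c} < #{b | Y.lT b < Y.lT a}} + ∑ a, #(Y.Oth a) := by
    have : #{p : Fin N × Fin N | lab p.2 = lab p.1 ∧ Y.eO p.2 ≤ Y.lT p.1} = ∑ a, #{c | lab c = lab a ∧ Y.eO c ≤ Y.lT a} := by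
      simp only [Finset.card_filter, ← Finset.univ_product_univ, Finset.sum_product]
    rw [this, ← Finset.sum_add_distrib]
    exact Finset.sum_le_sum fun a _ => Y.own_le a
  have h6 := comb_main lab Y.lT Y.eO Y.lT_inj Y.eO_inj
  have split : ∀ (P Q : ℕ → Prop) [DecidablePred P] [DecidablePred Q], #{s ∈ range S | P s} = #{s ∈ range S | Q s ∧ P s} + #{s ∈ range S | ¬ Q s ∧ P s} := by
    intro P Q _ _
    rw [← Finset.card_filter_add_card_filter_not (s := (range S).filter P) Q, Finset.filter_filter, Finset.filter_filter]
    congr 2 <;> (ext s; simp only [mem_filter]; tauto)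
  have s1 := split (fun s => IsU (Y.lft s)) (fun s => Y.reg s = none)
  have s2 := split (fun s => ¬ IsU (Y.rgt s)) (fun s => Y.reg s = none)
  have s3 : #{s ∈ range S | ¬ Y.reg s = none ∧ IsU (Y.lft s)} = #{s ∈ range S | Y.reg s ≠ none ∧ IsU (Y.lft s)} := by
    congr 1
  have s4 : #{s ∈ range S | ¬ Y.reg s = none ∧ ¬ IsU (Y.rgt s)} = #{s ∈ range S | Y.reg s ≠ none ∧ ¬ IsU (Y.rgt s)} := by
    congr 1
  unfold defect
  omega

end Sys
end UnweightedTS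

namespace UnweightedTS
open Finset
open scoped Classical

namespace Sys
variable {m N k S : ℕ} {lab : Fin N → Fin m} (Y : Sys m N k S lab)

theorem rev_OT {s : ℕ} (hs : s < S) (x : Tk m N) : Y.rev.OT s x ↔ Y.OU (S - 1 - s) (rvT x) := by
  unfold OT OU
  rw [Y.rev_reg hs]
  constructor
  · rintro ⟨a, h1, rfl⟩; exact ⟨a.rev, h1, rfl⟩
  · rintro ⟨a, h1, h2⟩; refine ⟨a.rev, by simpa using h1, ?_⟩; rw [rvT_eq] at h2; exact h2

theorem rev_OU {s : ℕ} (hs : s < S) (x : Tk m N) : Y.rev.OU s x ↔ Y.OT (S - 1 - s) (rvT x) := by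
  unfold OT OU
  rw [Y.rev_reg hs]
  constructor
  · rintro ⟨a, h1, rfl⟩; exact ⟨a.rev, h1, rfl⟩
  · rintro ⟨a, h1, h2⟩; refine ⟨a.rev, by simpa using h1, ?_⟩; rw [rvT_eq] at h2; exact h2

theorem rev_Mis (a c : Fin N) : Y.rev.Mis a c ↔ Y.Mis c.rev a.rev := by
  unfold Mis
  rw [rev_lT, rev_eO]
  have h1 := Y.lT_lt c.rev
  have h2 := Y.eO_le a.rev
  have e : (∃ s < S, Y.rev.reg s = some (lab a.rev) ∧ Y.rev.lft s = .t a ∧ Y.rev.rgt s = .u c) ↔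
     (∃ s < S, Y.reg s = some (lab a.rev) ∧ Y.lft s = .t c.rev ∧ Y.rgt s = .u a.rev) := by
    constructor
    · rintro ⟨s, hs, h1, h2, h3⟩
      rw [Y.rev_reg hs] at h1
      simp only [rev_lft, rev_rgt, rvT_eq, rvT_t, rvT_u] at h2 h3
      exact ⟨S - 1 - s, by omega, h1, h3, h2⟩
    · rintro ⟨s, hs, h1, h2, h3⟩
      refine ⟨S - 1 - s, by omega, ?_, ?_, ?_⟩
      · rw [Y.rev_reg (by omega)]
        rw [show S - 1 - (S - 1 - s) = s by omega]; exact h1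
      · simp only [rev_lft, rvT_eq, rvT_t]
        rw [show S - 1 - (S - 1 - s) = s by omega]; exact h3
      · simp only [rev_rgt, rvT_eq, rvT_u]
        rw [show S - 1 - (S - 1 - s) = s by omega]; exact h2
  rw [e]
  constructor
  · rintro ⟨h3, h4, h5⟩
    refine ⟨h3.symm, by omega, ?_⟩
    have h3' : lab c.rev = lab a.rev := h3
    rw [h3']; exact h5
  · rintro ⟨h3, h4, h5⟩
    refine ⟨h3.symm, by omega, ?_⟩
    have h3' : lab a.rev = lab c.rev := h3
    rw [h3']; exact h5

theorem rev_defect : Y.rev.defect = Y.defect := by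
  unfold defect
  rw [rev_count (S := S) _ (fun s => Y.reg s ≠ none ∧ ¬ Y.OT s (Y.lft s) ∧ ¬ Y.OU s (Y.rgt s)),
    rev_count (S := S) (fun s => Y.rev.OT s (Y.rev.rgt s)) (fun s => Y.OU s (Y.lft s)),
    rev_count (S := S) (fun s => Y.rev.OU s (Y.rev.lft s)) (fun s => Y.OT s (Y.rgt s))]
  · have : #{p : Fin N × Fin N | Y.rev.Mis p.1 p.2} = #{p : Fin N × Fin N | Y.Mis p.1 p.2} := by
      apply Finset.card_bij (fun p _ => (p.2.rev, p.1.rev))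
      · rintro ⟨a, b⟩ h
        simp only [mem_filter, mem_univ, true_and] at h ⊢
        rwa [rev_Mis] at h
      · rintro ⟨a, b⟩ _ ⟨a', b'⟩ _; simp; tauto
      · rintro ⟨a, b⟩ h; refine ⟨(b.rev, a.rev), ?_, by simp⟩
        simp only [mem_filter, mem_univ, true_and] at h ⊢
        rw [rev_Mis]; simpa using h
    omega
  · intro s hs; rw [Y.rev_OU hs]; simp
  · intro s hs; rw [Y.rev_OT hs]; simp
  · intro s hs; rw [Y.rev_OU hs, Y.rev_OT hs, Y.rev_reg hs]; simp; tauto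

/-- a system with small defect -/
structure Gd (n M : ℕ) : Prop where
  dl : Y.defect ≤ n
  hM : (m + 1) * (2 * n + 2) ≤ M

variable {Y} {n M : ℕ} 
theorem Gd.rev (G : Y.Gd n M) : Y.rev.Gd n M := ⟨by rw [rev_defect]; exact G.dl, G.hM⟩

theorem Gd.hM1 (G : Y.Gd n M) : m * (2 * n + 1) + 2 * n + 2 ≤ M := by
  have := G.hM
  nlinarith

theorem Gd.NN (G : Y.Gd n M) : #{s ∈ range S | Y.reg s ≠ none ∧ ¬ Y.OT s (Y.lft s) ∧ ¬ Y.OU s (Y.rgt s)} ≤ n := by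
  have := G.dl; unfold defect at this; omega
theorem Gd.RT (G : Y.Gd n M) : #{s ∈ range S | Y.OT s (Y.rgt s)} ≤ n := by
  have := G.dl; unfold defect at this; omega
theorem Gd.LU (G : Y.Gd n M) : #{s ∈ range S | Y.OU s (Y.lft s)} ≤ n := by
  have := G.dl; unfold defect at this; omega
theorem Gd.mis (G : Y.Gd n M) : #{p : Fin N × Fin N | Y.Mis p.1 p.2} ≤ n := by
  have := G.dl; unfold defect at this; omega
theorem Gd.mis1 (G : Y.Gd n M) (a : Fin N) (P : Fin N → Prop) [DecidablePred P] (h : ∀ c, P c → Y.Mis a c) : 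
    #{c | P c} ≤ n := by
  refine le_trans ?_ G.mis
  apply Finset.card_le_card_of_injOn (fun c => (a, c))
  · intro c hc; simp at hc ⊢; exact h c hc
  · intro c _ d _ h; simpa using h
theorem Gd.mis2 (G : Y.Gd n M) (a : Fin N) (P : Fin N → Prop) [DecidablePred P] (h : ∀ c, P c → Y.Mis c a) : 
    #{c | P c} ≤ n := by
  refine le_trans ?_ G.mis
  apply Finset.card_le_card_of_injOn (fun c => (c, a))
  · intro c hc; simp at hc ⊢; exact h c hc
  · intro c _ d _ h; simpa using h

variable (Y)
/-- number of `u` tokens of label `i` having left the ordering gadget -/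
noncomputable def al (i : Fin m) (τ : ℕ) : ℕ := #{c | lab c = i ∧ Y.eO c ≤ τ}
/-- number of `t` tokens of label `i` finally in the ordering gadget -/
noncomputable def be (i : Fin m) (τ : ℕ) : ℕ := #{c | lab c = i ∧ Y.lT c < τ}

variable {Y}
theorem Gd.C1 (G : Y.Gd n M) (a : Fin N) : #{c | lab c = lab a ∧ Y.eO c ≤ Y.lT a} ≤ rnk lab a + 1 + 2 * n := by
  have h1 : #{c | lab c = lab a ∧ Y.eO c ≤ Y.lT a} ≤ #{c | Y.Mis a c} + 
     #{c | lab c = lab a ∧ ∃ s < S, Y.reg s = some (lab a) ∧ Y.lft s = .t a ∧ Y.rgt s = .u c} := by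
    refine le_trans (Finset.card_le_card ?_) (Finset.card_union_le _ _)
    intro c; simp only [mem_filter, mem_union, mem_univ, true_and]
    rintro ⟨h1, h2⟩
    by_cases h3 : ∃ s < S, Y.reg s = some (lab a) ∧ Y.lft s = .t a ∧ Y.rgt s = .u c
    · right; exact ⟨h1, h3⟩
    · left; exact ⟨h1, h2, h3⟩
  have h2 := G.mis1 a (Y.Mis a) (fun _ h => h)
  have h3 : #{c | lab c = lab a ∧ ∃ s < S, Y.reg s = some (lab a) ∧ Y.lft s = .t a ∧ Y.rgt s = .u c} ≤ 
     #{s ∈ range S | Y.reg s = some (lab a) ∧ Y.lft s = .t a} := by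
    apply Y.pairs_le _ (fun p => .t a) (fun p => .u p) ?_ _ ?_
    · rintro b _ b' _ h h'; simp_all
    · intro c hc
      simp only [mem_filter, mem_univ, true_and] at hc
      obtain ⟨h1, s, hs, h2, h3, h4⟩ := hc
      exact ⟨s, hs, ⟨h2, h3⟩, h3, h4⟩
  have h4 := Y.tele_ph (lab a) (.t a) (Nat.zero_le S) le_rfl
  rw [Y.ph_t0, Y.ph_tS, if_pos rfl, zero_add, ← Finset.range_eq_Ico] at h4
  have h5 : #{s ∈ range S | Y.reg s = some (lab a) ∧ Y.rgt s = .t a} ≤ n := by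
    refine le_trans (Finset.card_le_card ?_) G.RT
    intro s; simp only [mem_filter]; rintro ⟨h1, h2, h3⟩
    exact ⟨h1, a, h2, h3⟩
  omega

theorem be_le (i : Fin m) (τ : ℕ) : Y.be i τ ≤ lln lab i := by
  apply Finset.card_le_card; intro c; simp; tauto
theorem al_le (i : Fin m) (τ : ℕ) : Y.al i τ ≤ lln lab i := by
  apply Finset.card_le_card; intro c; simp; tauto
theorem al_mono (i : Fin m) {τ τ' : ℕ} (h : τ ≤ τ') : Y.al i τ ≤ Y.al i τ' := by
  apply Finset.card_le_card; intro c; simp; intro h1 h2; exact ⟨h1, by omega⟩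
theorem be_mono (i : Fin m) {τ τ' : ℕ} (h : τ ≤ τ') : Y.be i τ ≤ Y.be i τ' := by
  apply Finset.card_le_card; intro c; simp; intro h1 h2; exact ⟨h1, by omega⟩

theorem Gd.C2 (G : Y.Gd n M) (i : Fin m) (τ : ℕ) : Y.al i τ ≤ Y.be i τ + (2 * n + 1) := by
  by_cases h : ∃ a, lab a = i ∧ τ ≤ Y.lT a
  · have hne : (univ.filter fun a => lab a = i ∧ τ ≤ Y.lT a).Nonempty := by
      obtain ⟨a, ha⟩ := h; exact ⟨a, by simpa using ha⟩
    obtain ⟨a, ha, hmin⟩ := Finset.exists_min_image _ (fun a : Fin N => a) hne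
    simp at ha hmin
    have h1 := G.C1 a
    have h2 : Y.al i τ ≤ #{c | lab c = lab a ∧ Y.eO c ≤ Y.lT a} := by
      apply Finset.card_le_card; intro c; simp; intro h1 h2; exact ⟨by rw [h1, ha.1], by omega⟩
    have h3 : rnk lab a ≤ Y.be i τ := by
      apply Finset.card_le_card; intro c; simp; intro h1 h2
      refine ⟨by rw [h2, ha.1], ?_⟩
      by_contra h3
      exact absurd (hmin c (by rw [h2, ha.1]) (by omega)) h1.not_ge
    omega
  · push Not at h
    have h1 : Y.al i τ ≤ Y.be i τ := by
      apply Finset.card_le_card; intro c; simp; intro h1 h2; exact ⟨h1, h c h1⟩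
    omega

theorem card_split {α : Type*} [Fintype α] (P Q : α → Prop) [DecidablePred P] [DecidablePred Q] :
    #{a | P a} = #{a | P a ∧ Q a} + #{a | P a ∧ ¬ Q a} := by
  rw [← Finset.card_filter_add_card_filter_not (s := univ.filter P) Q, Finset.filter_filter, Finset.filter_filter]

theorem sum_lab (P : Fin N → Prop) [DecidablePred P] (lab : Fin N → Fin m) : ∑ i, #{c | lab c = i ∧ P c} = #{c | P c} := by
  rw [Finset.card_eq_sum_card_fiberwise (s := univ.filter P) (t := univ) (f := lab) (by simp)]
  apply Finset.sum_congr rfl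
  intro i _
  rw [Finset.filter_filter]
  congr 1; ext c; simp; tauto

theorem C3 {τ : ℕ} (hτ : τ ≤ S) : #{c | Y.lT c < τ} ≤ #{c | Y.eO c ≤ τ} := by
  have h1 := Y.ord_full hτ
  have h2 : #((univ.filter fun c => Y.lT c < τ).image (Tk.t : Fin N → Tk m N)) + #((univ.filter fun c => ¬ Y.eO c ≤ τ).image (Tk.u : Fin N → Tk m N)) ≤ N := by
    rw [← Finset.card_union_of_disjoint]
    · refine le_trans (Finset.card_le_card ?_) h1.le
      intro y; simp only [mem_union, mem_image, mem_filter, mem_univ, true_and]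
      rintro (⟨c, h, rfl⟩ | ⟨c, h, rfl⟩)
      · exact Y.od_pos_of_lT h hτ
      · exact Y.od_pos_of_eO (by omega)
    · rw [Finset.disjoint_left]; intro x; simp; rintro b _ rfl; simp
  rw [Finset.card_image_of_injective _ t_inj, Finset.card_image_of_injective _ u_inj] at h2
  have h3 := Finset.card_filter_add_card_filter_not (s := (univ : Finset (Fin N))) (fun c => Y.eO c ≤ τ)
  simp only [Finset.card_univ, Fintype.card_fin] at h3
  omega

theorem Gd.C2' (G : Y.Gd n M) (i : Fin m) (τ : ℕ) : Y.al i τ ≤ Y.be i τ + M := by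
  have := G.C2 i τ
  have := G.hM1
  omega

theorem Gd.C4 (G : Y.Gd n M) (i : Fin m) {τ : ℕ} (hτ : τ ≤ S) : Y.be i τ ≤ Y.al i τ + m * (2 * n + 1) := by
  have h1 : ∑ i, Y.be i τ ≤ ∑ i, Y.al i τ := by
    have := C3 (Y := Y) hτ
    rw [← sum_lab (fun c => Y.lT c < τ) lab, ← sum_lab (fun c => Y.eO c ≤ τ) lab] at this
    unfold be al; convert this
  rw [← Finset.add_sum_erase _ _ (mem_univ i), ← Finset.add_sum_erase _ (fun i => Y.al i τ) (mem_univ i)] at h1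
  have h2 : ∑ j ∈ univ.erase i, Y.al j τ ≤ ∑ j ∈ univ.erase i, (Y.be j τ + (2 * n + 1)) :=
    Finset.sum_le_sum fun j _ => G.C2 j τ
  rw [Finset.sum_add_distrib, Finset.sum_const, Finset.card_erase_of_mem (mem_univ i)] at h2
  simp only [card_univ, Fintype.card_fin, smul_eq_mul] at h2
  have h3 : (m - 1) * (2 * n + 1) ≤ m * (2 * n + 1) := Nat.mul_le_mul_right _ (by omega)
  omega

theorem Gd.C4' (G : Y.Gd n M) (i : Fin m) {τ : ℕ} (hτ : τ ≤ S) : Y.be i τ ≤ Y.al i τ + M := by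
  have := G.C4 i hτ
  have := G.hM1
  omega

/-- number of indices below `g` with label `i` -/
def Wc (lab : Fin N → Fin m) (i : Fin m) (g : ℕ) : ℕ := #{c : Fin N | lab c = i ∧ c.val < g}

theorem C5 (G : Y.Gd n M) (hsl : ∑ a, #{c : Fin N | lab c = lab a ∧ #{b | Y.lT b < Y.lT a} ≤ c.val ∧ c < a} ≤ n)
    (i : Fin m) (τ : ℕ) : Y.be i τ ≤ Wc lab i (#{a | Y.lT a < τ}) + M ∧ 
      Wc lab i (#{a | Y.lT a < τ}) ≤ Y.be i τ + M := by
  set g := #{a | Y.lT a < τ} with hg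
  have hgN : g ≤ N := by
    have := Finset.card_le_univ (univ.filter fun a => Y.lT a < τ); simpa using this
  have hrk : ∀ a, Y.lT a < τ → #{b | Y.lT b < Y.lT a} < g := by
    intro a ha
    apply Finset.card_lt_card
    constructor
    · intro x; simp; omega
    · intro h'
      have : a ∈ (univ.filter fun x => Y.lT x < Y.lT a) := h' (by simpa using ha)
      simp at this
  have early : ∀ j, #{a : Fin N | lab a = j ∧ Y.lT a < τ ∧ g ≤ a.val} ≤ n + 1 := by
    intro j
    rcases (univ.filter fun a : Fin N => lab a = j ∧ Y.lT a < τ ∧ g ≤ a.val).eq_empty_or_nonempty with h | h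
    · rw [h]; simp
    · obtain ⟨a, ha, hmax⟩ := Finset.exists_max_image _ (fun a : Fin N => a) h
      simp only [mem_filter, mem_univ, true_and] at ha hmax
      have h1 := le_trans (Finset.single_le_sum (f := fun a => #{c : Fin N | lab c = lab a ∧ #{b | Y.lT b < Y.lT a} ≤ c.val ∧ c < a}) (fun _ _ => Nat.zero_le _) (mem_univ a)) hsl
      have h2 : (univ.filter fun a : Fin N => lab a = j ∧ Y.lT a < τ ∧ g ≤ a.val) ⊆ 
        insert a (univ.filter fun c : Fin N => lab c = lab a ∧ #{b | Y.lT b < Y.lT a} ≤ c.val ∧ c < a) := by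
        intro c hc
        simp only [mem_filter, mem_univ, true_and, mem_insert] at hc ⊢
        rcases (hmax c hc).lt_or_eq with h3 | h3
        · right; refine ⟨by rw [hc.1, ha.1], ?_, h3⟩
          have := hrk a ha.2.1; omega
        · left; exact h3
      refine le_trans (Finset.card_le_card h2) (le_trans (Finset.card_insert_le _ _) ?_)
      omega
  have tot_early : #{a : Fin N | Y.lT a < τ ∧ g ≤ a.val} ≤ m * (n + 1) := by
    rw [← sum_lab (fun a : Fin N => Y.lT a < τ ∧ g ≤ a.val) lab]
    refine le_trans (Finset.sum_le_sum fun j _ => early j) ?_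
    simp
  have hcount : #{a : Fin N | a.val < g} = g := by
    rw [← Finset.card_image_of_injective _ Fin.val_injective]
    rw [show (univ.filter fun a : Fin N => a.val < g).image Fin.val = range g by
      ext x; simp; constructor
      · rintro ⟨a, h, rfl⟩; exact h
      · intro h; exact ⟨⟨x, by omega⟩, h, rfl⟩]
    simp
  have sp1 := card_split (fun a => Y.lT a < τ) (fun a => a.val < g)
  have sp2 := card_split (fun a => a.val < g) (fun a => Y.lT a < τ)
  have e1 : #{a : Fin N | Y.lT a < τ ∧ ¬ a.val < g} = #{a : Fin N | Y.lT a < τ ∧ g ≤ a.val} := by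
    congr 1; ext a; simp
  have e2 : #{a : Fin N | Y.lT a < τ ∧ a.val < g} = #{a : Fin N | a.val < g ∧ Y.lT a < τ} := by
    congr 1; ext a; simp; tauto
  have late : #{a : Fin N | a.val < g ∧ ¬ Y.lT a < τ} ≤ m * (n + 1) := by
    have e3 : #{a : Fin N | a.val < g} = #{a : Fin N | Y.lT a < τ} := by rw [hcount]
    have : #{a : Fin N | a.val < g ∧ ¬ Y.lT a < τ} = #{a : Fin N | Y.lT a < τ ∧ g ≤ a.val} := by
      omega
    omega
  have hm : m * (n + 1) ≤ M := by
    have := G.hM; nlinarith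
  constructor
  · have : Y.be i τ ≤ Wc lab i g + #{a : Fin N | Y.lT a < τ ∧ g ≤ a.val} := by
      refine le_trans (Finset.card_le_card ?_) (Finset.card_union_le _ _)
      intro c; simp only [mem_filter, mem_union, mem_univ, true_and]
      rintro ⟨h1, h2⟩
      by_cases h : c.val < g
      · left; exact ⟨h1, h⟩
      · right; exact ⟨h2, by omega⟩
    omega
  · have : Wc lab i g ≤ Y.be i τ + #{a : Fin N | a.val < g ∧ ¬ Y.lT a < τ} := by
      refine le_trans (Finset.card_le_card ?_) (Finset.card_union_le _ _)
      intro c; simp only [mem_filter, mem_union, mem_univ, true_and]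
      rintro ⟨h1, h2⟩
      by_cases h : Y.lT c < τ
      · left; exact ⟨h1, h⟩
      · right; exact ⟨h2, by omega⟩
    omega

end Sys
end UnweightedTS

namespace UnweightedTS
open Finset
open scoped Classical

namespace Sys
variable {m N k S : ℕ} {lab : Fin N → Fin m} (Y : Sys m N k S lab)

/-- `u c` never moves left in its own slot -/
def tU (c : Fin N) : Prop := ∀ s < S, Y.reg s = some (lab c) → Y.lft s ≠ .u c
/-- `t a` never moves right in its own slot -/
def tT (a : Fin N) : Prop := ∀ s < S, Y.reg s = some (lab a) → Y.rgt s ≠ .t a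

theorem rev_tU (c : Fin N) : Y.rev.tU c ↔ Y.tT c.rev := by
  unfold tU tT
  constructor
  · intro h s hs h1 h2
    refine h (S - 1 - s) (by omega) ?_ ?_
    · rw [Y.rev_reg (by omega), show S - 1 - (S - 1 - s) = s by omega]; exact h1
    · rw [rev_lft, rvT_eq, show S - 1 - (S - 1 - s) = s by omega]; exact h2
  · intro h s hs h1 h2
    rw [Y.rev_reg hs] at h1
    rw [rev_lft, rvT_eq] at h2
    exact h _ (by omega) h1 h2

theorem rev_tT (c : Fin N) : Y.rev.tT c ↔ Y.tU c.rev := by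
  unfold tU tT
  constructor
  · intro h s hs h1 h2
    refine h (S - 1 - s) (by omega) ?_ ?_
    · rw [Y.rev_reg (by omega), show S - 1 - (S - 1 - s) = s by omega]; exact h1
    · rw [rev_rgt, rvT_eq, show S - 1 - (S - 1 - s) = s by omega]; exact h2
  · intro h s hs h1 h2
    rw [Y.rev_reg hs] at h1
    rw [rev_rgt, rvT_eq] at h2
    exact h _ (by omega) h1 h2

variable {Y} {n M : ℕ}

theorem Gd.untU (G : Y.Gd n M) : #{c | ¬ Y.tU c} ≤ n := by
  refine le_trans ?_ G.LU
  have h : ∀ c ∈ (univ.filter fun c => ¬ Y.tU c), ∃ s < S, Y.reg s = some (lab c) ∧ Y.lft s = .u c := by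
    intro c; simp only [mem_filter, mem_univ, true_and]; unfold tU; push Not; tauto
  choose! F h1 h2 h3 using h
  apply Finset.card_le_card_of_injOn F
  · intro c hc
    simp only [coe_filter, mem_range, Set.mem_ofPred_eq]
    exact ⟨h1 c hc, c, h2 c hc, h3 c hc⟩
  · intro c hc d hd h
    have := h3 c hc
    rw [h, h3 d hd] at this
    simpa using this.symm

theorem rev_filter (P Q : Fin N → Prop) [DecidablePred P] [DecidablePred Q] (h : ∀ c, P c ↔ Q c.rev) :
    #{c | P c} = #{c | Q c} := by
  apply Finset.card_bij (fun c _ => c.rev)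
  · intro c hc; simp at hc ⊢; exact (h c).1 hc
  · intro a _ b _; simp
  · intro b hb; refine ⟨b.rev, ?_, by simp⟩; simp at hb ⊢; rw [h]; simpa using hb

theorem Gd.untT (G : Y.Gd n M) : #{c | ¬ Y.tT c} ≤ n := by
  have := G.rev.untU
  rwa [rev_filter _ (fun c => ¬ Y.tT c) (fun c => by rw [rev_tU])] at this

theorem tU_mono {c : Fin N} (h : Y.tU c) {p q : ℕ} (hpq : p ≤ q) (hq : q ≤ S) :
    Y.ph (lab c) p (.u c) ≤ Y.ph (lab c) q (.u c) := by
  induction q, hpq using Nat.le_induction with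
  | base => exact le_rfl
  | succ q hpq ih =>
    have ih := ih (by omega)
    rcases Y.ph_step (lab c) (s := q) (by omega) (.u c) with ⟨h1, h2, h3⟩ | ⟨h1, h2, h3⟩ | ⟨h1, h2⟩
    · omega
    · exact absurd h2 (h q (by omega) h1)
    · omega

theorem tT_anti {c : Fin N} (h : Y.tT c) {p q : ℕ} (hpq : p ≤ q) (hq : q ≤ S) :
    Y.ph (lab c) q (.t c) ≤ Y.ph (lab c) p (.t c) := by
  have := tU_mono (Y := Y.rev) (c := c.rev) (by rw [rev_tU]; simpa using h) (p := S - q) (q := S - p) (by omega) (by omega)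
  simpa [Nat.sub_sub_self hq, Nat.sub_sub_self (hpq.trans hq)] using this

theorem nook_leave {i : Fin m} {s : ℕ} (hs : s < S) {x : Tk m N} (h : Y.pos s x = .nook i) :
    Y.pos (s+1) x = .nook i ∨ (Y.lft s = x ∧ Y.reg s = some i ∧ Y.ph i (s+1) x = k ∧ Y.pos (s+1) (Y.rgt s) = .nook i) := by
  have hE := Y.edge s hs
  by_cases h1 : x = Y.lft s
  · subst h1
    right
    refine ⟨rfl, ?_, ?_, by rw [Y.stepR s hs, h]⟩
    · unfold reg; rw [h]; rfl
    · unfold ph; rw [Y.stepL s hs]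
      rw [h] at hE
      generalize Y.pos s (Y.rgt s) = w at *
      cases hE with
      | n _ d hd => simp [phv, hd]
  by_cases h2 : x = Y.rgt s
  · subst h2
    rw [h] at hE
    cases hE
  · left; rw [Y.stepO s hs x h1 h2, h]

theorem nook_enter {i : Fin m} {s : ℕ} (hs : s < S) {x : Tk m N} (h : Y.pos (s+1) x = .nook i) :
    Y.pos s x = .nook i ∨ (Y.rgt s = x ∧ Y.reg s = some i ∧ Y.ph i s x = k ∧ Y.pos s (Y.lft s) = .nook i) := by
  have hE := Y.edge s hs
  by_cases h1 : x = Y.rgt s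
  · subst h1
    right
    rw [Y.stepR s hs] at h
    refine ⟨rfl, ?_, ?_, h⟩
    · unfold reg; rw [h]; rfl
    · unfold ph
      rw [h] at hE
      generalize Y.pos s (Y.rgt s) = w at *
      cases hE with
      | n _ d hd => simp [phv, hd]
  by_cases h2 : x = Y.lft s
  · subst h2
    rw [Y.stepL s hs] at h
    rw [h] at hE
    cases hE
  · left; rw [← Y.stepO s hs x h2 h1, h]

theorem tU_nook {c : Fin N} (h : Y.tU c) {s : ℕ} (hs : s ≤ S) : Y.pos s (.u c) ≠ .nook (lab c) := by
  intro h0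
  have : ∀ q, s ≤ q → q ≤ S → Y.pos q (.u c) = .nook (lab c) := by
    intro q hq
    induction q, hq using Nat.le_induction with
    | base => intro _; exact h0
    | succ q hpq ih =>
      intro h1
      rcases nook_leave (by omega) (ih (by omega)) with h2 | ⟨h2, h3, _⟩
      · exact h2
      · exact absurd h2 (h q (by omega) h3)
  have := this S hs le_rfl
  rw [Y.uS] at this
  simp at this

theorem tT_nook {c : Fin N} (h : Y.tT c) {s : ℕ} (hs : s ≤ S) : Y.pos s (.t c) ≠ .nook (lab c) := by
  have := tU_nook (Y := Y.rev) (c := c.rev) (by rw [rev_tU]; simpa using h) (s := S - s) (by omega)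
  simpa [Nat.sub_sub_self hs] using this

theorem Gd.C6a (G : Y.Gd n M) (i : Fin m) {τ : ℕ} (hτ : τ ≤ S) :
    #{c | (lab c = i ∧ Y.eO c ≤ τ ∧ Y.ph i τ (.u c) = 0) ∧ Y.tU c} ≤ 3 * M := by
  rcases (univ.filter fun c => (lab c = i ∧ Y.eO c ≤ τ ∧ Y.ph i τ (.u c) = 0) ∧ Y.tU c).eq_empty_or_nonempty with h | h
  · rw [h]; simp
  obtain ⟨c0, hc0, hmin⟩ := Finset.exists_min_image _ Y.eO h
  simp only [mem_filter, mem_univ, true_and] at hc0 hmin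
  obtain ⟨⟨h1, h2, h3⟩, h4⟩ := hc0
  have hm : #{a | lab a = i ∧ Y.eO c0 ≤ Y.lT a ∧ Y.lT a < τ} ≤ n := by
    apply G.mis2 c0
    rintro a ⟨ha, hb, hc⟩
    refine ⟨by rw [h1, ha], hb, ?_⟩
    rintro ⟨s, hs, e1, e2, e3⟩
    rw [ha] at e1
    obtain ⟨f1, f2, f3, f4, f5, f6, f7⟩ := Y.ph_edge i hs e1
    rw [e2] at *; rw [e3] at *
    by_cases hst : s + 1 ≤ τ
    · have := tU_mono h4 hst hτ
      rw [h1] at this; omega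
    · have := Y.od_pos_of_lT (a := a) (s := s) (by omega) (by omega)
      omega
  have hb : Y.be i τ ≤ Y.be i (Y.eO c0) + #{a | lab a = i ∧ Y.eO c0 ≤ Y.lT a ∧ Y.lT a < τ} := by
    refine le_trans (Finset.card_le_card ?_) (Finset.card_union_le _ _)
    intro c; simp only [mem_filter, mem_union, mem_univ, true_and]
    rintro ⟨h1, h2⟩
    by_cases h : Y.lT c < Y.eO c0
    · left; exact ⟨h1, h⟩
    · right; exact ⟨h1, by omega, h2⟩
  have hA : #{c | (lab c = i ∧ Y.eO c ≤ τ ∧ Y.ph i τ (.u c) = 0) ∧ Y.tU c} + Y.al i (Y.eO c0) ≤ Y.al i τ + 1 := by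
    unfold al
    rw [← Finset.card_union_add_card_inter]
    apply Nat.add_le_add
    · apply Finset.card_le_card
      intro c; simp only [mem_filter, mem_union, mem_univ, true_and]
      rintro (h | h)
      · exact ⟨h.1.1, h.1.2.1⟩
      · exact ⟨h.1, by omega⟩
    · rw [Finset.card_le_one]
      intro a ha b hb
      simp only [mem_filter, mem_inter, mem_univ, true_and] at ha hb
      have := hmin a ha.1
      have := hmin b hb.1
      apply Y.eO_inj; omega
  have := G.C2' i τ
  have := G.C4' i (Y.eO_le c0)
  have := G.hM1
  omega

theorem Gd.C6 (G : Y.Gd n M) (i : Fin m) {τ : ℕ} (hτ : τ ≤ S) :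
    #{c | lab c = i ∧ Y.eO c ≤ τ ∧ Y.ph i τ (.u c) = 0} ≤ 4 * M := by
  rw [card_split _ Y.tU]
  have h1 := G.C6a i hτ
  have h2 := G.untU
  have h3 : #{c | (lab c = i ∧ Y.eO c ≤ τ ∧ Y.ph i τ (.u c) = 0) ∧ ¬ Y.tU c} ≤ #{c | ¬ Y.tU c} := by
    apply Finset.card_le_card; intro c; simp only [mem_filter]; tauto
  have := G.hM1
  omega

theorem Gd.C6' (G : Y.Gd n M) (i : Fin m) {τ : ℕ} (hτ : τ ≤ S) :
    #{c | lab c = i ∧ τ ≤ Y.lT c ∧ Y.ph i τ (.t c) = 0} ≤ 4 * M := by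
  have := G.rev.C6 i (τ := S - τ) (by omega)
  rwa [rev_filter _ (fun c => lab c = i ∧ τ ≤ Y.lT c ∧ Y.ph i τ (.t c) = 0)] at this
  intro c
  have := Y.lT_lt c.rev
  rw [rev_eO, rev_ph, rvT_u, Nat.sub_sub_self hτ, show (S - Y.lT c.rev ≤ S - τ) ↔ (τ ≤ Y.lT c.rev) by omega]

theorem slot_cap (i : Fin m) {τ : ℕ} (hτ : τ ≤ S) : #{y | 0 < Y.ph i τ y} ≤ lln lab i + 1 := by
  have : #{y | 0 < Y.ph i τ y} ≤ #(insert (.nook i) ((range (lln lab i)).image fun d => (Vtx.slot i d : Vtx m))) := by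
    apply Finset.card_le_card_of_injOn (Y.pos τ)
    · intro y hy
      simp at hy ⊢
      have h := Y.vld τ hτ y
      unfold ph at hy
      generalize Y.pos τ y = v at *
      cases v <;> simp_all [phv, Vld] <;> grind
    · intro a _ b _ h; exact Y.inj τ hτ h
  refine this.trans ((Finset.card_insert_le _ _).trans ?_)
  have := Finset.card_image_le (s := range (lln lab i)) (f := fun d => (Vtx.slot i d : Vtx m))
  simp at this ⊢; exact this

/-- tame tokens belonging to slot `i` -/
def TO (Y : Sys m N k S lab) (i : Fin m) (x : Tk m N) : Prop :=
  (∃ a, x = .t a ∧ lab a = i ∧ Y.tT a) ∨ (∃ a, x = .u a ∧ lab a = i ∧ Y.tU a)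

theorem Gd.B3 (G : Y.Gd n M) (i : Fin m) {τ : ℕ} (hτ : τ ≤ S) : 
    #{y | 0 < Y.ph i τ y ∧ ¬ Y.TO i y} ≤ 10 * M := by
  have h0 := slot_cap (Y := Y) i hτ
  rw [card_split _ (Y.TO i)] at h0
  have h1 : #{c | lab c = i ∧ Y.eO c ≤ τ ∧ 0 < Y.ph i τ (.u c) ∧ Y.tU c} + 
    #{c | lab c = i ∧ τ ≤ Y.lT c ∧ 0 < Y.ph i τ (.t c) ∧ Y.tT c} ≤ #{y | 0 < Y.ph i τ y ∧ Y.TO i y} := by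
    rw [← Finset.card_image_of_injective _ (u_inj (m := m)), ← Finset.card_image_of_injective (univ.filter fun c => lab c = i ∧ τ ≤ Y.lT c ∧ 0 < Y.ph i τ (.t c) ∧ Y.tT c) (t_inj (m := m)),
      ← Finset.card_union_of_disjoint]
    · apply Finset.card_le_card
      intro y; simp only [mem_union, mem_image, mem_filter, mem_univ, true_and]
      rintro (⟨c, h, rfl⟩ | ⟨c, h, rfl⟩)
      · exact ⟨h.2.2.1, Or.inr ⟨c, rfl, h.1, h.2.2.2⟩⟩
      · exact ⟨h.2.2.1, Or.inl ⟨c, rfl, h.1, h.2.2.2⟩⟩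
    · rw [Finset.disjoint_left]; intro x; simp only [mem_image]; rintro ⟨a, _, rfl⟩ ⟨b, _, h⟩; cases h
  have h2 : Y.al i τ ≤ #{c | lab c = i ∧ Y.eO c ≤ τ ∧ 0 < Y.ph i τ (.u c) ∧ Y.tU c} + 
     (#{c | lab c = i ∧ Y.eO c ≤ τ ∧ Y.ph i τ (.u c) = 0} + #{c | ¬ Y.tU c}) := by
    refine le_trans (Finset.card_le_card ?_) ((Finset.card_union_le _ _).trans (Nat.add_le_add_left (Finset.card_union_le _ _) _))
    intro c; simp only [mem_filter, mem_union, mem_univ, true_and]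
    rintro ⟨h1, h2⟩
    by_cases h : Y.tU c
    · by_cases h' : Y.ph i τ (.u c) = 0
      · right; left; exact ⟨h1, h2, h'⟩
      · left; exact ⟨h1, h2, by omega, h⟩
    · right; right; exact h
  have h3 : lln lab i ≤ Y.be i τ + (#{c | lab c = i ∧ τ ≤ Y.lT c ∧ 0 < Y.ph i τ (.t c) ∧ Y.tT c} + 
     (#{c | lab c = i ∧ τ ≤ Y.lT c ∧ Y.ph i τ (.t c) = 0} + #{c | ¬ Y.tT c})) := by
    refine le_trans (Finset.card_le_card ?_) ((Finset.card_union_le _ _).trans (Nat.add_le_add_left ((Finset.card_union_le _ _).trans (Nat.add_le_add_left (Finset.card_union_le _ _) _)) _))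
    intro c; simp only [mem_filter, mem_union, mem_univ, true_and]
    intro h1
    by_cases h2 : Y.lT c < τ
    · left; exact ⟨h1, h2⟩
    by_cases h : Y.tT c
    · by_cases h' : Y.ph i τ (.t c) = 0
      · right; right; left; exact ⟨h1, by omega, h'⟩
      · right; left; exact ⟨h1, by omega, by omega, h⟩
    · right; right; right; exact h
  have := G.C6 i hτ
  have := G.C6' i hτ
  have := G.untU
  have := G.untT
  have := G.C4' i hτ
  have := G.hM1
  omega

end Sys
end UnweightedTS

namespace UnweightedTS
open Finset
open scoped Classical

namespace Sys
variable {m N k S : ℕ} {lab : Fin N → Fin m} (Y : Sys m N k S lab)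

/-- slot depth with the nook counted at depth `k` -/
noncomputable def sd (i : Fin m) (s : ℕ) (x : Tk m N) : ℕ := if Y.pos s x = .nook i then k else Y.ph i s x

/-- tokens of slot `i` -/
def Own (lab : Fin N → Fin m) (i : Fin m) : Tk m N → Prop
  | .it _ => False
  | .t a => lab a = i
  | .u a => lab a = i

/-- number of tame own `u` tokens deeper than `k` -/
noncomputable def Ug (i : Fin m) (τ : ℕ) : ℕ := #{c | lab c = i ∧ Y.tU c ∧ k < Y.ph i τ (.u c)}
/-- number of tame own `t` tokens deeper than `k` -/
noncomputable def Tg (i : Fin m) (τ : ℕ) : ℕ := #{c | lab c = i ∧ Y.tT c ∧ k < Y.ph i τ (.t c)}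

variable {Y} {n M : ℕ}

theorem sd_keep {c : Fin N} (hc : Y.tU c) {s : ℕ} (hs : s < S) (x : Tk m N)
    (h : Y.sd (lab c) s x < Y.ph (lab c) s (.u c)) : Y.sd (lab c) (s+1) x < Y.ph (lab c) (s+1) (.u c) := by
  have hm := tU_mono hc (Nat.le_succ s) (by omega)
  simp only [Nat.succ_eq_add_one] at hm
  unfold sd at *
  by_cases h1 : Y.pos (s+1) x = .nook (lab c)
  · rw [if_pos h1]
    rcases nook_enter hs h1 with h2 | ⟨h2, h3, h4, h5⟩
    · rw [if_pos h2] at h; omega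
    · rw [if_neg (by intro h6; rw [Y.ph_nook _ h6] at h4; omega)] at h; omega
  · rw [if_neg h1]
    by_cases h0 : Y.pos s x = .nook (lab c)
    · rw [if_pos h0] at h
      rcases nook_leave hs h0 with h2 | ⟨h2, h3, h4, h5⟩
      · exact absurd h2 h1
      · omega
    · rw [if_neg h0] at h
      rcases Y.ph_step (lab c) hs x with ⟨h2, h3, h4⟩ | ⟨h2, h3, h4⟩ | ⟨h2, h3⟩
      · rw [h4]
        rcases (Nat.succ_le_of_lt h).lt_or_eq with h5 | h5
        · omega
        · exfalso
          obtain ⟨e1, _⟩ := Y.ph_edge _ hs h2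
          have : Y.lft s = .u c := by
            apply Y.ph_inj (lab c) hs.le
            · rw [e1, h3]; omega
            · rw [e1]; omega
            · intro h6
              apply h1; rw [← h3, Y.stepR s hs, h6]
            · exact tU_nook hc hs.le
          exact hc s hs h2 this
      · omega
      · omega

theorem sd_keep' {c : Fin N} (hc : Y.tU c) {p q : ℕ} (hpq : p ≤ q) (hq : q ≤ S) (x : Tk m N)
    (h : Y.sd (lab c) p x < Y.ph (lab c) p (.u c)) : Y.sd (lab c) q x < Y.ph (lab c) q (.u c) := by
  induction q, hpq using Nat.le_induction with
  | base => exact h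
  | succ q hpq ih => exact sd_keep hc (by omega) x (ih (by omega))

/-- after the swap of an arbitrary token with a tame `u`, the token is left of the `u` -/
theorem sd_swap {c : Fin N} (hc : Y.tU c) {s : ℕ} (hs : s < S) (hr : Y.reg s = some (lab c)) 
    (h : Y.rgt s = .u c) : Y.sd (lab c) (s+1) (Y.lft s) < Y.ph (lab c) (s+1) (.u c) ∧ 
      Y.ph (lab c) s (.u c) ≤ Y.sd (lab c) s (Y.lft s) := by
  obtain ⟨e1, e2, e3, _⟩ := Y.ph_edge _ hs hr
  have hn : Y.pos (s+1) (Y.lft s) ≠ .nook (lab c) := by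
    intro h6
    rw [Y.stepL s hs] at h6
    have hE := Y.edge s hs
    rw [h6] at hE
    cases hE
  have hn' : Y.pos s (Y.lft s) ≠ .nook (lab c) := by
    intro h6
    rw [← Y.stepR s hs, h] at h6
    exact tU_nook hc (by omega) h6
  unfold sd
  rw [if_neg hn, if_neg hn', e1, e2, ← h]
  omega

theorem count_pair (x : Tk m N) (Z : Finset (Fin N)) : 
    #{s ∈ range S | Y.lft s = x ∧ ∃ c ∈ Z, Y.rgt s = .u c} ≤ #Z := by
  rw [← Finset.card_image_of_injective Z (u_inj (m := m))]
  apply Finset.card_le_card_of_injOn Y.rgt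
  · intro s hs
    simp only [coe_filter, Set.mem_ofPred_eq, coe_image] at hs ⊢
    obtain ⟨_, _, c, h1, h2⟩ := hs
    exact ⟨c, h1, h2.symm⟩
  · intro s hs s' hs' h
    simp only [coe_filter, Set.mem_ofPred_eq, mem_range] at hs hs'
    exact Y.step_inj hs.1 hs'.1 (hs.2.1.trans hs'.2.1.symm) h

theorem level_step (i : Fin m) (x : Tk m N) {p q L : ℕ} (hpq : p ≤ q) (hq : q ≤ S) 
    (h1 : L ≤ Y.ph i p x) (h2 : Y.ph i q x < L) : ∃ s, p ≤ s ∧ s < q ∧ Y.ph i s x = L ∧ Y.ph i (s+1) x + 1 = L := by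
  induction q, hpq using Nat.le_induction with
  | base => omega
  | succ q hpq ih =>
    by_cases h3 : Y.ph i q x < L
    · obtain ⟨s, a, b, c⟩ := ih (by omega) h3
      exact ⟨s, a, by omega, c⟩
    · refine ⟨q, hpq, by omega, ?_⟩
      rcases Y.ph_step i (s := q) (by omega) x with ⟨h2, h3, h4⟩ | ⟨h2, h3, h4⟩ | ⟨h2, h3⟩ <;> omega

theorem Gd.left_part (G : Y.Gd n M) (i : Fin m) {x : Tk m N} (hx : ¬ Own lab i x) {p q A B : ℕ} (hpq : p ≤ q) (hq : q ≤ S)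
    (hA : A ≤ Y.ph i p x) (hB : Y.ph i q x ≤ B) : 
    A ≤ B + 2 * n + #{c | lab c = i ∧ Y.tU c ∧ ∃ s, p ≤ s ∧ s < q ∧ Y.ph i (s+1) (.u c) = Y.ph i s (.u c) + 1 ∧ 
      B < Y.ph i (s+1) (.u c) ∧ Y.ph i (s+1) (.u c) ≤ A} := by
  have key : ∀ L ∈ Ioc B A, ∃ s, p ≤ s ∧ s < q ∧ Y.ph i s x = L ∧ Y.ph i (s+1) x + 1 = L := by
    intro L hL
    rw [mem_Ioc] at hL
    exact level_step i x hpq hq (by omega) (by omega)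
  choose! F h1 h2 h3 h4 using key
  set V : Finset (Fin N) := {c | lab c = i ∧ Y.tU c ∧ ∃ s, p ≤ s ∧ s < q ∧ Y.ph i (s+1) (.u c) = Y.ph i s (.u c) + 1 ∧ 
      B < Y.ph i (s+1) (.u c) ∧ Y.ph i (s+1) (.u c) ≤ A} with hV
  have hc1 : #((Ioc B A).image F) = A - B := by
    rw [Finset.card_image_of_injOn, Nat.card_Ioc]
    intro L hL L' hL' h
    rw [← h3 L hL, ← h3 L' hL', h]
  have hsub : (Ioc B A).image F ⊆ ({s ∈ range S | Y.reg s ≠ none ∧ ¬ Y.OT s (Y.lft s) ∧ ¬ Y.OU s (Y.rgt s)} : Finset ℕ) ∪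
     (({s ∈ range S | Y.lft s = x ∧ ∃ c ∈ V, Y.rgt s = .u c} : Finset ℕ) ∪
      ({s ∈ range S | Y.lft s = x ∧ ∃ c ∈ (univ.filter fun c => ¬ Y.tU c), Y.rgt s = .u c} : Finset ℕ)) := by
    intro s hs
    rw [mem_image] at hs
    obtain ⟨L, hL, rfl⟩ := hs
    have hL' := hL
    rw [mem_Ioc] at hL'
    have hlt : F L < S := by have := h2 L hL; omega
    have a3 := h3 L hL
    have a4 := h4 L hL
    rcases Y.ph_step i hlt x with ⟨e2, e3, e4⟩ | ⟨e2, e3, e4⟩ | ⟨e2, e3⟩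
    · omega
    · obtain ⟨f1, f2, f3, _⟩ := Y.ph_edge i hlt e2
      simp only [mem_union, mem_filter, mem_range, mem_univ, true_and]
      by_cases hou : Y.OU (F L) (Y.rgt (F L))
      · right
        obtain ⟨c, hc1, hc2⟩ := hou
        rw [e2] at hc1
        simp only [Option.some.injEq] at hc1
        by_cases ht : Y.tU c
        · left
          refine ⟨hlt, e3, c, ?_, hc2⟩
          rw [hV]
          simp only [mem_filter, mem_univ, true_and]
          rw [e3] at f1 f3; rw [hc2] at f1 f3
          exact ⟨hc1.symm, ht, F L, h1 L hL, h2 L hL, by omega, by omega, by omega⟩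
        · right
          exact ⟨hlt, e3, c, ht, hc2⟩
      · left
        refine ⟨hlt, by rw [e2]; simp, ?_, hou⟩
        rintro ⟨a, ha1, ha2⟩
        rw [e2] at ha1
        simp only [Option.some.injEq] at ha1
        rw [e3] at ha2
        rw [ha2] at hx
        exact hx ha1.symm
    · omega
  have := Finset.card_le_card hsub
  rw [hc1] at this
  have := this.trans ((Finset.card_union_le _ _).trans (Nat.add_le_add_left (Finset.card_union_le _ _) _))
  have e1 := G.NN
  have e2 := count_pair (Y := Y) x V
  have e3 := count_pair (Y := Y) x (univ.filter fun c => ¬ Y.tU c)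
  have e4 := G.untU
  omega

theorem own_rev (i : Fin m) (x : Tk m N) : Own (fun c => lab c.rev) i (rvT x) ↔ Own lab i x := by
  cases x <;> simp [Own]

theorem Gd.right_part (G : Y.Gd n M) (i : Fin m) {x : Tk m N} (hx : ¬ Own lab i x) {p q A B : ℕ} (hpq : p ≤ q) (hq : q ≤ S)
    (hA : A ≤ Y.ph i q x) (hB : Y.ph i p x ≤ B) : 
    A ≤ B + 2 * n + #{c | lab c = i ∧ Y.tT c ∧ ∃ s, p ≤ s ∧ s < q ∧ Y.ph i s (.t c) = Y.ph i (s+1) (.t c) + 1 ∧ 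
      B < Y.ph i s (.t c) ∧ Y.ph i s (.t c) ≤ A} := by
  have := G.rev.left_part i (x := rvT x) (by rwa [own_rev]) (p := S - q) (q := S - p) (A := A) (B := B) (by omega) (by omega)
    (by simpa [Nat.sub_sub_self hq] using hA) (by simpa [Nat.sub_sub_self (hpq.trans hq)] using hB)
  rwa [rev_filter _ (fun c => lab c = i ∧ Y.tT c ∧ ∃ s, p ≤ s ∧ s < q ∧ Y.ph i s (.t c) = Y.ph i (s+1) (.t c) + 1 ∧ 
      B < Y.ph i s (.t c) ∧ Y.ph i s (.t c) ≤ A)] at this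
  intro c
  rw [rev_tU]
  simp only [rev_ph, rvT_u]
  constructor
  · rintro ⟨a1, a2, s, b1, b2, b3, b4, b5⟩
    refine ⟨a1, a2, S - s - 1, by omega, by omega, ?_⟩
    rw [show S - s - 1 + 1 = S - s by omega]
    rw [show S - (s + 1) = S - s - 1 by omega] at *
    exact ⟨b3, b4, b5⟩
  · rintro ⟨a1, a2, s, b1, b2, b3, b4, b5⟩
    refine ⟨a1, a2, S - s - 1, by omega, by omega, ?_⟩
    rw [show S - (S - s - 1) = s + 1 by omega]
    rw [show S - (S - s - 1 + 1) = s by omega]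
    exact ⟨b3, b4, b5⟩

theorem rev_Ug (i : Fin m) (τ : ℕ) : Y.rev.Ug i τ = Y.Tg i (S - τ) := by
  unfold Ug Tg
  apply rev_filter
  intro c
  rw [rev_tU]
  simp

theorem rev_Tg (i : Fin m) (τ : ℕ) : Y.rev.Tg i τ = Y.Ug i (S - τ) := by
  unfold Ug Tg
  apply rev_filter
  intro c
  rw [rev_tT]
  simp

theorem Ug_mono (i : Fin m) {p q : ℕ} (hpq : p ≤ q) (hq : q ≤ S) : Y.Ug i p ≤ Y.Ug i q := by
  apply Finset.card_le_card
  intro c; simp only [mem_filter, mem_univ, true_and]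
  rintro ⟨rfl, h2, h3⟩
  exact ⟨rfl, h2, h3.trans_le (tU_mono h2 hpq hq)⟩

theorem Ug_step (i : Fin m) {s : ℕ} (hs : s < S) : Y.Ug i (s+1) ≤ Y.Ug i s + 1 := by
  have h : Y.Ug i (s+1) ≤ Y.Ug i s + #{c | Y.rgt s = .u c} := by
    refine le_trans (Finset.card_le_card ?_) (Finset.card_union_le _ _)
    intro c; simp only [mem_filter, mem_union, mem_univ, true_and]
    rintro ⟨rfl, h2, h3⟩
    rcases Y.ph_step (lab c) hs (.u c) with ⟨_, e3, e4⟩ | ⟨e2, e3, e4⟩ | ⟨e2, e3⟩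
    · right; exact e3
    · left; exact ⟨rfl, h2, by omega⟩
    · left; exact ⟨rfl, h2, by omega⟩
  refine h.trans ?_
  apply Nat.add_le_add_left
  rw [Finset.card_le_one]
  intro a ha b hb
  simp only [mem_filter, mem_univ, true_and] at ha hb
  rw [ha] at hb; simpa using hb

theorem TUg_le (i : Fin m) {τ : ℕ} (hτ : τ ≤ S) : Y.Tg i τ + Y.Ug i τ ≤ lln lab i - k := by
  unfold Tg Ug
  rw [← Finset.card_image_of_injective _ (t_inj (m := m)), ← Finset.card_image_of_injective (univ.filter fun c => lab c = i ∧ Y.tU c ∧ k < Y.ph i τ (.u c)) (u_inj (m := m)),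
    ← Finset.card_union_of_disjoint, ← Nat.card_Ioc]
  · apply Finset.card_le_card_of_injOn (Y.ph i τ)
    · intro y hy
      have hn : Y.pos τ y ≠ .nook i := by
        simp only [coe_union, Set.mem_union, coe_image, coe_filter, Set.mem_image, Set.mem_ofPred_eq, mem_univ, true_and] at hy
        rcases hy with ⟨c, ⟨rfl, h2, _⟩, rfl⟩ | ⟨c, ⟨rfl, h2, _⟩, rfl⟩
        · exact tT_nook h2 hτ
        · exact tU_nook h2 hτ
      have hk : k < Y.ph i τ y := by
        simp only [coe_union, Set.mem_union, coe_image, coe_filter, Set.mem_image, Set.mem_ofPred_eq, mem_univ, true_and] at hy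
        rcases hy with ⟨c, ⟨_, _, h2⟩, rfl⟩ | ⟨c, ⟨_, _, h2⟩, rfl⟩ <;> exact h2
      have := Y.vld τ hτ y
      simp only [coe_Ioc, Set.mem_Ioc]
      refine ⟨hk, ?_⟩
      unfold ph at *
      generalize Y.pos τ y = v at *
      cases v <;> simp_all [phv, Vld] <;> grind
    · intro y hy z hz h
      have hn : ∀ y ∈ (((univ.filter fun c => lab c = i ∧ Y.tT c ∧ k < Y.ph i τ (.t c)).image (Tk.t (m := m))) ∪ 
         (univ.filter fun c => lab c = i ∧ Y.tU c ∧ k < Y.ph i τ (.u c)).image (Tk.u (m := m))), Y.pos τ y ≠ .nook i ∧ k < Y.ph i τ y := by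
        intro y hy
        simp only [mem_union, mem_image, mem_filter, mem_univ, true_and] at hy
        rcases hy with ⟨c, ⟨rfl, h2, h3⟩, rfl⟩ | ⟨c, ⟨rfl, h2, h3⟩, rfl⟩
        · exact ⟨tT_nook h2 hτ, h3⟩
        · exact ⟨tU_nook h2 hτ, h3⟩
      have a := hn y hy
      have b := hn z hz
      exact Y.ph_inj i hτ h (by omega) a.1 b.1
  · rw [Finset.disjoint_left]; intro x; simp only [mem_image]; rintro ⟨a, _, rfl⟩ ⟨b, _, h⟩; cases h

theorem Gd.TUg_ge (G : Y.Gd n M) (i : Fin m) {τ : ℕ} (hτ : τ ≤ S) : lln lab i - k ≤ Y.Tg i τ + Y.Ug i τ + 10 * M := by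
  have h1 : lln lab i - k ≤ #{y | k < Y.ph i τ y ∧ Y.pos τ y ≠ .nook i} := by
    rw [← Nat.card_Ioc]
    have key : ∀ L ∈ Ioc k (lln lab i), ∃ y, Y.pos τ y = .slot i (L - 1) := by
      intro L hL
      rw [mem_Ioc] at hL
      apply Y.srj τ hτ
      simp [Vld]; omega
    have : Nonempty (Tk m N) := ⟨.it none⟩
    choose! F hF using key
    apply Finset.card_le_card_of_injOn F
    · intro L hL
      have := hF L hL
      simp only [coe_Ioc, Set.mem_Ioc] at hL
      simp only [coe_filter, mem_univ, true_and, Set.mem_ofPred_eq]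
      unfold ph
      rw [this]; simp [phv]; omega
    · intro L hL L' hL' h
      have a := hF L hL
      have b := hF L' hL'
      rw [h, b] at a
      simp only [coe_Ioc, Set.mem_Ioc] at hL hL'
      simp at a
      omega
  have h2 : #{y | k < Y.ph i τ y ∧ Y.pos τ y ≠ .nook i} ≤ #((univ.filter fun c => lab c = i ∧ Y.tT c ∧ k < Y.ph i τ (.t c)).image (Tk.t (m := m))) + 
      (#((univ.filter fun c => lab c = i ∧ Y.tU c ∧ k < Y.ph i τ (.u c)).image (Tk.u (m := m))) + #{y | 0 < Y.ph i τ y ∧ ¬ Y.TO i y}) := by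
    refine le_trans (Finset.card_le_card ?_) ((Finset.card_union_le _ _).trans (Nat.add_le_add_left (Finset.card_union_le _ _) _))
    intro y; simp only [mem_filter, mem_union, mem_image, mem_univ, true_and]
    rintro ⟨h1, h2⟩
    by_cases h : Y.TO i y
    · rcases h with ⟨a, rfl, e1, e2⟩ | ⟨a, rfl, e1, e2⟩
      · left; exact ⟨a, ⟨e1, e2, h1⟩, rfl⟩
      · right; left; exact ⟨a, ⟨e1, e2, h1⟩, rfl⟩
    · right; right; exact ⟨by omega, h⟩
  rw [Finset.card_image_of_injective _ t_inj, Finset.card_image_of_injective _ u_inj] at h2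
  have := G.B3 i hτ
  unfold Tg Ug
  omega

theorem Gd.claimA (G : Y.Gd n M) (b : Fin N) {x y : ℕ} (hxy : x ≤ y) (hy : y ≤ S) 
    (h : ∀ s, x ≤ s → s ≤ y → Y.pos s (.t b) = .nook (lab b)) : Y.Ug (lab b) y ≤ Y.Ug (lab b) x + n := by
  have hm : #{c | (lab c = lab b ∧ Y.tU c ∧ k < Y.ph (lab b) y (.u c)) ∧ ¬ k < Y.ph (lab b) x (.u c)} ≤ n := by
    apply G.mis1 b
    rintro c ⟨⟨h1, h2, h3⟩, h4⟩
    refine ⟨h1, ?_, ?_⟩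
    · have a1 := Y.eO_le_of (a := c) (s := y) (Y.od_ph (i := lab b) (by omega))
      have a2 := Y.le_lT (a := b) hy (Y.od_ph (i := lab b) (by rw [Y.ph_nook _ (h y hxy le_rfl)]; omega))
      omega
    · rintro ⟨s, hs, e1, e2, e3⟩
      rw [← h1] at h h3 h4 e1
      obtain ⟨f1, f2⟩ := sd_swap h2 hs e1 e3
      rw [e2] at f1 f2
      have gx : Y.sd (lab c) x (.t b) = k := by unfold sd; rw [if_pos (h x le_rfl hxy)]
      have gy : Y.sd (lab c) y (.t b) = k := by unfold sd; rw [if_pos (h y hxy le_rfl)]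
      by_cases h5 : s + 1 ≤ x
      · have := sd_keep' h2 h5 (hxy.trans hy) _ f1
        omega
      by_cases h6 : s < y
      · have := h (s+1) (by omega) (by omega)
        rw [← e2, Y.stepL s hs] at this
        have hE := Y.edge s hs
        rw [this] at hE
        cases hE
      · have := sd_keep' h2 (p := y) (q := s) (by omega) (by omega) (.t b) (by omega)
        omega
  unfold Ug
  rw [card_split _ (fun c => k < Y.ph (lab b) x (.u c))]
  refine Nat.add_le_add (Finset.card_le_card ?_) hm
  intro c; simp only [mem_filter]; tauto

theorem Gd.claimA' (G : Y.Gd n M) (b : Fin N) {x y : ℕ} (hxy : x ≤ y) (hy : y ≤ S) 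
    (h : ∀ s, x ≤ s → s ≤ y → Y.pos s (.u b) = .nook (lab b)) : Y.Ug (lab b) y ≤ Y.Ug (lab b) x + n + 10 * M := by
  have := G.rev.claimA b.rev (x := S - y) (y := S - x) (by omega) (by omega) (by
    intro s h1 h2
    rw [rev_pos]; simp only [rvT_t, Fin.rev_rev]
    exact h (S - s) (by omega) (by omega))
  simp only [rev_Ug, Fin.rev_rev, Nat.sub_sub_self hy, Nat.sub_sub_self (hxy.trans hy)] at this
  have a1 := TUg_le (Y := Y) (lab b) hy
  have a2 := G.TUg_ge (lab b) (hxy.trans hy)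
  omega

theorem Gd.claimAA (G : Y.Gd n M) {i : Fin m} {z : Tk m N} (hz : Own lab i z) {x y : ℕ} (hxy : x ≤ y) (hy : y ≤ S) 
    (h : ∀ s, x ≤ s → s ≤ y → Y.pos s z = .nook i) : Y.Ug i y ≤ Y.Ug i x + (n + 10 * M) := by
  cases z with
  | it o => exact hz.elim
  | t b => 
    have hz : lab b = i := hz
    subst hz
    have := G.claimA b hxy hy h
    omega
  | u b =>
    have hz : lab b = i := hz
    subst hz
    have := G.claimA' b hxy hy h
    omega

/-- potential for the chain argument -/
noncomputable def cst (Y : Sys m N k S lab) (s : ℕ) : ℕ := #{s' ∈ range s | Y.OT s' (Y.rgt s')} + #{s' ∈ range s | Y.OU s' (Y.lft s')}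
noncomputable def psi (Y : Sys m N k S lab) (s : ℕ) (z : Tk m N) : ℕ := 2 * Y.cst s + if IsU z then 1 else 0

theorem cst_step (s : ℕ) : Y.cst (s+1) = Y.cst s + (if Y.OT s (Y.rgt s) then 1 else 0) + if Y.OU s (Y.lft s) then 1 else 0 := by
  unfold cst
  rw [Finset.range_add_one, Finset.filter_insert, Finset.filter_insert]
  split_ifs <;> (try rw [Finset.card_insert_of_notMem (by simp)]) <;> (try rw [Finset.card_insert_of_notMem (by simp)]) <;> omega

theorem Gd.cst_le (G : Y.Gd n M) {s : ℕ} (hs : s ≤ S) : Y.cst s ≤ 2 * n := by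
  have h1 : #{s' ∈ range s | Y.OT s' (Y.rgt s')} ≤ n := 
    le_trans (Finset.card_le_card (Finset.filter_subset_filter _ (Finset.range_subset_range.2 hs))) G.RT
  have h2 : #{s' ∈ range s | Y.OU s' (Y.lft s')} ≤ n := 
    le_trans (Finset.card_le_card (Finset.filter_subset_filter _ (Finset.range_subset_range.2 hs))) G.LU
  unfold cst; omega

theorem Gd.chain_aux (G : Y.Gd n M) {i : Fin m} {x y : ℕ} (hxy : x ≤ y) (hy : y ≤ S)
    (h : ∀ s, x ≤ s → s ≤ y → ∀ z, Y.pos s z = .nook i → Own lab i z) : 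
    ∃ z w, x ≤ w ∧ w ≤ y ∧ (∀ s, w ≤ s → s ≤ y → Y.pos s z = .nook i) ∧ 
      Y.Ug i w ≤ Y.Ug i x + (n + 10 * M + 1) * Y.psi w z := by
  induction y, hxy using Nat.le_induction with
  | base => 
    obtain ⟨z, hz⟩ := Y.srj x hy (.nook i) trivial
    exact ⟨z, x, le_rfl, le_rfl, fun s h1 h2 => by rwa [show s = x by omega], by omega⟩
  | succ y hxy ih =>
    obtain ⟨z, w, h1, h2, h3, h4⟩ := ih (by omega) (fun s a b => h s a (by omega))
    have hzy := h3 y h2 le_rfl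
    have hown := h y hxy (by omega) z hzy
    rcases nook_leave (by omega : y < S) hzy with h5 | ⟨h5, h6, h7, h8⟩
    · refine ⟨z, w, h1, by omega, ?_, h4⟩
      intro s a b
      rcases Nat.lt_or_ge y s with h | h
      · rwa [show s = y + 1 by omega]
      · exact h3 s a h
    · refine ⟨Y.rgt y, y + 1, by omega, le_rfl, fun s a b => by rwa [show s = y + 1 by omega], ?_⟩
      have hown' := h (y+1) (by omega) le_rfl _ h8
      have a1 := Ug_step (Y := Y) i (s := y) (by omega)
      have a2 := G.claimAA hown h2 (by omega) h3
      have a3 : Y.psi w z ≤ Y.psi y z := by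
        have : Y.cst w ≤ Y.cst y := Nat.add_le_add (Finset.card_le_card (Finset.filter_subset_filter _ (Finset.range_subset_range.2 h2)))
          (Finset.card_le_card (Finset.filter_subset_filter _ (Finset.range_subset_range.2 h2)))
        unfold psi; omega
      have a4 : Y.psi y z + 1 ≤ Y.psi (y+1) (Y.rgt y) := by
        unfold psi
        rw [cst_step, h5]
        generalize Y.rgt y = z' at *
        have nu : ∀ a, ¬ IsU (Tk.t a : Tk m N) := by rintro a ⟨c, hc⟩; cases hc
        have iu : ∀ a, IsU (Tk.u a : Tk m N) := fun a => ⟨a, rfl⟩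
        cases z with
        | it o => exact hown.elim
        | t b => 
          cases z' with
          | it o => exact hown'.elim
          | t b' => 
            rw [if_neg (nu b), if_neg (nu b'), if_pos ⟨b', by rw [h6]; exact congrArg some (Eq.symm hown'), rfl⟩]; omega
          | u b' => 
            rw [if_neg (nu b), if_pos (iu b')]; omega
        | u b => 
          have hou : Y.OU y (Tk.u b) := ⟨b, by rw [h6]; exact congrArg some (Eq.symm hown), rfl⟩
          rw [if_pos (iu b), if_pos hou]
          cases z' with
          | it o => exact hown'.elim
          | t b' => 
            rw [if_neg (nu b'), if_pos ⟨b', by rw [h6]; exact congrArg some (Eq.symm hown'), rfl⟩]; omega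
          | u b' => 
            rw [if_pos (iu b')]; omega
      have a5 : (n + 10 * M + 1) * (Y.psi w z + 1) ≤ (n + 10 * M + 1) * Y.psi (y+1) (Y.rgt y) := 
        Nat.mul_le_mul_left _ (by omega)
      rw [Nat.mul_add] at a5
      omega

theorem Gd.chain (G : Y.Gd n M) {i : Fin m} {x y : ℕ} (hxy : x ≤ y) (hy : y ≤ S)
    (h : ∀ s, x ≤ s → s ≤ y → ∀ z, Y.pos s z = .nook i → Own lab i z) : 
    Y.Ug i y ≤ Y.Ug i x + (n + 10 * M + 1) * (4 * n + 2) := by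
  obtain ⟨z, w, h1, h2, h3, h4⟩ := G.chain_aux hxy hy h
  have a2 := G.claimAA (h y hxy le_rfl z (h3 y h2 le_rfl)) h2 hy h3
  have a1 := G.cst_le (h2.trans hy)
  have a3 : Y.psi w z ≤ 4 * n + 1 := by unfold psi; split_ifs <;> omega
  have a5 : (n + 10 * M + 1) * Y.psi w z ≤ (n + 10 * M + 1) * (4 * n + 1) := 
        Nat.mul_le_mul_left _ a3
  rw [show 4 * n + 2 = (4 * n + 1) + 1 by omega, Nat.mul_add]
  omega

end Sys
end UnweightedTS

namespace UnweightedTS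
open Finset
open scoped Classical

namespace Sys
variable {m N k S : ℕ} {lab : Fin N → Fin m} {Y : Sys m N k S lab} {n M : ℕ}

theorem Gd.bf (G : Y.Gd n M) {i : Fin m} {b : Fin N} (hb : lab b ≠ i) {t : ℕ} (ht : t ≤ S) (h : Y.pos t (.t b) = .nook i) :
    ∃ p q, p ≤ q ∧ q ≤ S ∧ Y.al i p ≤ Y.Ug i t + 5 * M ∧ Y.Ug i t + k + 1 ≤ Y.al i q + 2 * n ∧ 
      Y.al (lab b) q ≤ Y.al (lab b) p + 5 * M := by
  have hM := G.hM1
  have hph : Y.ph i t (.t b) = k + 1 := Y.ph_nook i h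
  -- entrance time
  have hex : ∃ p ≤ t, Y.ph i p (.t b) = 0 ∧ ∀ s, p < s → s ≤ t → 0 < Y.ph i s (.t b) := by
    have h0 : Y.ph i 0 (.t b) = 0 := by rw [Y.ph_t0, if_neg hb]
    refine ⟨Nat.findGreatest (fun s => Y.ph i s (.t b) = 0) t, Nat.findGreatest_le t, 
      Nat.findGreatest_spec (P := fun s => Y.ph i s (.t b) = 0) (Nat.zero_le t) h0, ?_⟩
    intro s h1 h2
    have := Nat.findGreatest_is_greatest (P := fun s => Y.ph i s (.t b) = 0) h1 h2
    omega
  obtain ⟨p, hpt, hp0, hp⟩ := hex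
  -- exit time
  have hex2 : ∃ q, t ≤ q ∧ q ≤ S ∧ Y.ph i q (.t b) = 0 ∧ ∀ s, t ≤ s → s < q → 0 < Y.ph i s (.t b) := by
    have hE : ∃ q, t ≤ q ∧ Y.ph i q (.t b) = 0 := ⟨S, ht, Y.ph_tS i b⟩
    refine ⟨Nat.find hE, (Nat.find_spec hE).1, Nat.find_min' hE ⟨ht, Y.ph_tS i b⟩, (Nat.find_spec hE).2, ?_⟩
    intro s h1 h2
    have := Nat.find_min hE h2
    omega
  obtain ⟨q, htq, hqS, hq0, hq⟩ := hex2
  have hpos : ∀ s, p < s → s < q → 0 < Y.ph i s (.t b) := by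
    intro s h1 h2
    rcases le_total s t with h3 | h3
    · exact hp s h1 h3
    · exact hq s h3 h2
  have hpt' : p < t := by
    rcases hpt.lt_or_eq with h | h
    · exact h
    · rw [h] at hp0; omega
  have htq' : t < q := by
    rcases htq.lt_or_eq with h | h
    · exact h
    · rw [← h] at hq0; omega
  have hodq : Y.od q (.t b) = 0 := by
    obtain ⟨q', rfl⟩ : ∃ q', q = q' + 1 := ⟨q - 1, by omega⟩
    have h1 := hpos q' (by omega) (by omega)
    rcases Y.ph_step i (s := q') (by omega) (.t b) with ⟨e2, e3, e4⟩ | ⟨e2, e3, e4⟩ | ⟨e2, e3⟩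
    · omega
    · have := Y.ph_edge i (by omega) e2
      rw [e3] at this
      exact this.2.2.2.2.2.1
    · omega
  have hlT : q ≤ Y.lT b := Y.le_lT hqS hodq
  have hz : ∀ s, p ≤ s → s ≤ q → Y.ph (lab b) s (.t b) = 0 := by
    have hz' : ∀ s, p < s → s < q → Y.ph (lab b) s (.t b) = 0 := fun s h1 h2 => Y.ph_disj (Ne.symm hb) (hpos s h1 h2)
    intro s h1 h2
    rcases h1.lt_or_eq with h3 | h3
    · rcases h2.lt_or_eq with h4 | h4
      · exact hz' s h3 h4
      · obtain ⟨q', rfl⟩ : ∃ q', q = q' + 1 := ⟨q - 1, by omega⟩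
        subst h4
        have h5 := hz' q' (by omega) (by omega)
        have h6 := hpos q' (by omega) (by omega)
        rcases Y.ph_step i (s := q') (by omega) (.t b) with ⟨e2, e3, e4⟩ | ⟨e2, e3, e4⟩ | ⟨e2, e3⟩
        · omega
        · rcases Y.ph_step (lab b) (s := q') (by omega) (.t b) with ⟨f2, f3, f4⟩ | ⟨f2, f3, f4⟩ | ⟨f2, f3⟩
          · rw [e2] at f2; simp at f2; exact absurd f2.symm hb
          · omega
          · omega
        · omega
    · subst h3
      have h5 := hz' (p+1) (by omega) (by omega)
      have h6 := hpos (p+1) (by omega) (by omega)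
      rcases Y.ph_step i (s := p) (by omega) (.t b) with ⟨e2, e3, e4⟩ | ⟨e2, e3, e4⟩ | ⟨e2, e3⟩
      · rcases Y.ph_step (lab b) (s := p) (by omega) (.t b) with ⟨f2, f3, f4⟩ | ⟨f2, f3, f4⟩ | ⟨f2, f3⟩
        · omega
        · rw [e2] at f2; simp at f2; exact absurd f2.symm hb
        · omega
      · omega
      · omega
  have hsd0 : ∀ j s, Y.ph j s (.t b) = 0 → Y.sd j s (.t b) = 0 := by
    intro j s h1
    unfold sd
    rw [if_neg (by intro h2; rw [Y.ph_nook _ h2] at h1; omega), h1]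
  refine ⟨p, q, by omega, hqS, ?_, ?_, ?_⟩
  · -- first bound
    have h1 : Y.al i p ≤ Y.Ug i t + (#{c | lab c = i ∧ Y.eO c ≤ p ∧ Y.ph i p (.u c) = 0} + #{c | ¬ Y.tU c}) := by
      refine le_trans (Finset.card_le_card ?_) ((Finset.card_union_le _ _).trans (Nat.add_le_add_left (Finset.card_union_le _ _) _))
      intro c; simp only [mem_filter, mem_union, mem_univ, true_and]
      rintro ⟨rfl, h2⟩
      by_cases hc : Y.tU c
      · by_cases h3 : Y.ph (lab c) p (.u c) = 0
        · right; left; exact ⟨rfl, h2, h3⟩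
        · left; refine ⟨rfl, hc, ?_⟩
          have := sd_keep' hc hpt ht (.t b) (by rw [hsd0 _ _ hp0]; omega)
          unfold sd at this
          rwa [if_pos h] at this
      · right; right; exact hc
    have := G.C6 i (τ := p) (by omega)
    have := G.untU
    omega
  · -- second bound
    have h1 := G.left_part i (x := .t b) hb htq hqS (A := k + 1) (B := 0) hph.ge hq0.le
    have h2 : Y.Ug i t + #{c | lab c = i ∧ Y.tU c ∧ ∃ s, t ≤ s ∧ s < q ∧ Y.ph i (s+1) (.u c) = Y.ph i s (.u c) + 1 ∧ 
      0 < Y.ph i (s+1) (.u c) ∧ Y.ph i (s+1) (.u c) ≤ k + 1} ≤ Y.al i q := by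
      unfold Ug
      rw [← Finset.card_union_of_disjoint]
      · apply Finset.card_le_card
        intro c; simp only [mem_filter, mem_union, mem_univ, true_and]
        rintro (⟨e1, e2, e3⟩ | ⟨e1, e2, s, e3, e4, e5, e6, e7⟩)
        · refine ⟨e1, ?_⟩
          have := Y.eO_le_of (a := c) (Y.od_ph (i := i) (s := t) (x := .u c) (by omega))
          omega
        · refine ⟨e1, ?_⟩
          have := Y.eO_le_of (a := c) (Y.od_ph (i := i) (s := s+1) (x := .u c) (by omega))
          omega
      · rw [Finset.disjoint_left]
        intro c; simp only [mem_filter, mem_univ, true_and]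
        rintro ⟨e1, e2, e3⟩ ⟨_, _, s, f3, f4, f5, f6, f7⟩
        subst e1
        have := tU_mono e2 f3 (by omega)
        omega
    omega
  · -- third bound
    have h1 : Y.al (lab b) q ≤ Y.al (lab b) p + (#{c | Y.Mis b c} + (#{c | ¬ Y.tU c} + #{c | lab c = lab b ∧ Y.eO c ≤ q ∧ Y.ph (lab b) q (.u c) = 0})) := by
      refine le_trans (Finset.card_le_card ?_) ((Finset.card_union_le _ _).trans (Nat.add_le_add_left ((Finset.card_union_le _ _).trans (Nat.add_le_add_left (Finset.card_union_le _ _) _)) _))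
      intro c; simp only [mem_filter, mem_union, mem_univ, true_and]
      rintro ⟨e1, e2⟩
      by_cases h2 : Y.eO c ≤ p
      · left; exact ⟨e1, h2⟩
      right
      by_cases h3 : Y.Mis b c
      · left; exact h3
      right
      by_cases h4 : Y.tU c
      swap
      · left; exact h4
      right
      refine ⟨e1, e2, ?_⟩
      by_contra h5
      apply h3
      refine ⟨e1, by omega, ?_⟩
      rintro ⟨s, hs, f1, f2, f3⟩
      have hd := Y.ph_edge (lab b) hs f1
      rw [f2, f3] at hd
      by_cases h6 : s < p
      · have := Y.eO_le_of (a := c) (s := s) hd.2.2.2.2.1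
        omega
      by_cases h7 : s < q
      · have := hz s (by omega) (by omega)
        omega
      · rw [← e1] at f1 h5
        have a1 := (sd_swap h4 hs f1 f3).2
        rw [f2] at a1
        have a2 := sd_keep' h4 (p := q) (q := s) (by omega) (by omega) (.t b) (by
          rw [hsd0 _ _ (by rw [e1]; exact hz q (by omega) le_rfl)]; omega)
        omega
    have := G.mis1 b (Y.Mis b) (fun _ h => h)
    have := G.untU
    have := G.C6 (lab b) hqS
    omega

theorem rev_al (i : Fin m) {τ : ℕ} (hτ : τ ≤ S) : Y.rev.al i τ + Y.be i (S - τ) = lln lab i := by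
  have h1 : Y.rev.al i τ = #{c | lab c = i ∧ ¬ Y.lT c < S - τ} := by
    unfold al
    apply rev_filter
    intro c
    have := Y.lT_lt c.rev
    rw [rev_eO, show (S - Y.lT c.rev ≤ τ) ↔ ¬ (Y.lT c.rev < S - τ) by omega]
  unfold lln
  have h2 := card_split (fun c => lab c = i) (fun c => Y.lT c < S - τ)
  rw [h1]
  unfold be
  omega

theorem Wc_le (i : Fin m) {g g' : ℕ} (h : g ≤ g') : Wc lab i g ≤ Wc lab i g' := by
  apply Finset.card_le_card
  intro c; simp; intro h1 h2; exact ⟨h1, by omega⟩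

theorem gl (τ : ℕ) : #{a | Y.lT a < τ} ≤ N := by
    have := Finset.card_le_univ (univ.filter fun a => Y.lT a < τ); simpa using this

/-- the word property -/
def WL (lab : Fin N → Fin m) (k k' n : ℕ) : Prop := ∀ i i' g1 g2, i ≠ i' → g1 ≤ g2 → g2 ≤ N → 
  Wc lab i' g2 < Wc lab i' g1 + k' → Wc lab i g1 + k ≤ Wc lab i g2 + k' →
  ∃ p, p * k ≤ Wc lab i g1 ∧ Wc lab i g1 ≤ p * k + (n + 3) * k' ∧ Wc lab i g2 ≤ Wc lab i g1 + k + 2 * k'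

theorem Gd.bad (G : Y.Gd n M) (hsl : ∑ a, #{c : Fin N | lab c = lab a ∧ #{b | Y.lT b < Y.lT a} ≤ c.val ∧ c < a} ≤ n)
    {k' : ℕ} (hW : WL lab k k' n) {i : Fin m} (hk : k ≤ lln lab i) (hk' : 18 * M ≤ k') {t : ℕ} (ht : t ≤ S) {z : Tk m N}
    (hz : Y.pos t z = .nook i) (hno : ¬ Own lab i z) (hit : ∀ o, z ≠ .it o) : 
    ∃ p, p * k ≤ Y.Ug i t + k' ∧ Y.Ug i t ≤ p * k + (n + 6) * k' := by
  have hM := G.hM1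
  have hkey : ∃ i' p q, i ≠ i' ∧ p ≤ q ∧ Y.be i p ≤ Y.Ug i t + 11 * M ∧ Y.Ug i t + k ≤ Y.be i q + 5 * M ∧ 
      Y.be i' q ≤ Y.be i' p + 7 * M := by
    cases z with
    | it o => exact absurd rfl (hit o)
    | t b => 
      have hb : lab b ≠ i := hno
      obtain ⟨p, q, h1, h2, h3, h4, h5⟩ := G.bf hb ht hz
      refine ⟨lab b, p, q, hb.symm, h1, ?_, ?_, ?_⟩
      · have := G.C4' i (h1.trans h2); omega
      · have := G.C2' i q; omega
      · have := G.C4' (lab b) h2; have := G.C2' (lab b) p; omega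
    | u b =>
      have hb : lab b ≠ i := hno
      obtain ⟨p, q, h1, h2, h3, h4, h5⟩ := G.rev.bf (i := i) (b := b.rev) (by simpa using hb) (t := S - t) (by omega) 
        (by simpa [Nat.sub_sub_self ht] using hz)
      simp only [Fin.rev_rev] at h5
      have e1 := rev_al (Y := Y) i (h1.trans h2)
      have e2 := rev_al (Y := Y) i h2
      have e3 := rev_al (Y := Y) (lab b) (h1.trans h2)
      have e4 := rev_al (Y := Y) (lab b) h2
      rw [rev_Ug, Nat.sub_sub_self ht] at h3 h4
      have f1 := TUg_le (Y := Y) i ht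
      have f2 := G.TUg_ge i ht
      exact ⟨lab b, S - q, S - p, hb.symm, by omega, by omega, by omega, by omega⟩
  obtain ⟨i', p, q, h1, h2, h3, h4, h5⟩ := hkey
  have a1 := C5 G hsl i p
  have a2 := C5 G hsl i q
  have a3 := C5 G hsl i' p
  have a4 := C5 G hsl i' q
  obtain ⟨r, b1, b2, b3⟩ := hW i i' (#{a | Y.lT a < p}) (#{a | Y.lT a < q}) h1 (by
      apply Finset.card_le_card; intro c; simp; omega) (gl q) (by omega) (by omega)
  refine ⟨r, by omega, ?_⟩
  have : (n + 6) * k' = (n + 3) * k' + 3 * k' := by ring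
  omega

end Sys
end UnweightedTS

namespace UnweightedTS
open Finset
open scoped Classical

/-- discrete intermediate value -/
theorem ivt_nat (f : ℕ → ℕ) {p q v : ℕ} (hpq : p ≤ q) (hs : ∀ s, p ≤ s → s < q → f (s+1) ≤ f s + 1)
    (h1 : f p ≤ v) (h2 : v ≤ f q) : ∃ s, p ≤ s ∧ s ≤ q ∧ f s = v := by
  induction q, hpq using Nat.le_induction with
  | base => exact ⟨p, le_rfl, le_rfl, by omega⟩
  | succ q hpq ih =>
    by_cases h3 : v ≤ f q
    · obtain ⟨s, a, b, c⟩ := ih (fun s a b => hs s a (by omega)) h3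
      exact ⟨s, a, by omega, c⟩
    · have := hs q hpq (by omega)
      exact ⟨q+1, by omega, le_rfl, by omega⟩

namespace Sys
variable {m N k S : ℕ} {lab : Fin N → Fin m} {Y : Sys m N k S lab} {n M : ℕ}

theorem ph_lip (i : Fin m) {s : ℕ} (hs : s < S) (x : Tk m N) : Y.ph i (s+1) x ≤ Y.ph i s x + 1 ∧ Y.ph i s x ≤ Y.ph i (s+1) x + 1 := by
  rcases Y.ph_step i hs x with ⟨e2, e3, e4⟩ | ⟨e2, e3, e4⟩ | ⟨e2, e3⟩ <;> omega

theorem Gd.final (G : Y.Gd n M) (hsl : ∑ a, #{c : Fin N | lab c = lab a ∧ #{b | Y.lT b < Y.lT a} ≤ c.val ∧ c < a} ≤ n)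
    {k' D L w : ℕ} (hW : WL lab k k' n) {i : Fin m} (hk : k ≤ lln lab i) (hk' : 18 * M ≤ k') 
    (h0 : ∃ o, Y.pos 0 (.it o) = .nook i) (hS : ∃ o, Y.pos S (.it o) = .nook i) 
    (hL : (n + 10 * M + 1) * (4 * n + 2) + 1 ≤ L) (hw : w = (n + 7) * k') (n1 : 2 * L + 2 * w + 1 < k) 
    (n2 : 2 * L + w + 1 + 10 * M + 4 * n + 1 + D ≤ k) (hD : 0 < D)
    {τ : ℕ} (hτ : τ ≤ S) : ∃ o, D ≤ Y.ph i τ (.it o) := by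
  by_contra hcon
  push Not at hcon
  have hex : ∃ p, p < τ ∧ (∃ o, k ≤ Y.ph i p (.it o)) ∧ ∀ s, p < s → s ≤ τ → ∀ o, Y.ph i s (.it o) < k := by
    have h0' : ∃ o, k ≤ Y.ph i 0 (.it o) := by
      obtain ⟨o, ho⟩ := h0; exact ⟨o, by rw [Y.ph_nook i ho]; omega⟩
    have hsp := Nat.findGreatest_spec (P := fun s => ∃ o, k ≤ Y.ph i s (.it o)) (Nat.zero_le τ) h0'
    have hle := Nat.findGreatest_le (P := fun s => ∃ o, k ≤ Y.ph i s (.it o)) τ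
    refine ⟨Nat.findGreatest (fun s => ∃ o, k ≤ Y.ph i s (.it o)) τ, ?_, hsp, ?_⟩
    · rcases hle.lt_or_eq with h | h
      · exact h
      · rw [h] at hsp
        obtain ⟨o, ho⟩ := hsp
        have := hcon o; omega
    · intro s h1 h2 o
      have := Nat.findGreatest_is_greatest (P := fun s => ∃ o, k ≤ Y.ph i s (.it o)) h1 h2
      push Not at this
      exact this o
  have hex2 : ∃ q, τ < q ∧ q ≤ S ∧ (∃ o, k ≤ Y.ph i q (.it o)) ∧ ∀ s, τ ≤ s → s < q → ∀ o, Y.ph i s (.it o) < k := by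
    have hE : ∃ q, τ ≤ q ∧ ∃ o, k ≤ Y.ph i q (.it o) := by
      obtain ⟨o, ho⟩ := hS; exact ⟨S, hτ, o, by rw [Y.ph_nook i ho]; omega⟩
    obtain ⟨hs1, hs2⟩ := Nat.find_spec hE
    refine ⟨Nat.find hE, ?_, ?_, hs2, ?_⟩
    · rcases hs1.lt_or_eq with h | h
      · exact h
      · rw [← h] at hs2
        obtain ⟨o, ho⟩ := hs2
        have := hcon o; omega
    · apply Nat.find_min' hE
      obtain ⟨o, ho⟩ := hS; exact ⟨hτ, o, by rw [Y.ph_nook i ho]; omega⟩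
    · intro s h1 h2 o
      have := Nat.find_min hE h2
      push Not at this
      exact this h1 o
  obtain ⟨pp, hp1, ⟨o1, ho1⟩, hp2⟩ := hex
  obtain ⟨qq, hq1, hqS, ⟨o2, ho2⟩, hq2⟩ := hex2
  obtain ⟨q, rfl⟩ : ∃ q, qq = q + 1 := ⟨qq - 1, by omega⟩
  set p := pp + 1 with hp
  have hnoit : ∀ s, p ≤ s → s ≤ q → ∀ o, Y.ph i s (.it o) < k := by
    intro s h1 h2 o
    rcases le_total s τ with h3 | h3
    · exact hp2 s (by omega) h3 o
    · exact hq2 s h3 (by omega) o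
  have hl1 := (ph_lip (Y := Y) i (s := pp) (by omega) (.it o1)).2
  rw [← hp] at hl1
  have hl2 := (ph_lip (Y := Y) i (s := q) (by omega) (.it o2)).1
  have hLP := G.left_part i (x := .it o1) (by simp [Own]) (p := p) (q := τ) (A := k - 1) (B := D - 1) (by omega) hτ 
    (by omega) (by have := hcon o1; omega)
  have hRP := G.right_part i (x := .it o2) (by simp [Own]) (p := τ) (q := q) (A := k - 1) (B := D - 1) (by omega) (by omega)
    (by omega) (by have := hcon o2; omega)
  have hmid : #{c | lab c = i ∧ Y.tU c ∧ D ≤ Y.ph i τ (.u c) ∧ Y.ph i τ (.u c) ≤ k} + 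
     #{c | lab c = i ∧ Y.tT c ∧ D ≤ Y.ph i τ (.t c) ∧ Y.ph i τ (.t c) ≤ k} ≤ k + 1 - D := by
    rw [← Finset.card_image_of_injective _ (u_inj (m := m)), ← Finset.card_image_of_injective (univ.filter fun c => lab c = i ∧ Y.tT c ∧ D ≤ Y.ph i τ (.t c) ∧ Y.ph i τ (.t c) ≤ k) (t_inj (m := m)),
      ← Finset.card_union_of_disjoint, ← Nat.card_Icc]
    · have hn : ∀ y ∈ (((univ.filter fun c => lab c = i ∧ Y.tU c ∧ D ≤ Y.ph i τ (.u c) ∧ Y.ph i τ (.u c) ≤ k).image (Tk.u (m := m))) ∪ 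
         (univ.filter fun c => lab c = i ∧ Y.tT c ∧ D ≤ Y.ph i τ (.t c) ∧ Y.ph i τ (.t c) ≤ k).image (Tk.t (m := m))), 
         Y.pos τ y ≠ .nook i ∧ D ≤ Y.ph i τ y ∧ Y.ph i τ y ≤ k := by
        intro y hy
        simp only [mem_union, mem_image, mem_filter, mem_univ, true_and] at hy
        rcases hy with ⟨c, ⟨rfl, h2, h3⟩, rfl⟩ | ⟨c, ⟨rfl, h2, h3⟩, rfl⟩
        · exact ⟨tU_nook h2 hτ, h3⟩
        · exact ⟨tT_nook h2 hτ, h3⟩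
      apply Finset.card_le_card_of_injOn (Y.ph i τ)
      · intro y hy
        simp only [coe_Icc, Set.mem_Icc]
        exact (hn y hy).2
      · intro y hy z hz h
        have a := hn y hy
        have b := hn z hz
        exact Y.ph_inj i hτ h (by omega) a.1 b.1
    · rw [Finset.disjoint_left]; intro x; simp only [mem_image]; rintro ⟨a, _, rfl⟩ ⟨b, _, h⟩; cases h
  have hV : #{c | lab c = i ∧ Y.tU c ∧ ∃ s, p ≤ s ∧ s < τ ∧ Y.ph i (s+1) (.u c) = Y.ph i s (.u c) + 1 ∧ 
      D - 1 < Y.ph i (s+1) (.u c) ∧ Y.ph i (s+1) (.u c) ≤ k - 1} + Y.Ug i p ≤ 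
      #{c | lab c = i ∧ Y.tU c ∧ D ≤ Y.ph i τ (.u c) ∧ Y.ph i τ (.u c) ≤ k} + Y.Ug i τ := by
    unfold Ug
    rw [← Finset.card_union_of_disjoint]
    · refine le_trans (Finset.card_le_card ?_) (Finset.card_union_le _ _)
      intro c; simp only [mem_filter, mem_union, mem_univ, true_and]
      rintro (⟨rfl, h2, s, f3, f4, f5, f6, f7⟩ | ⟨rfl, h2, h3⟩)
      · have := tU_mono h2 (p := s+1) (q := τ) (by omega) hτ
        by_cases h : k < Y.ph (lab c) τ (.u c)
        · right; exact ⟨rfl, h2, h⟩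
        · left; exact ⟨rfl, h2, by omega, by omega⟩
      · have := tU_mono h2 (p := p) (q := τ) (by omega) hτ
        right; exact ⟨rfl, h2, by omega⟩
    · rw [Finset.disjoint_left]
      intro c; simp only [mem_filter, mem_univ, true_and]
      rintro ⟨rfl, e2, s, f3, f4, f5, f6, f7⟩ ⟨_, _, h3⟩
      have := tU_mono e2 f3 (by omega)
      omega
  have hV' : #{c | lab c = i ∧ Y.tT c ∧ ∃ s, τ ≤ s ∧ s < q ∧ Y.ph i s (.t c) = Y.ph i (s+1) (.t c) + 1 ∧ 
      D - 1 < Y.ph i s (.t c) ∧ Y.ph i s (.t c) ≤ k - 1} + Y.Tg i q ≤ 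
      #{c | lab c = i ∧ Y.tT c ∧ D ≤ Y.ph i τ (.t c) ∧ Y.ph i τ (.t c) ≤ k} + Y.Tg i τ := by
    unfold Tg
    rw [← Finset.card_union_of_disjoint]
    · refine le_trans (Finset.card_le_card ?_) (Finset.card_union_le _ _)
      intro c; simp only [mem_filter, mem_union, mem_univ, true_and]
      rintro (⟨rfl, h2, s, f3, f4, f5, f6, f7⟩ | ⟨rfl, h2, h3⟩)
      · have := tT_anti h2 (p := τ) (q := s) (by omega) (by omega)
        by_cases h : k < Y.ph (lab c) τ (.t c)
        · right; exact ⟨rfl, h2, h⟩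
        · left; exact ⟨rfl, h2, by omega, by omega⟩
      · have := tT_anti h2 (p := τ) (q := q) (by omega) (by omega)
        right; exact ⟨rfl, h2, by omega⟩
    · rw [Finset.disjoint_left]
      intro c; simp only [mem_filter, mem_univ, true_and]
      rintro ⟨rfl, e2, s, f3, f4, f5, f6, f7⟩ ⟨_, _, h3⟩
      have := tT_anti e2 (p := s) (q := q) (by omega) (by omega)
      omega
  have hT1 := TUg_le (Y := Y) i hτ
  have hT2 := G.TUg_ge i (τ := q) (by omega)
  have hgrow : Y.Ug i p + (2 * L + w + 1) ≤ Y.Ug i q := by omega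
  clear hLP hRP hmid hV hV' hT1 hT2
  -- occupants
  have hbad : ∀ s, p ≤ s → s ≤ q → ∀ z, Y.pos s z = .nook i → ¬ Own lab i z → 
      ∃ r, r * k ≤ Y.Ug i s + k' ∧ Y.Ug i s ≤ r * k + (n + 6) * k' := by
    intro s h1 h2 z h3 h4
    refine G.bad hsl hW hk hk' (by omega) h3 h4 ?_
    rintro o rfl
    have := hnoit s h1 h2 o
    rw [Y.ph_nook i h3] at this
    omega
  have hstep : ∀ s, p ≤ s → s < q → Y.Ug i (s+1) ≤ Y.Ug i s + 1 := fun s _ h => Ug_step i (by omega)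
  have hkeyint : ∀ x y, p ≤ x → x ≤ y → y ≤ q → Y.Ug i x + L ≤ Y.Ug i y → 
      ∃ s r, x ≤ s ∧ s ≤ y ∧ r * k ≤ Y.Ug i s + k' ∧ Y.Ug i s ≤ r * k + (n + 6) * k' := by
    intro x y h1 h2 h3 h4
    by_contra hc
    have := G.chain (i := i) h2 (by omega) (by
      intro s a b z hz
      by_contra hno
      obtain ⟨r, hr⟩ := hbad s (by omega) (by omega) z hz hno
      exact hc ⟨s, r, a, b, hr⟩)
    omega
  obtain ⟨y1, a1, a2, a3⟩ := ivt_nat (Y.Ug i) (p := p) (q := q) (v := Y.Ug i p + L) (by omega) hstep (by omega) (by omega)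
  obtain ⟨x2, b1, b2, b3⟩ := ivt_nat (Y.Ug i) (p := y1) (q := q) (v := Y.Ug i p + L + w + 1) (by omega) (fun s h1 h2 => hstep s (by omega) h2) (by omega) (by omega)
  obtain ⟨y2, c1, c2, c3⟩ := ivt_nat (Y.Ug i) (p := x2) (q := q) (v := Y.Ug i p + 2 * L + w + 1) (by omega) (fun s h1 h2 => hstep s (by omega) h2) (by omega) (by omega)
  obtain ⟨s1, r1, d1, d2, d3, d4⟩ := hkeyint p y1 le_rfl a1 a2 (by omega)
  obtain ⟨s2, r2, e1, e2, e3, e4⟩ := hkeyint x2 y2 (by omega) c1 c2 (by omega)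
  have m1 := Ug_mono (Y := Y) i (p := p) (q := s1) d1 (by omega)
  have m2 := Ug_mono (Y := Y) i (p := s1) (q := y1) d2 (by omega)
  have m3 := Ug_mono (Y := Y) i (p := x2) (q := s2) e1 (by omega)
  have m4 := Ug_mono (Y := Y) i (p := s2) (q := y2) e2 (by omega)
  have hw' : w = (n + 6) * k' + k' := by rw [hw]; ring
  rcases Nat.lt_or_ge r1 r2 with h | h
  · have : (r1 + 1) * k ≤ r2 * k := Nat.mul_le_mul_right _ h
    rw [Nat.add_mul] at this
    omega
  · have : r2 * k ≤ r1 * k := Nat.mul_le_mul_right _ h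
    omega

end Sys
end UnweightedTS

namespace UnweightedTS
open Finset
open scoped Classical

/-- counting below a threshold -/
theorem Wc_pig {m N : ℕ} (lab : Fin N → Fin m) (i : Fin m) (f : Fin N → ℕ) (L : ℕ) (hL : lln lab i = L)
    (hf : ∀ c, lab c = i → f c < L)
    (hinj : ∀ c c', lab c = i → lab c' = i → f c = f c' → c = c')
    {g q : ℕ} (hq : q ≤ L) (hg : ∀ c, lab c = i → (c.val < g ↔ f c < q)) : Sys.Wc lab i g = q := by
  have h1 : Sys.Wc lab i g ≤ q := by
    unfold Sys.Wc
    rw [← Finset.card_range q]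
    apply Finset.card_le_card_of_injOn f
    · intro c hc
      simp only [coe_filter, mem_univ, true_and, Set.mem_ofPred_eq] at hc
      simpa using (hg c hc.1).1 hc.2
    · intro c hc c' hc' h
      simp only [coe_filter, mem_univ, true_and, Set.mem_ofPred_eq] at hc hc'
      exact hinj c c' hc.1 hc'.1 h
  have h2 : #{c : Fin N | lab c = i ∧ ¬ c.val < g} ≤ L - q := by
    rw [← Nat.card_Ico]
    apply Finset.card_le_card_of_injOn f
    · intro c hc
      simp only [coe_filter, mem_univ, true_and, Set.mem_ofPred_eq] at hc
      have := hf c hc.1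
      have := (hg c hc.1)
      simp only [coe_Ico, Set.mem_Ico]
      omega
    · intro c hc c' hc' h
      simp only [coe_filter, mem_univ, true_and, Set.mem_ofPred_eq] at hc hc'
      exact hinj c c' hc.1 hc'.1 h
  have h3 : lln lab i = Sys.Wc lab i g + #{c : Fin N | lab c = i ∧ ¬ c.val < g} := by
    unfold lln Sys.Wc
    rw [← Finset.filter_filter, ← Finset.filter_filter, Finset.card_filter_add_card_filter_not]
  omega

variable {m n : ℕ}

/-- segments with offsets -/
abbrev Seg (m n : ℕ) := (Fin n × Fin (kk m n)) ⊕ (Fin m × Fin n × Fin (kk' m n))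

/-- block length -/
def Bl (m n : ℕ) : ℕ := kk m n + m * kk' m n

/-- index of a segment position in the word -/
def sIdx (s : Fin n → Fin m) : Seg m n → ℕ
  | .inl (j, a) => j.val * Bl m n + a.val
  | .inr (i, j, a) => j.val * Bl m n + kk m n + rho s i j * kk' m n + a.val

/-- label of a segment position -/
def sLab (s : Fin n → Fin m) : Seg m n → Fin m
  | .inl (j, _) => s j
  | .inr (i, _, _) => i

/-- block of a segment position -/
def sBlk : Seg m n → Fin n
  | .inl (j, _) => j
  | .inr (_, j, _) => j

/-- position in the slot gadget -/
def sPos (s : Fin n → Fin m) : Seg m n → ℕ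
  | .inl (j, a) => offQ s (s j) j + a.val
  | .inr (i, j, a) => offQ s i j + (if s j = i then kk m n else 0) + a.val

theorem rho_lt (s : Fin n → Fin m) (hcons : ∀ (j : Fin n) (h : j.val + 1 < n), s j ≠ s ⟨j.val + 1, h⟩)
    (i : Fin m) (j : Fin n) : rho s i j < m ∧ 
     (i ≠ s j → some i ≠ nxt s j → (if (nxt s j).isSome then 1 else 0) ≤ rho s i j ∧ rho s i j + 1 < m) := by
  have hm : 0 < m := i.pos
  unfold rho
  by_cases h1 : some i = nxt s j
  · rw [if_pos h1]; exact ⟨hm, fun _ h => absurd h1 h⟩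
  rw [if_neg h1]
  by_cases h2 : i = s j
  · rw [if_pos h2]; exact ⟨by omega, fun h => absurd h2 h⟩
  rw [if_neg h2]
  have key : (if (nxt s j).isSome then 1 else 0) +
    (Finset.univ.filter fun i' : Fin m =>
      i'.val < i.val ∧ i' ≠ s j ∧ some i' ≠ nxt s j).card + 1 < m := by
    rcases hx : nxt s j with _ | b
    · have hsub : (Finset.univ.filter fun i' : Fin m => i'.val < i.val ∧ i' ≠ s j ∧ some i' ≠ none) ⊆
          (Finset.univ.erase (s j)).erase i := by
        intro x; simp only [mem_filter, mem_erase, mem_univ, true_and]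
        rintro ⟨a, b, c⟩; exact ⟨by rintro rfl; omega, b, trivial⟩
      have := Finset.card_le_card hsub
      rw [Finset.card_erase_of_mem (by simp [h2]), Finset.card_erase_of_mem (by simp)] at this
      simp only [card_univ, Fintype.card_fin] at this
      have : 1 < m := by
        have := i.isLt; have := (s j).isLt
        have : i.val ≠ (s j).val := fun h => h2 (Fin.ext h)
        omega
      simp only [Option.isSome_none]
      simp at *
      omega
    · have hb : b ≠ s j := by
        unfold nxt at hx
        split_ifs at hx with h
        have := hcons j h
        rintro rfl
        simp at hx
        exact this hx.symm
      rw [hx] at h1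
      have h1' : i ≠ b := fun h => h1 (by rw [h])
      have hsub : (Finset.univ.filter fun i' : Fin m => i'.val < i.val ∧ i' ≠ s j ∧ some i' ≠ some b) ⊆
          ((Finset.univ.erase (s j)).erase b).erase i := by
        intro x; simp only [mem_filter, mem_erase, mem_univ, true_and]
        rintro ⟨a, b, c⟩; exact ⟨by rintro rfl; omega, fun h => c (by rw [h]), b, trivial⟩
      have := Finset.card_le_card hsub
      rw [Finset.card_erase_of_mem (by simp [h2, h1']), Finset.card_erase_of_mem (by simp [hb]), Finset.card_erase_of_mem (by simp)] at this
      simp only [card_univ, Fintype.card_fin] at this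
      have h3 : 3 ≤ m := by
        have := i.isLt; have := (s j).isLt; have := b.isLt
        have : i.val ≠ (s j).val := fun h => h2 (Fin.ext h)
        have : i.val ≠ b.val := fun h => h1' (Fin.ext h)
        have : b.val ≠ (s j).val := fun h => hb (Fin.ext h)
        omega
      simp only [Option.isSome_some, if_true]
      omega
  exact ⟨by omega, fun _ _ => ⟨by omega, by omega⟩⟩

theorem rho_inj (s : Fin n → Fin m) (hcons : ∀ (j : Fin n) (h : j.val + 1 < n), s j ≠ s ⟨j.val + 1, h⟩)
    (j : Fin n) {i i' : Fin m} (h : rho s i j = rho s i' j) : i = i' := by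
  have main : ∀ i i' : Fin m, i < i' → rho s i j ≠ rho s i' j := by
    intro i i' hi h
    have a := (rho_lt s hcons i j).2
    have a' := (rho_lt s hcons i' j).2
    have hne : i ≠ i' := ne_of_lt hi
    have hm : 1 < m := by have := i'.isLt; have : i.val < i'.val := hi; omega
    by_cases h1 : some i = nxt s j
    · have e : rho s i j = 0 := by unfold rho; rw [if_pos h1]
      have h1' : some i' ≠ nxt s j := by rw [← h1]; simpa using hne.symm
      by_cases h2' : i' = s j
      · have : rho s i' j = m - 1 := by unfold rho; rw [if_neg h1', if_pos h2']
        omega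
      · have := (a' h2' h1').1
        rw [← h1] at this; simp at this; omega
    by_cases h1' : some i' = nxt s j
    · have e : rho s i' j = 0 := by unfold rho; rw [if_pos h1']
      by_cases h2 : i = s j
      · have : rho s i j = m - 1 := by unfold rho; rw [if_neg h1, if_pos h2]
        omega
      · have := (a h2 h1).1
        rw [← h1'] at this; simp at this; omega
    by_cases h2 : i = s j
    · have e : rho s i j = m - 1 := by unfold rho; rw [if_neg h1, if_pos h2]
      have := (a' (by rw [← h2]; exact hne.symm) h1').2
      omega
    by_cases h2' : i' = s j
    · have e : rho s i' j = m - 1 := by unfold rho; rw [if_neg h1', if_pos h2']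
      have := (a h2 h1).2
      omega
    unfold rho at h
    rw [if_neg h1, if_neg h2, if_neg h1', if_neg h2'] at h
    have : (Finset.univ.filter fun x : Fin m => x.val < i.val ∧ x ≠ s j ∧ some x ≠ nxt s j).card < 
       (Finset.univ.filter fun x : Fin m => x.val < i'.val ∧ x ≠ s j ∧ some x ≠ nxt s j).card := by
      apply Finset.card_lt_card
      constructor
      · intro x; simp only [mem_filter, mem_univ, true_and]
        rintro ⟨a, b⟩; exact ⟨by have : i.val < i'.val := hi; omega, b⟩
      · intro hh
        have := @hh i (by simp only [mem_filter, mem_univ, true_and]; exact ⟨hi, h2, h1⟩)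
        simp at this
    omega
  rcases lt_trichotomy i i' with h1 | h1 | h1
  · exact absurd h (main _ _ h1)
  · exact h1
  · exact absurd h.symm (main _ _ h1)

section
variable (s : Fin n → Fin m) (hcons : ∀ (j : Fin n) (h : j.val + 1 < n), s j ≠ s ⟨j.val + 1, h⟩)

theorem sIdx_blk (hcons : ∀ (j : Fin n) (h : j.val + 1 < n), s j ≠ s ⟨j.val + 1, h⟩) (x : Seg m n) : (sBlk x).val * Bl m n ≤ sIdx s x ∧ sIdx s x < (sBlk x).val * Bl m n + Bl m n := by
  rcases x with ⟨j, a⟩ | ⟨i, j, a⟩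
  · have := a.isLt
    simp only [sBlk, sIdx, Bl]
    constructor
    · omega
    · have : 0 ≤ m * kk' m n := Nat.zero_le _
      omega
  · have := a.isLt
    have h := (rho_lt s hcons i j).1
    have : rho s i j * kk' m n + kk' m n ≤ m * kk' m n := by
      rw [← Nat.succ_mul]; exact Nat.mul_le_mul_right _ h
    simp only [sBlk, sIdx, Bl]
    constructor <;> omega

theorem sIdx_inj (hcons : ∀ (j : Fin n) (h : j.val + 1 < n), s j ≠ s ⟨j.val + 1, h⟩) : Function.Injective (sIdx s) := by
  intro x y h
  have hx := sIdx_blk s hcons x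
  have hy := sIdx_blk s hcons y
  have hb : sBlk x = sBlk y := by
    apply Fin.ext
    rcases lt_trichotomy (sBlk x).val (sBlk y).val with h1 | h1 | h1
    · have : (sBlk x).val * Bl m n + Bl m n ≤ (sBlk y).val * Bl m n := by
        rw [← Nat.succ_mul]; exact Nat.mul_le_mul_right _ h1
      omega
    · exact h1
    · have : (sBlk y).val * Bl m n + Bl m n ≤ (sBlk x).val * Bl m n := by
        rw [← Nat.succ_mul]; exact Nat.mul_le_mul_right _ h1
      omega
  rcases x with ⟨j, a⟩ | ⟨i, j, a⟩ <;> rcases y with ⟨j', a'⟩ | ⟨i', j', a'⟩ <;> simp only [sBlk] at hb <;> subst hb <;>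
    simp only [sIdx] at h
  · have : a = a' := Fin.ext (by omega)
    rw [this]
  · have := a.isLt
    omega
  · have := a'.isLt
    omega
  · have ha := a.isLt
    have ha' := a'.isLt
    have hr : rho s i j = rho s i' j := by
      rcases lt_trichotomy (rho s i j) (rho s i' j) with h1 | h1 | h1
      · have : rho s i j * kk' m n + kk' m n ≤ rho s i' j * kk' m n := by
          rw [← Nat.succ_mul]; exact Nat.mul_le_mul_right _ h1
        omega
      · exact h1
      · have : rho s i' j * kk' m n + kk' m n ≤ rho s i j * kk' m n := by
          rw [← Nat.succ_mul]; exact Nat.mul_le_mul_right _ h1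
        omega
    have := rho_inj s hcons j hr
    subst this
    have : a = a' := Fin.ext (by omega)
    rw [this]

theorem lenOrd_eq : lenOrd m n = n * Bl m n := by unfold lenOrd Bl; ring

theorem sIdx_lt (hcons : ∀ (j : Fin n) (h : j.val + 1 < n), s j ≠ s ⟨j.val + 1, h⟩) (x : Seg m n) : sIdx s x < lenOrd m n := by
  have hx := sIdx_blk s hcons x
  have : (sBlk x).val * Bl m n + Bl m n ≤ n * Bl m n := by
    rw [← Nat.succ_mul]; exact Nat.mul_le_mul_right _ (sBlk x).isLt
  rw [lenOrd_eq]; omega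

/-- the word positions -/
noncomputable def sEq : Seg m n ≃ Fin (lenOrd m n) :=
  Equiv.ofBijective (fun x => ⟨sIdx s x, sIdx_lt s hcons x⟩) (by
    rw [Fintype.bijective_iff_injective_and_card]
    refine ⟨fun x y h => sIdx_inj s hcons (by simpa using h), ?_⟩
    rw [Fintype.card_fin]
    simp only [Fintype.card_sum, Fintype.card_prod, Fintype.card_fin, lenOrd]
    ring)

theorem sEq_val (x : Seg m n) : (sEq s hcons x).val = sIdx s x := rfl

/-- labels of word positions -/
noncomputable def wlab (c : Fin (lenOrd m n)) : Fin m := sLab s ((sEq s hcons).symm c)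

theorem wlab_sEq (x : Seg m n) : wlab s hcons (sEq s hcons x) = sLab s x := by simp [wlab]

/-- initial part of slot gadget before block `j` -/
noncomputable def Qf (_ : ∀ (j : Fin n) (h : j.val + 1 < n), s j ≠ s ⟨j.val + 1, h⟩) (i : Fin m) (j : ℕ) : ℕ :=
  ∑ j' ∈ Finset.univ.filter (fun j' : Fin n => j'.val < j), (kk' m n + if s j' = i then kk m n else 0)

theorem Qf_succ (i : Fin m) (j : Fin n) : Qf s hcons i (j.val + 1) = Qf s hcons i j.val + (kk' m n + if s j = i then kk m n else 0) := by
  unfold Qf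
  have : (Finset.univ.filter (fun j' : Fin n => j'.val < j.val + 1)) = insert j (Finset.univ.filter (fun j' : Fin n => j'.val < j.val)) := by
    ext x; simp only [mem_filter, mem_univ, true_and, mem_insert, Fin.ext_iff]; omega
  rw [this, Finset.sum_insert (by simp)]
  ring

theorem Qf_mono (i : Fin m) {j j' : ℕ} (h : j ≤ j') : Qf s hcons i j ≤ Qf s hcons i j' := by
  unfold Qf
  apply Finset.sum_le_sum_of_subset
  intro x; simp only [mem_filter, mem_univ, true_and]; omega

theorem Qf_top (i : Fin m) : Qf s hcons i n = lenSlot s i := by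
  unfold Qf lenSlot cnt
  rw [Finset.filter_true_of_mem (by intro x _; exact x.isLt), Finset.sum_add_distrib, ← Finset.sum_filter]
  simp
  ring

theorem Qf_form (i : Fin m) {j : ℕ} (hj : j ≤ n) : ∃ p, Qf s hcons i j = p * kk m n + j * kk' m n := by
  induction j with
  | zero => exact ⟨0, by simp [Qf]⟩
  | succ j ih =>
    obtain ⟨p, hp⟩ := ih (by omega)
    have := Qf_succ s hcons i ⟨j, by omega⟩
    simp only at this
    rw [this, hp]
    split_ifs
    · exact ⟨p + 1, by ring⟩
    · exact ⟨p, by ring⟩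

theorem sPos_blk (x : Seg m n) : Qf s hcons (sLab s x) (sBlk x).val ≤ sPos s x ∧
    sPos s x < Qf s hcons (sLab s x) ((sBlk x).val + 1) := by
  rw [Qf_succ]
  rcases x with ⟨j, a⟩ | ⟨i, j, a⟩
  · have := a.isLt
    have h : offQ s (s j) j = Qf s hcons (s j) j.val := rfl
    simp only [sLab, sBlk, sPos, h, if_true]
    omega
  · have := a.isLt
    have h : offQ s i j = Qf s hcons i j.val := rfl
    change Qf s hcons i j.val ≤ offQ s i j + (if s j = i then kk m n else 0) + a.val ∧
      offQ s i j + (if s j = i then kk m n else 0) + a.val < Qf s hcons i j.val + (kk' m n + if s j = i then kk m n else 0)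
    rw [h]
    omega

theorem sPos_mono (hcons : ∀ (j : Fin n) (h : j.val + 1 < n), s j ≠ s ⟨j.val + 1, h⟩) {x y : Seg m n} (hl : sLab s x = sLab s y) (h : sIdx s x < sIdx s y) : sPos s x < sPos s y := by
  have hx := sIdx_blk s hcons x
  have hy := sIdx_blk s hcons y
  have hx' := sPos_blk s hcons x
  have hy' := sPos_blk s hcons y
  rcases lt_trichotomy (sBlk x).val (sBlk y).val with h1 | h1 | h1
  · have := Qf_mono s hcons (sLab s x) (j := (sBlk x).val + 1) (j' := (sBlk y).val) h1
    rw [hl] at this hx'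
    omega
  · have hb : sBlk x = sBlk y := Fin.ext h1
    rcases x with ⟨j, a⟩ | ⟨i, j, a⟩ <;> rcases y with ⟨j', a'⟩ | ⟨i', j', a'⟩ <;> simp only [sBlk] at hb <;> subst hb <;>
    simp only [sIdx] at h <;> simp only [sPos] <;> simp only [sLab] at hl
    · omega
    · have := a.isLt
      subst hl
      simp only [if_true]
      omega
    · have := a'.isLt
      omega
    · subst hl
      omega
  · have : (sBlk y).val * Bl m n + Bl m n ≤ (sBlk x).val * Bl m n := by
      rw [← Nat.succ_mul]; exact Nat.mul_le_mul_right _ h1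
    omega

theorem lln_eq (i : Fin m) : lln (wlab s hcons) i = lenSlot s i := by
  unfold lln
  have e : #{c | wlab s hcons c = i} = #{x : Seg m n | sLab s x = i} := by
    symm
    apply Finset.card_bij (fun x _ => sEq s hcons x)
    · intro x; simp [wlab_sEq]
    · intro x _ y _ h; simpa using h
    · intro c hc
      refine ⟨(sEq s hcons).symm c, ?_, by simp⟩
      rw [mem_filter] at hc ⊢
      exact ⟨mem_univ _, hc.2⟩
  rw [e, Finset.card_filter, Fintype.sum_sum_type]
  change (∑ x : Fin n × Fin (kk m n), if s x.1 = i then 1 else 0) + 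
    (∑ x : Fin m × Fin n × Fin (kk' m n), if x.1 = i then 1 else 0) = _
  simp only [Fintype.sum_prod_type]
  unfold lenSlot cnt
  rw [Finset.card_filter, Finset.sum_mul]
  congr 1
  · apply Finset.sum_congr rfl; intro j _
    by_cases hc : s j = i
    · simp only [if_pos hc]; simp
    · simp only [if_neg hc]; simp
  · rw [Finset.sum_eq_single i]
    · simp
    · intro b _ hb
      simp only [if_neg hb]; simp
    · intro h; exact absurd (mem_univ _) h

/-- position function on word indices -/
noncomputable def wpos (c : Fin (lenOrd m n)) : ℕ := sPos s ((sEq s hcons).symm c)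

theorem wpos_mono {c c' : Fin (lenOrd m n)} (hl : wlab s hcons c = wlab s hcons c') (h : c < c') : wpos s hcons c < wpos s hcons c' := by
  apply sPos_mono s hcons hl
  rw [← sEq_val s hcons, ← sEq_val s hcons]
  simpa using h

theorem wpos_lt (c : Fin (lenOrd m n)) : wpos s hcons c < lenSlot s (wlab s hcons c) := by
  have := (sPos_blk s hcons ((sEq s hcons).symm c)).2
  have h2 := Qf_mono s hcons (sLab s ((sEq s hcons).symm c)) (j := (sBlk ((sEq s hcons).symm c)).val + 1) (j' := n) (sBlk _).isLt
  rw [Qf_top] at h2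
  unfold wpos wlab
  omega

theorem wpos_iff {c c' : Fin (lenOrd m n)} (hl : wlab s hcons c = wlab s hcons c') : c < c' ↔ wpos s hcons c < wpos s hcons c' := by
  constructor
  · exact wpos_mono s hcons hl
  · intro h
    by_contra h'
    push Not at h'
    rcases h'.lt_or_eq with h1 | h1
    · have := wpos_mono s hcons hl.symm h1; omega
    · subst h1; omega

theorem wpos_inj {c c' : Fin (lenOrd m n)} (hl : wlab s hcons c = wlab s hcons c') (h : wpos s hcons c = wpos s hcons c') : c = c' := by
  rcases lt_trichotomy c c' with h1 | h1 | h1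
  · have := wpos_mono s hcons hl h1; omega
  · exact h1
  · have := wpos_mono s hcons hl.symm h1; omega

theorem Wc_wpos (i : Fin m) {g q : ℕ} (hq : q ≤ lenSlot s i) (hg : ∀ c, wlab s hcons c = i → (c.val < g ↔ wpos s hcons c < q)) :
    Sys.Wc (wlab s hcons) i g = q :=
  Wc_pig _ i (wpos s hcons) _ (lln_eq s hcons i) (fun c hc => hc ▸ wpos_lt s hcons c) 
    (fun _ _ h h' => wpos_inj s hcons (h.trans h'.symm)) hq hg

theorem rnk_wpos (c : Fin (lenOrd m n)) : rnk (wlab s hcons) c = wpos s hcons c := by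
  have h := Wc_wpos s hcons (wlab s hcons c) (g := c.val) (q := wpos s hcons c) (wpos_lt s hcons c).le
    (fun c' h' => wpos_iff s hcons h')
  rw [← h]
  unfold rnk Sys.Wc
  congr 1
  ext x; simp only [mem_filter, mem_univ, true_and]
  exact and_comm

theorem Wc_blk (i : Fin m) {j : ℕ} (hj : j ≤ n) : Sys.Wc (wlab s hcons) i (j * Bl m n) = Qf s hcons i j := by
  apply Wc_wpos
  · rw [← Qf_top s hcons]; exact Qf_mono s hcons i hj
  · intro c hc
    obtain ⟨x, rfl⟩ := (sEq s hcons).surjective c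
    rw [wlab_sEq] at hc
    have e : wpos s hcons (sEq s hcons x) = sPos s x := by simp [wpos]
    rw [e, sEq_val]
    have hx := sIdx_blk s hcons x
    have hx' := sPos_blk s hcons x
    rw [hc] at hx'
    rcases Nat.lt_or_ge (sBlk x).val j with h1 | h1
    · have := Qf_mono s hcons i (j := (sBlk x).val + 1) (j' := j) h1
      have : (sBlk x).val * Bl m n + Bl m n ≤ j * Bl m n := by
        rw [← Nat.succ_mul]; exact Nat.mul_le_mul_right _ h1
      constructor <;> intro _ <;> omega
    · have := Qf_mono s hcons i h1
      have : j * Bl m n ≤ (sBlk x).val * Bl m n := Nat.mul_le_mul_right _ h1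
      constructor <;> intro _ <;> omega

theorem word_WL (hk : kk' m n < kk m n) : Sys.WL (wlab s hcons) (kk m n) (kk' m n) n := by
  intro i i' g1 g2 hii hg hgN h1 h2
  have hB : 0 < Bl m n := by unfold Bl; omega
  rw [lenOrd_eq] at hgN
  have hmono : ∀ l g g', g ≤ g' → Sys.Wc (wlab s hcons) l g ≤ Sys.Wc (wlab s hcons) l g' := fun l g g' h => Sys.Wc_le l h
  obtain ⟨j, hj1, hj2⟩ : ∃ j, j * Bl m n ≤ g1 ∧ g1 < (j + 1) * Bl m n :=
    ⟨g1 / Bl m n, Nat.div_mul_le_self _ _, by rw [mul_comm]; exact Nat.lt_mul_div_succ _ hB⟩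
  have hjn : j < n := by
    by_contra hc
    have : n * Bl m n ≤ j * Bl m n := Nat.mul_le_mul_right _ (by omega)
    have : g1 = g2 := by omega
    subst this
    omega
  have hQ := Qf_succ s hcons i ⟨j, hjn⟩
  simp only at hQ
  obtain ⟨p, hp⟩ := Qf_form s hcons i hjn.le
  have a1 := hmono i _ _ hj1
  have a2 := hmono i _ _ hj2.le
  rw [Wc_blk s hcons i (by omega)] at a1 a2
  have hjk : (j + 1) * kk' m n ≤ n * kk' m n := Nat.mul_le_mul_right _ hjn
  have hjk2 : (j + 1) * kk' m n = j * kk' m n + kk' m n := by ring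
  have hn3 : (n + 3) * kk' m n = n * kk' m n + 3 * kk' m n := by ring
  have hy : Sys.Wc (wlab s hcons) i g2 ≤ Qf s hcons i j + 2 * kk' m n + kk m n := by
    rcases Nat.lt_or_ge (j + 1) n with h3 | h3
    · have hQ2 := Qf_succ s hcons i ⟨j + 1, h3⟩
      have hQ' := Qf_succ s hcons i' ⟨j + 1, h3⟩
      simp only at hQ2 hQ'
      have hg2 : g2 ≤ (j + 2) * Bl m n := by
        by_contra hc
        push Not at hc
        have b1 := hmono i' _ _ hc.le
        rw [Wc_blk s hcons i' (by omega)] at b1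
        have b2 := hmono i' _ _ hj2.le
        rw [Wc_blk s hcons i' (by omega)] at b2
        rw [show j + 2 = j + 1 + 1 from rfl, hQ'] at b1
        omega
      have b1 := hmono i _ _ hg2
      rw [Wc_blk s hcons i (by omega), show j + 2 = j + 1 + 1 from rfl, hQ2, hQ] at b1
      have := hcons ⟨j, hjn⟩ h3
      split_ifs at b1 with c1 c2 c2
      · exact absurd (c1.trans c2.symm) this
      all_goals omega
    · have hg2 : g2 ≤ (j + 1) * Bl m n := by
        rw [show j + 1 = n by omega]; exact hgN
      have b1 := hmono i _ _ hg2
      rw [Wc_blk s hcons i (by omega), hQ] at b1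
      split_ifs at b1 <;> omega
  refine ⟨p, by omega, ?_, by omega⟩
  omega

theorem offs (hcons : ∀ (j : Fin n) (h : j.val + 1 < n), s j ≠ s ⟨j.val + 1, h⟩) (i : Fin m) (j : Fin n) : tOffP s i j + (offQ s i j + (kk' m n + if s j = i then kk m n else 0)) = lenSlot s i := by
  have h : offQ s i j = Qf s hcons i j.val := rfl
  rw [h, ← Qf_succ, ← Qf_top s hcons]
  unfold tOffP Qf
  rw [add_comm, ← Finset.sum_union]
  · congr 1
    ext x; simp only [mem_union, mem_filter, mem_univ, true_and]; omega
  · rw [Finset.disjoint_left]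
    intro x; simp only [mem_filter, mem_univ, true_and]; omega
end

end UnweightedTS

namespace UnweightedTS
open Finset
open scoped Classical
variable {m n : ℕ}

theorem swapV_invol {V : Type*} [DecidableEq V] (e : V × V) (v : V) : swapV e (swapV e v) = v := by
  unfold swapV
  split_ifs <;> simp_all

theorem swapV_left {V : Type*} [DecidableEq V] (e : V × V) : swapV e e.1 = e.2 := by simp [swapV]
theorem swapV_right {V : Type*} [DecidableEq V] (e : V × V) : swapV e e.2 = e.1 := by
  unfold swapV; split_ifs <;> simp_all

theorem placeAt_zero (σ : List (Vtx m × Vtx m)) (f : Tok m n → Vtx m) : placeAt σ f 0 = f := rfl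

theorem placeAt_succ (σ : List (Vtx m × Vtx m)) (f : Tok m n → Vtx m) {τ : ℕ} (h : τ < σ.length) (x : Tok m n) :
    placeAt σ f (τ + 1) x = swapV (σ.get ⟨τ, h⟩) (placeAt σ f τ x) := by
  unfold placeAt applySwaps
  rw [List.take_add_one, List.getElem?_eq_getElem h, List.foldl_append]
  rfl

theorem adj_edg (s : Fin n → Fin m) {u v : Vtx m} (h : (TheGraph s).Adj u v) : Edg (kk m n) u v ∨ Edg (kk m n) v u := by
  unfold TheGraph Tree at h
  rw [SimpleGraph.fromRel_adj] at h
  obtain ⟨-, h | h⟩ := h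
  · cases u <;> cases v <;> simp only [rel] at h
    · obtain ⟨rfl, _⟩ := h; right; exact .o0
    · obtain ⟨rfl, _⟩ := h; left; exact .s0 _
    · obtain ⟨rfl, _⟩ := h; right; exact .o _
    · obtain ⟨rfl, rfl, _⟩ := h; left; exact .s _ _
    · obtain ⟨rfl, h, _⟩ := h; left; exact .n _ _ h
  · cases v <;> cases u <;> simp only [rel] at h
    · obtain ⟨rfl, _⟩ := h; left; exact .o0
    · obtain ⟨rfl, _⟩ := h; right; exact .s0 _
    · obtain ⟨rfl, _⟩ := h; left; exact .o _
    · obtain ⟨rfl, rfl, _⟩ := h; right; exact .s _ _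
    · obtain ⟨rfl, h, _⟩ := h; right; exact .n _ _ h

/-- vertices of the construction -/
def Vl (s : Fin n → Fin m) : Vtx m → Prop
  | .root => True
  | .ord d => d < lenOrd m n
  | .slot i d => d < lenSlot s i
  | .nook _ => True

theorem rel_vl (s : Fin n → Fin m) {u v : Vtx m} (h : rel (lenSlot s) (lenOrd m n) (kk m n) u v) : Vl s u ∧ Vl s v := by
  cases u <;> cases v <;> simp only [rel] at h <;> simp only [Vl, true_and, and_true]
  · obtain ⟨rfl, h⟩ := h; exact h
  · obtain ⟨rfl, h⟩ := h; exact h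
  · obtain ⟨rfl, h⟩ := h; omega
  · obtain ⟨rfl, rfl, h⟩ := h; omega
  · exact h.2.2

theorem adj_vl (s : Fin n → Fin m) {u v : Vtx m} (h : (TheGraph s).Adj u v) : Vl s u ∧ Vl s v := by
  unfold TheGraph Tree at h
  rw [SimpleGraph.fromRel_adj] at h
  obtain ⟨-, h | h⟩ := h
  · exact rel_vl s h
  · exact (rel_vl s h).symm

theorem walk_ord (s : Fin n → Fin m) : ∀ d, d < lenOrd m n → ∃ w : (TheGraph s).Walk .root (.ord d), w.length = d + 1
  | 0, h => ⟨.cons (v := .ord 0) (by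
      unfold TheGraph Tree
      rw [SimpleGraph.fromRel_adj]
      exact ⟨by simp, .inl ⟨rfl, h⟩⟩) .nil, rfl⟩
  | d + 1, h => by
    obtain ⟨w, hw⟩ := walk_ord s d (by omega)
    refine ⟨w.append (.cons (v := .ord (d+1)) (by
      unfold TheGraph Tree
      rw [SimpleGraph.fromRel_adj]
      exact ⟨by simp, .inl ⟨rfl, h⟩⟩) .nil), ?_⟩
    simp [hw]

theorem walk_slot (s : Fin n → Fin m) (i : Fin m) : ∀ d, d < lenSlot s i → ∃ w : (TheGraph s).Walk .root (.slot i d), w.length = d + 1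
  | 0, h => ⟨.cons (v := .slot i 0) (by
      unfold TheGraph Tree
      rw [SimpleGraph.fromRel_adj]
      exact ⟨by simp, .inl ⟨rfl, h⟩⟩) .nil, rfl⟩
  | d + 1, h => by
    obtain ⟨w, hw⟩ := walk_slot s i d (by omega)
    refine ⟨w.append (.cons (v := .slot i (d+1)) (by
      unfold TheGraph Tree
      rw [SimpleGraph.fromRel_adj]
      exact ⟨by simp, .inl ⟨rfl, rfl, h⟩⟩) .nil), ?_⟩
    simp [hw]

theorem walk_nook (s : Fin n → Fin m) (i : Fin m) (h0 : 0 < kk m n) (h : kk m n ≤ lenSlot s i) : 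
    ∃ w : (TheGraph s).Walk .root (.nook i), w.length = kk m n + 1 := by
  obtain ⟨w, hw⟩ := walk_slot s i (kk m n - 1) (by omega)
  refine ⟨w.append (.cons (v := .nook i) (by
      unfold TheGraph Tree
      rw [SimpleGraph.fromRel_adj]
      exact ⟨by simp, .inl ⟨rfl, by omega, by omega⟩⟩) .nil), ?_⟩
  rw [SimpleGraph.Walk.length_append, hw]
  simp; omega

theorem dist_os (s : Fin n → Fin m) (i : Fin m) {d e : ℕ} (h : d < lenOrd m n) (h' : e < lenSlot s i) :
    (TheGraph s).dist (.ord d) (.slot i e) ≤ d + e + 2 := by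
  obtain ⟨w, hw⟩ := walk_ord s d h
  obtain ⟨w', hw'⟩ := walk_slot s i e h'
  have := SimpleGraph.dist_le (w.reverse.append w')
  rw [SimpleGraph.Walk.length_append, SimpleGraph.Walk.length_reverse] at this
  omega

theorem walk_ph (s : Fin n → Fin m) (i : Fin m) {u v : Vtx m} (w : (TheGraph s).Walk u v) :
    phv (kk m n) i v ≤ phv (kk m n) i u + w.length := by
  induction w with
  | nil => simp
  | cons h w ih =>
    rename_i a b c
    have : phv (kk m n) i b ≤ phv (kk m n) i a + 1 := by
      rcases adj_edg s h with h | h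
      · cases h <;> simp only [phv] <;> first | omega | (split_ifs <;> omega)
      · cases h <;> simp only [phv] <;> first | omega | (split_ifs <;> omega)
    rw [SimpleGraph.Walk.length_cons]
    omega

theorem vl_reach (s : Fin n → Fin m) (h0 : 0 < kk m n) (h : ∀ i, kk m n ≤ lenSlot s i) {v : Vtx m} (hv : Vl s v) :
    (TheGraph s).Reachable .root v := by
  cases v with
  | root => exact SimpleGraph.Reachable.refl _
  | ord d => exact (walk_ord s d hv).choose.reachable
  | slot i d => exact (walk_slot s i d hv).choose.reachable
  | nook i => exact (walk_nook s i h0 (h i)).choose.reachable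

theorem dist_ph (s : Fin n → Fin m) (h0 : 0 < kk m n) (h : ∀ i, kk m n ≤ lenSlot s i) {v : Vtx m} (hv : Vl s v) (i : Fin m) :
    phv (kk m n) i v ≤ (TheGraph s).dist .root v := by
  obtain ⟨w, hw⟩ := (vl_reach s h0 h hv).exists_walk_length_eq_dist
  have := walk_ph s i w
  rw [hw] at this
  simpa [phv] using this

section
variable (s : Fin n → Fin m) (hcons : ∀ (j : Fin n) (h : j.val + 1 < n), s j ≠ s ⟨j.val + 1, h⟩)

/-- slot token of a segment position -/
def tokT : Seg m n → Tok m n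
  | .inl x => .inr (.inr (.inl x))
  | .inr x => .inr (.inr (.inr (.inr x)))

/-- non-slot token of a segment position -/
def tokU : Seg m n → Tok m n
  | .inl x => .inr (.inl x)
  | .inr x => .inr (.inr (.inr (.inl x)))

/-- token correspondence -/
noncomputable def toTok : Tk m (lenOrd m n) → Tok m n
  | .it o => .inl o
  | .t c => tokT ((sEq s hcons).symm c)
  | .u c => tokU ((sEq s hcons).symm c)

theorem toTok_surj : Function.Surjective (toTok s hcons) := by
  intro x
  rcases x with o | x | x | x | x
  · exact ⟨.it o, rfl⟩
  · exact ⟨.u (sEq s hcons (.inl x)), by simp [toTok, tokU]⟩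
  · exact ⟨.t (sEq s hcons (.inl x)), by simp [toTok, tokT]⟩
  · exact ⟨.u (sEq s hcons (.inr x)), by simp [toTok, tokU]⟩
  · exact ⟨.t (sEq s hcons (.inr x)), by simp [toTok, tokT]⟩

theorem init_t (c : Fin (lenOrd m n)) : initTok s (toTok s hcons (.t c)) = .slot (wlab s hcons c) (rnk (wlab s hcons) c) := by
  rw [rnk_wpos]
  change initTok s (tokT ((sEq s hcons).symm c)) = .slot (sLab s ((sEq s hcons).symm c)) (sPos s ((sEq s hcons).symm c))
  generalize (sEq s hcons).symm c = x
  rcases x with ⟨j, a⟩ | ⟨i, j, a⟩ <;> rfl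

theorem init_u (c : Fin (lenOrd m n)) : initTok s (toTok s hcons (.u c)) = .ord c := by
  unfold toTok
  obtain ⟨x, rfl⟩ := (sEq s hcons).surjective c
  rw [sEq_val]
  simp only [Equiv.symm_apply_apply]
  rcases x with ⟨j, a⟩ | ⟨i, j, a⟩ <;> rfl

theorem tgt_t (π : Equiv.Perm (Option (Fin m))) (c : Fin (lenOrd m n)) : tgtTok s π (toTok s hcons (.t c)) = .ord (lenOrd m n - 1 - c) := by
  unfold toTok
  obtain ⟨x, rfl⟩ := (sEq s hcons).surjective c
  rw [sEq_val]
  simp only [Equiv.symm_apply_apply]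
  rcases x with ⟨j, a⟩ | ⟨i, j, a⟩ <;> rfl

theorem tgt_u (π : Equiv.Perm (Option (Fin m))) (c : Fin (lenOrd m n)) : 
    tgtTok s π (toTok s hcons (.u c)) = .slot (wlab s hcons c) (lln (wlab s hcons) (wlab s hcons c) - 1 - rnk (wlab s hcons) c) := by
  rw [rnk_wpos, lln_eq]
  change tgtTok s π (tokU ((sEq s hcons).symm c)) = .slot (sLab s ((sEq s hcons).symm c)) 
    (lenSlot s (sLab s ((sEq s hcons).symm c)) - 1 - sPos s ((sEq s hcons).symm c))
  generalize (sEq s hcons).symm c = x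
  rcases x with ⟨j, a⟩ | ⟨i, j, a⟩
  · have h := offs s hcons (s j) j
    rw [if_pos rfl] at h
    have := a.isLt
    simp only [tokU, tgtTok, sLab, sPos]
    congr 1
    omega
  · have h := offs s hcons i j
    have := a.isLt
    simp only [tokU, tgtTok, sLab, sPos]
    congr 1
    omega

theorem vl_iff (v : Vtx m) : Vl s v ↔ Vld (wlab s hcons) v := by
  cases v <;> simp only [Vl, Vld, lln_eq]

theorem rnk_inj {N : ℕ} (lab : Fin N → Fin m) {c c' : Fin N} (hl : lab c = lab c') (h : rnk lab c = rnk lab c') : c = c' := by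
  have main : ∀ c c' : Fin N, lab c = lab c' → c < c' → rnk lab c < rnk lab c' := by
    intro c c' hl hlt
    unfold rnk
    rw [hl]
    apply Finset.card_lt_card
    constructor
    · intro x; simp only [mem_filter, mem_univ, true_and]
      rintro ⟨a, b⟩; exact ⟨a.trans hlt, b⟩
    · intro hh
      have := @hh c (by simp only [mem_filter, mem_univ, true_and]; exact ⟨hlt, hl⟩)
      simp at this
  rcases lt_trichotomy c c' with h1 | h1 | h1
  · have := main _ _ hl h1; omega
  · exact h1
  · have := main _ _ hl.symm h1; omega

theorem rnk_surj {N : ℕ} (lab : Fin N → Fin m) (i : Fin m) {d : ℕ} (hd : d < lln lab i) : ∃ c, lab c = i ∧ rnk lab c = d := by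
  have : ((univ.filter fun c => lab c = i).image (rnk lab)) = range (lln lab i) := by
    apply Finset.eq_of_subset_of_card_le
    · intro x hx
      simp only [mem_image, mem_filter, mem_univ, true_and] at hx
      obtain ⟨c, rfl, rfl⟩ := hx
      simpa using rnk_lt lab c
    · rw [Finset.card_image_of_injOn, card_range]
      · rfl
      · intro c hc c' hc' h
        simp only [coe_filter, mem_univ, true_and, Set.mem_ofPred_eq] at hc hc'
        exact rnk_inj lab (hc.trans hc'.symm) h
  have h2 : d ∈ range (lln lab i) := by simpa using hd
  rw [← this] at h2
  simp only [mem_image, mem_filter, mem_univ, true_and] at h2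
  exact h2

theorem init_inj : Function.Injective fun x => initTok s (toTok s hcons x) := by
  intro x y h
  have hit : ∀ o, initTok s (toTok s hcons (.it o)) = .root ∧ o = none ∨ ∃ i, initTok s (toTok s hcons (.it o)) = .nook i ∧ o = some i := by
    intro o; rcases o with _ | i
    · left; exact ⟨rfl, rfl⟩
    · right; exact ⟨i, rfl, rfl⟩
  rcases x with o | c | c <;> rcases y with o' | c' | c' <;> simp only [init_t, init_u] at h
  · rcases hit o with ⟨h1, rfl⟩ | ⟨i, h1, rfl⟩ <;> rcases hit o' with ⟨h2, rfl⟩ | ⟨i', h2, rfl⟩ <;> try rw [h1, h2] at h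
    · rfl
    · cases h
    · cases h
    · cases h; rfl
  · rcases hit o with ⟨h1, rfl⟩ | ⟨i, h1, rfl⟩ <;> rw [h1] at h <;> cases h
  · rcases hit o with ⟨h1, rfl⟩ | ⟨i, h1, rfl⟩ <;> rw [h1] at h <;> cases h
  · rcases hit o' with ⟨h1, rfl⟩ | ⟨i, h1, rfl⟩ <;> rw [h1] at h <;> cases h
  · rw [Vtx.slot.injEq] at h
    rw [rnk_inj _ h.1 h.2]
  · cases h
  · rcases hit o' with ⟨h1, rfl⟩ | ⟨i, h1, rfl⟩ <;> rw [h1] at h <;> cases h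
  · cases h
  · rw [Vtx.ord.injEq] at h
    rw [Fin.ext h]

theorem init_vld (x : Tk m (lenOrd m n)) : Vld (wlab s hcons) (initTok s (toTok s hcons x)) := by
  rcases x with (_ | i) | c | c
  · trivial
  · trivial
  · rw [init_t]; exact rnk_lt _ _
  · rw [init_u]; exact c.isLt

theorem init_surj (v : Vtx m) (hv : Vld (wlab s hcons) v) : ∃ x, initTok s (toTok s hcons x) = v := by
  cases v with
  | root => exact ⟨.it none, rfl⟩
  | ord d => exact ⟨.u ⟨d, hv⟩, init_u s hcons _⟩
  | slot i d =>
    obtain ⟨c, rfl, rfl⟩ := rnk_surj _ _ hv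
    exact ⟨.t c, init_t s hcons c⟩
  | nook i => exact ⟨.it (some i), rfl⟩

theorem exists_sys (π : Equiv.Perm (Option (Fin m))) (σ : List (Vtx m × Vtx m))
    (hedges : ∀ e ∈ σ, (TheGraph s).Adj e.1 e.2)
    (hsol : applySwaps σ (initTok s) = tgtTok s π)
    (hmin : MinimalSeq σ (initTok s)) : 
    ∃ Y : Sys m (lenOrd m n) (kk m n) σ.length (wlab s hcons), 
      ∀ τ x, Y.pos τ x = placeAt σ (initTok s) τ (toTok s hcons x) := by
  set pos : ℕ → Tk m (lenOrd m n) → Vtx m := fun τ x => placeAt σ (initTok s) τ (toTok s hcons x) with hpos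
  have hstep : ∀ τ (h : τ < σ.length) x, pos (τ + 1) x = swapV (σ.get ⟨τ, h⟩) (pos τ x) := 
    fun τ h x => placeAt_succ σ _ h _
  have hadj : ∀ τ (h : τ < σ.length), (TheGraph s).Adj (σ.get ⟨τ, h⟩).1 (σ.get ⟨τ, h⟩).2 := 
    fun τ h => hedges _ (List.get_mem _ _)
  have hall : ∀ τ ≤ σ.length, Function.Injective (pos τ) ∧ (∀ x, Vld (wlab s hcons) (pos τ x)) ∧
      ∀ v, Vld (wlab s hcons) v → ∃ x, pos τ x = v := by
    intro τ
    induction τ with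
    | zero => intro _; exact ⟨init_inj s hcons, init_vld s hcons, init_surj s hcons⟩
    | succ τ ih =>
      intro hτ
      obtain ⟨i1, i2, i3⟩ := ih (by omega)
      have hτ' : τ < σ.length := by omega
      have hsv : ∀ v, Vld (wlab s hcons) v → Vld (wlab s hcons) (swapV (σ.get ⟨τ, hτ'⟩) v) := by
        intro v hv
        have := adj_vl s (hadj τ hτ')
        rw [vl_iff s hcons, vl_iff s hcons] at this
        unfold swapV
        split_ifs
        · exact this.2
        · exact this.1
        · exact hv
      refine ⟨?_, ?_, ?_⟩
      · intro x y h
        rw [hstep τ hτ', hstep τ hτ'] at h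
        apply i1
        rw [← swapV_invol (σ.get ⟨τ, hτ'⟩) (pos τ x), h, swapV_invol]
      · intro x; rw [hstep τ hτ']; exact hsv _ (i2 x)
      · intro v hv
        obtain ⟨x, hx⟩ := i3 _ (hsv v hv)
        exact ⟨x, by rw [hstep τ hτ', hx, swapV_invol]⟩
  have hS : ∀ x, pos σ.length x = tgtTok s π (toTok s hcons x) := by
    intro x
    simp only [hpos, placeAt, List.take_length, hsol]
  have hch : ∀ τ, ∃ xy : Tk m (lenOrd m n) × Tk m (lenOrd m n), ∀ h : τ < σ.length, Edg (kk m n) (pos τ xy.2) (pos τ xy.1) ∧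
      ((pos τ xy.1 = (σ.get ⟨τ, h⟩).1 ∧ pos τ xy.2 = (σ.get ⟨τ, h⟩).2) ∨ 
       (pos τ xy.1 = (σ.get ⟨τ, h⟩).2 ∧ pos τ xy.2 = (σ.get ⟨τ, h⟩).1)) := by
    intro τ
    by_cases h : τ < σ.length
    · obtain ⟨-, -, i3⟩ := hall τ h.le
      have hv := adj_vl s (hadj τ h)
      rw [vl_iff s hcons, vl_iff s hcons] at hv
      obtain ⟨x, hx⟩ := i3 _ hv.1
      obtain ⟨y, hy⟩ := i3 _ hv.2
      rcases adj_edg s (hadj τ h) with he | he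
      · exact ⟨(y, x), fun _ => ⟨by rw [hx, hy]; exact he, .inr ⟨hy, hx⟩⟩⟩
      · exact ⟨(x, y), fun _ => ⟨by rw [hx, hy]; exact he, .inl ⟨hx, hy⟩⟩⟩
    · exact ⟨(.it none, .it none), fun h' => absurd h' h⟩
  choose lr hlr using hch
  have hRN : ∀ o : Option (Fin m), RN (initTok s (toTok s hcons (.it o))) := by
    rintro (_ | i) <;> trivial
  refine ⟨{ pos := pos, lft := fun τ => (lr τ).1, rgt := fun τ => (lr τ).2,
            edge := fun τ h => (hlr τ h).1
            stepL := ?_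
            stepR := ?_
            stepO := ?_
            inj := fun τ h => (hall τ h).1
            vld := fun τ h => (hall τ h).2.1
            srj := fun τ h => (hall τ h).2.2
            t0 := init_t s hcons
            tS := fun c => by rw [hS]; exact tgt_t s hcons π c
            u0 := init_u s hcons
            uS := fun c => by rw [hS]; exact tgt_u s hcons π c
            i0 := hRN
            iS := ?_
            mini := ?_ }, fun _ _ => rfl⟩
  · intro τ h
    rw [hstep τ h]
    rcases (hlr τ h).2 with ⟨h1, h2⟩ | ⟨h1, h2⟩
    · rw [h1, h2, swapV_left]
    · rw [h1, h2, swapV_right]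
  · intro τ h
    rw [hstep τ h]
    rcases (hlr τ h).2 with ⟨h1, h2⟩ | ⟨h1, h2⟩
    · rw [h1, h2, swapV_right]
    · rw [h1, h2, swapV_left]
  · intro τ h x hx hx'
    rw [hstep τ h]
    have hi := (hall τ h.le).1
    have n1 : pos τ x ≠ pos τ (lr τ).1 := fun e => hx (hi e)
    have n2 : pos τ x ≠ pos τ (lr τ).2 := fun e => hx' (hi e)
    unfold swapV
    rcases (hlr τ h).2 with ⟨h1, h2⟩ | ⟨h1, h2⟩
    · rw [if_neg (by rw [← h1]; exact n1), if_neg (by rw [← h2]; exact n2)]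
    · rw [if_neg (by rw [← h2]; exact n2), if_neg (by rw [← h1]; exact n1)]
  · intro o
    rw [hS]
    simp only [toTok, tgtTok]
    rcases π o with _ | i <;> trivial
  · have sw : ∀ τ, τ < σ.length → swapsPairAt σ (initTok s) τ (toTok s hcons (lr τ).1) (toTok s hcons (lr τ).2) ∧ 
        swapsPairAt σ (initTok s) τ (toTok s hcons (lr τ).2) (toTok s hcons (lr τ).1) := by
      intro τ h
      have := (hlr τ h).2
      exact ⟨⟨h, this⟩, ⟨h, this.elim (fun a => .inr a.symm) (fun a => .inl a.symm)⟩⟩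
    have main : ∀ a b, a < b → a < σ.length → b < σ.length → ¬ (((lr a).1 = (lr b).1 ∧ (lr a).2 = (lr b).2) ∨
        ((lr a).1 = (lr b).2 ∧ (lr a).2 = (lr b).1)) := by
      intro a b hab ha hb h
      have h1 := sw a ha
      have h2 := sw b hb
      rcases h with ⟨e1, e2⟩ | ⟨e1, e2⟩ <;> rw [e1, e2] at h1
      · exact hmin _ _ a b hab h1.1 h2.1
      · exact hmin _ _ a b hab h1.1 h2.2
    intro a b ha hb hab h
    rcases lt_or_gt_of_ne hab with h1 | h1
    · exact main a b h1 ha hb h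
    · apply main b a h1 hb ha
      rcases h with ⟨e1, e2⟩ | ⟨e1, e2⟩
      · exact .inl ⟨e1.symm, e2.symm⟩
      · exact .inr ⟨e2.symm, e1.symm⟩

end
end UnweightedTS

namespace UnweightedTS
open Finset
open scoped Classical
variable {m n : ℕ}

/-- signed height: increases in left moves -/
def hv (k : ℕ) : Vtx m → ℤ
  | .root => 0
  | .ord d => d + 1
  | .slot _ d => - (d + 1 : ℤ)
  | .nook _ => - (k + 1 : ℤ)

theorem hv_edg {k : ℕ} {u v : Vtx m} (h : Edg k u v) : hv k u = hv k v + 1 := by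
  cases h <;> simp [hv]
  omega

namespace Sys
variable {N k S : ℕ} {lab : Fin N → Fin m} (Y : Sys m N k S lab)

theorem hv_sum (P : Tk m N → Prop) {q : ℕ} (hq : q ≤ S) :
    ∑ x with P x, hv k (Y.pos q x) = ∑ x with P x, hv k (Y.pos 0 x) + #{s ∈ range q | P (Y.lft s)} - #{s ∈ range q | P (Y.rgt s)} := by
  induction q with
  | zero => simp
  | succ q ih =>
    have hq' : q < S := by omega
    have ih := ih hq'.le
    rw [Finset.range_add_one, Finset.filter_insert, Finset.filter_insert]
    have hne := Y.lft_ne_rgt hq'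
    have hE := hv_edg (Y.edge q hq')
    have key : ∀ x, hv k (Y.pos (q+1) x) = hv k (Y.pos q x) + ((if x = Y.lft q then 1 else 0) - (if x = Y.rgt q then 1 else 0)) := by
      intro x
      by_cases h1 : x = Y.lft q
      · rw [if_pos h1, if_neg (by rw [h1]; exact hne), h1, Y.stepL q hq']; omega
      · by_cases h2 : x = Y.rgt q
        · rw [if_neg h1, if_pos h2, h2, Y.stepR q hq']; omega
        · rw [if_neg h1, if_neg h2, Y.stepO q hq' x h1 h2]; omega
    rw [Finset.sum_congr rfl (fun x _ => key x), Finset.sum_add_distrib, Finset.sum_sub_distrib, ih,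
      Finset.sum_ite_eq', Finset.sum_ite_eq']
    simp only [mem_filter, mem_univ, true_and]
    split_ifs <;> simp <;> ring

/-- item tokens -/
def IsI {m N : ℕ} (x : Tk m N) : Prop := ∃ o, x = .it o
/-- slot tokens -/
def IsT {m N : ℕ} (x : Tk m N) : Prop := ∃ c, x = .t c

theorem sum_t (f : Tk m N → ℤ) : ∑ x with IsT x, f x = ∑ c, f (.t c) := by
  have : (univ.filter fun x : Tk m N => IsT x) = univ.image Tk.t := by
    ext x; simp only [mem_filter, mem_univ, true_and, mem_image]; simp only [IsT, eq_comm]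
  rw [this, Finset.sum_image (fun a _ b _ h => t_inj h)]

theorem sum_u (f : Tk m N → ℤ) : ∑ x with IsU x, f x = ∑ c, f (.u c) := by
  have : (univ.filter fun x : Tk m N => IsU x) = univ.image Tk.u := by
    ext x; simp only [mem_filter, mem_univ, true_and, mem_image]; simp only [IsU, eq_comm]
  rw [this, Finset.sum_image (fun a _ b _ h => u_inj h)]

theorem sum_i (f : Tk m N → ℤ) : ∑ x with IsI x, f x = ∑ o, f (.it o) := by
  have : (univ.filter fun x : Tk m N => IsI x) = univ.image Tk.it := by
    ext x; simp only [mem_filter, mem_univ, true_and, mem_image]; simp only [IsI, eq_comm]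
  rw [this, Finset.sum_image (fun a _ b _ h => by simpa using h)]

theorem trich (f : ℕ → Tk m N) : #{s ∈ range S | IsI (f s)} + #{s ∈ range S | IsT (f s)} + #{s ∈ range S | IsU (f s)} = S := by
  conv_rhs => rw [← Finset.card_range S]
  rw [← Finset.card_union_of_disjoint, ← Finset.card_union_of_disjoint]
  · congr 1
    ext x
    simp only [mem_union, mem_filter]
    simp only [IsU, IsI, IsT]
    rcases f x with o | c | c <;> simp
  · rw [Finset.disjoint_left]
    intro x; simp only [mem_union, mem_filter]
    rintro (⟨_, o, h⟩ | ⟨_, o, h⟩) ⟨_, c, h'⟩ <;> rw [h] at h' <;> cases h'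
  · rw [Finset.disjoint_left]
    intro x; simp only [mem_filter]
    rintro ⟨_, o, h⟩ ⟨_, c, h'⟩
    rw [h] at h'; cases h'

/-- cost bound from total length -/
theorem cost {n : ℕ} (π : Equiv.Perm (Option (Fin m))) (hi : ∀ o, Y.pos S (.it o) = Y.pos 0 (.it (π o)))
    (hlen : (2 * S : ℤ) ≤ ∑ c, (hv k (Y.pos S (.t c)) - hv k (Y.pos 0 (.t c)) + 1 + (hv k (Y.pos 0 (.u c)) - hv k (Y.pos S (.u c)) + 1)) + 2 * n) :
    #{s ∈ range S | IsU (Y.lft s)} + #{s ∈ range S | ¬ IsU (Y.rgt s)} ≤ N + n := by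
  have h1 := Y.hv_sum IsI le_rfl
  have h2 := Y.hv_sum IsT le_rfl
  have h3 := Y.hv_sum IsU le_rfl
  rw [sum_i, sum_i] at h1
  rw [sum_t, sum_t] at h2
  rw [sum_u, sum_u] at h3
  have e1 : ∑ o, hv k (Y.pos S (.it o)) = ∑ o, hv k (Y.pos 0 (.it o)) := by
    rw [← Equiv.sum_comp π (fun o => hv k (Y.pos 0 (.it o)))]
    apply Finset.sum_congr rfl; intro o _; rw [hi]
  have t1 := trich (S := S) Y.lft
  have t2 := trich (S := S) Y.rgt
  have t3 : #{s ∈ range S | IsU (Y.rgt s)} + #{s ∈ range S | ¬ IsU (Y.rgt s)} = S := by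
    rw [Finset.card_filter_add_card_filter_not, card_range]
  simp only [Finset.sum_add_distrib, Finset.sum_sub_distrib, Finset.sum_const, card_univ, Fintype.card_fin, smul_eq_mul, nsmul_eq_mul] at hlen
  omega
end Sys

section
variable (s : Fin n → Fin m) (hcons : ∀ (j : Fin n) (h : j.val + 1 < n), s j ≠ s ⟨j.val + 1, h⟩)

theorem sum_nonitem (f : Tok m n → ℕ) : ∑ t : NonItem m n, f (.inr t) = ∑ c, (f (toTok s hcons (.t c)) + f (toTok s hcons (.u c))) := by
  rw [← Equiv.sum_comp (sEq s hcons)]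
  simp only [toTok, Equiv.symm_apply_apply]
  simp only [NonItem, Fintype.sum_sum_type, tokT, tokU, Finset.sum_add_distrib]
  ring

theorem dd_t (π : Equiv.Perm (Option (Fin m))) (c : Fin (lenOrd m n)) : 
    (dd s π (toTok s hcons (.t c)) : ℤ) ≤ hv (kk m n) (tgtTok s π (toTok s hcons (.t c))) - hv (kk m n) (initTok s (toTok s hcons (.t c))) := by
  unfold dd
  have h1 := rnk_lt (wlab s hcons) c
  rw [lln_eq] at h1
  have h2 := c.isLt
  rw [init_t, tgt_t, SimpleGraph.dist_comm]
  have := dist_os s (wlab s hcons c) (d := lenOrd m n - 1 - c.val) (by omega) h1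
  simp only [hv]
  omega

theorem dd_u (π : Equiv.Perm (Option (Fin m))) (c : Fin (lenOrd m n)) : 
    (dd s π (toTok s hcons (.u c)) : ℤ) ≤ hv (kk m n) (initTok s (toTok s hcons (.u c))) - hv (kk m n) (tgtTok s π (toTok s hcons (.u c))) := by
  unfold dd
  have h1 := rnk_lt (wlab s hcons) c
  have h2 := c.isLt
  rw [init_u, tgt_u]
  rw [lln_eq] at *
  have := dist_os s (wlab s hcons c) (d := c.val) (e := lenSlot s (wlab s hcons c) - 1 - rnk (wlab s hcons) c) (by omega) (by omega)
  simp only [hv]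
  omega

end

theorem kk_eq {m n : ℕ} (hn : 5 < n) : kk' m n = m ^ 25 * n ^ 17 ∧ kk m n = n ^ 8 * kk' m n := by
  have h : kk m n = n ^ 8 * (m ^ 25 * n ^ 17) := by unfold kk; rw [mul_pow]; ring
  have h' : kk' m n = m ^ 25 * n ^ 17 := by
    unfold kk'; rw [h]; exact Nat.mul_div_cancel_left _ (by positivity)
  exact ⟨h', by rw [h, h']⟩

/-- numerical estimates -/
theorem numer {m n : ℕ} (hm : 5 < m) (hn : 5 < n) : ∃ M L D, M = (m + 1) * (2 * n + 2) ∧ 18 * M ≤ kk' m n ∧ 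
    (n + 10 * M + 1) * (4 * n + 2) + 1 ≤ L ∧ 2 * L + 2 * ((n + 7) * kk' m n) + 1 < kk m n ∧
    2 * L + (n + 7) * kk' m n + 1 + 10 * M + 4 * n + 1 + D ≤ kk m n ∧ 0 < D ∧ 
    kk m n * (4 * n - 1) ≤ 4 * n * D := by
  obtain ⟨h1, h2⟩ := kk_eq (m := m) hn
  set k' := kk' m n with hk'
  set k := kk m n with hk
  have hmn : 36 ≤ m * n := by nlinarith
  -- `k'` dominates the polynomial terms
  have hb : (m * n) ^ 17 ≤ k' := by
    rw [h1, mul_pow]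
    exact Nat.mul_le_mul_right _ (Nat.pow_le_pow_right (by omega) (by norm_num))
  have hb2 : 36 ^ 10 * (m * n) * (m * n) ≤ k' := by
    calc 36 ^ 10 * (m * n) * (m * n) ≤ (m * n) ^ 10 * (m * n) * (m * n) := by gcongr
      _ = (m * n) ^ 12 := by ring
      _ ≤ (m * n) ^ 17 := Nat.pow_le_pow_right (by omega) (by norm_num)
      _ ≤ k' := hb
  set M := (m + 1) * (2 * n + 2) with hM
  have hM1 : M ≤ 4 * (m * n) := by rw [hM]; nlinarith
  set L := (n + 10 * M + 1) * (4 * n + 2) + 1 with hL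
  have hnm : n ≤ m * n := by nlinarith
  have hL1 : L ≤ 300 * (m * n) * (m * n) := by
    rw [hL]
    have a1 : n + 10 * M + 1 ≤ 42 * (m * n) := by omega
    have a2 : 4 * n + 2 ≤ 5 * (m * n) := by omega
    have := Nat.mul_le_mul a1 a2
    nlinarith
  have hX : 2 * L + 1 + 10 * M + 4 * n + 1 ≤ k' := by
    have : m * n ≤ (m * n) * (m * n) := Nat.le_mul_self _
    nlinarith
  have hk0 : 0 < k' := by nlinarith
  -- division
  have hq : 4 * n * ((n + 8) * k') ≤ k := by
    rw [h2]
    have : 4 * n * (n + 8) ≤ n ^ 8 := by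
      have e : n ^ 8 = n ^ 2 * n ^ 6 := by ring
      have : 6 ^ 6 ≤ n ^ 6 := Nat.pow_le_pow_left hn 6
      have : 4 * n * (n + 8) ≤ n ^ 2 * 6 ^ 6 := by nlinarith
      rw [e]
      exact this.trans (Nat.mul_le_mul_left _ (by assumption))
    calc 4 * n * ((n + 8) * k') = (4 * n * (n + 8)) * k' := by ring
      _ ≤ _ := Nat.mul_le_mul_right _ this
  have hdiv : (n + 8) * k' ≤ k / (4 * n) := by
    rw [Nat.le_div_iff_mul_le (by omega)]; rw [mul_comm]; exact hq
  have hdm := Nat.div_mul_le_self k (4 * n)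
  have hdlt : 4 * (k / (4 * n)) ≤ k := by nlinarith
  have hs : (n + 8) * k' = (n + 7) * k' + k' := by ring
  refine ⟨M, L, k - k / (4 * n), rfl, ?_, le_rfl, ?_, ?_, ?_, ?_⟩
  · nlinarith
  · omega
  · omega
  · omega
  · rw [Nat.mul_sub, Nat.mul_sub, mul_one, mul_comm (4 * n) k, mul_comm (4 * n) (k / (4 * n))]
    omega

end UnweightedTS

namespace UnweightedTS

/-!
STATEMENT 9: Suppose `m, n > 5` and fix a swap sequence of length at most `K`
transforming the initial placement of the constructed instance into its target
placement, in which no pair of tokens swaps with each other more than once.  Then at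
every point in time, every slot gadget contains at least one item token at distance
at least `k·(1 − 1/(4n))` from the root.  (The length bound is stated in the doubled
form `2·σ.length ≤ Σ_{t∈A}(d_t+1) + 2n`, and the distance bound
`dist ≥ k·(1 − 1/(4n))` in the equivalent form `k·(4n − 1) ≤ 4n·dist` with
`k = (mn)^25`.)
-/
theorem item_token_deep_in_slot_gadget {m n : ℕ} (hm : 5 < m) (hn : 5 < n)
    (s : Fin n → Fin m) (π : Equiv.Perm (Option (Fin m)))
    (hπ0 : π none = none)
    (hocc : ∀ i : Fin m, ∃ j, s j = i)
    (hcons : ∀ (j : Fin n) (h : j.val + 1 < n), s j ≠ s ⟨j.val + 1, h⟩)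
    (σ : List (Vtx m × Vtx m))
    (hedges : ∀ e ∈ σ, (TheGraph s).Adj e.1 e.2)
    (hsol : applySwaps σ (initTok s) = tgtTok s π)
    (hlen : 2 * σ.length ≤ (∑ t : NonItem m n, (dd s π (Sum.inr t) + 1)) + 2 * n)
    (hmin : MinimalSeq σ (initTok s)) :
    ∀ τ ≤ σ.length, ∀ i : Fin m, ∃ o : Option (Fin m),
      memGadget (placeAt σ (initTok s) τ (Sum.inl o)) (some i) ∧
      kk m n * (4 * n - 1) ≤
        4 * n * (TheGraph s).dist Vtx.root (placeAt σ (initTok s) τ (Sum.inl o)) := by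
  obtain ⟨Y, hY⟩ := exists_sys s hcons π σ hedges hsol hmin
  have hS : ∀ x, Y.pos σ.length x = tgtTok s π (toTok s hcons x) := by
    intro x
    rw [hY, placeAt, List.take_length, hsol]
  have h0 : ∀ x, Y.pos 0 x = initTok s (toTok s hcons x) := fun x => hY 0 x
  have hcost := Y.cost (n := n) π (fun o => by
      rw [hS, h0]
      simp only [toTok, tgtTok]
      rcases π o with _ | i <;> rfl) (by
    have h1 : ((2 * σ.length : ℕ) : ℤ) ≤ (((∑ t : NonItem m n, (dd s π (Sum.inr t) + 1)) + 2 * n : ℕ) : ℤ) := by exact_mod_cast hlen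
    rw [sum_nonitem s hcons (fun t => dd s π t + 1)] at h1
    push_cast at h1
    refine h1.trans ?_
    gcongr with c
    · rw [hS, h0]; exact dd_t s hcons π c
    · rw [hS, h0]; exact dd_u s hcons π c)
  have hacc := Y.accounting hcost
  obtain ⟨M, L, D, n1, n2, n3, n4, n5, n6, n7⟩ := numer hm hn
  have G : Y.Gd n M := ⟨by omega, by omega⟩
  have hkk : kk' m n < kk m n := by nlinarith
  have hlenk : ∀ i, kk m n ≤ lenSlot s i := by
    intro i
    obtain ⟨j, hj⟩ := hocc i
    have : 0 < cnt s i := Finset.card_pos.2 ⟨j, by simp [hj]⟩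
    unfold lenSlot
    nlinarith
  intro τ hτ i
  obtain ⟨o, ho⟩ := G.final (by omega) (word_WL s hcons hkk) (i := i) (by rw [lln_eq]; exact hlenk i) n2 
    ⟨some i, by rw [h0]; rfl⟩ ⟨π.symm (some i), by rw [hS]; simp [toTok, tgtTok]⟩ n3 rfl n4 n5 n6 hτ
  have hvl := Y.vld τ hτ (.it o)
  rw [← vl_iff] at hvl
  have hd := dist_ph s (by omega) hlenk hvl i
  have hp : Y.pos τ (.it o) = placeAt σ (initTok s) τ (Sum.inl o) := hY τ _
  unfold Sys.ph at ho
  rw [hp] at ho hd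
  refine ⟨o, ?_, n7.trans (Nat.mul_le_mul_left _ (ho.trans hd))⟩
  generalize placeAt σ (initTok s) τ (Sum.inl o) = v at ho
  cases v <;> simp only [phv] at ho <;> simp only [memGadget]
  · omega
  · omega
  · split_ifs at ho with h
    · exact h
    · omega
  · split_ifs at ho with h
    · exact h
    · omega

end UnweightedTS
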